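/- Let ω be a concave weight function. Then the ring of germs at 0 ∈ ℝ of complex-valued E^{ω}-functions (Roumieu) has property (D), and the ring of germs at 0 ∈ ℝ of complex-valued E^{(ω)}-functions (Beurling) has property (D): for every function f defined on an open neighborhood of 0 in ℝ and every integer j ≥ 1, if f^j and f^{j+1} are of the respective class on some open neighborhood of 0, then f is of that class on some open neighborhood of 0. -/

import Mathlib

open Filter Set Asymptotics MeasureTheory

noncomputable section

/-- `M` is a weight sequence: `M 0 = 1`, positive, `M 1 ≥ 1`, log-convex and
`M k ^ (1/k) → ∞`. -/
def IsWeightSeq (M : ℕ → ℝ) : Prop :=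
  M 0 = 1 ∧ (∀ k, 0 < M k) ∧ 1 ≤ M 1 ∧
    (∀ k : ℕ, 1 ≤ k → M k ^ 2 ≤ M (k - 1) * M (k + 1)) ∧
    Tendsto (fun k : ℕ => M k ^ (1 / (k : ℝ))) atTop atTop

/-- The sequence `m k = M k / k!`. -/
def mseq (M : ℕ → ℝ) : ℕ → ℝ := fun k => M k / (Nat.factorial k : ℝ)

/-- Log-convexity of a sequence. -/
def LogConvexSeq (m : ℕ → ℝ) : Prop := ∀ k : ℕ, 1 ≤ k → m k ^ 2 ≤ m (k - 1) * m (k + 1)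

/-- `m k ^ (1/k) → ∞`. -/
def RootTendsToInfty (m : ℕ → ℝ) : Prop :=
  Tendsto (fun k : ℕ => m k ^ (1 / (k : ℝ))) atTop atTop

/-- Moderate growth of a sequence. -/
def ModerateGrowth (M : ℕ → ℝ) : Prop :=
  ∃ C : ℝ, 0 < C ∧ ∀ j k : ℕ, M (j + k) ≤ C ^ (j + k) * M j * M k

/-- Derivation closedness of a sequence. -/
def DerivClosed (M : ℕ → ℝ) : Prop :=
  ∃ C : ℝ, 0 < C ∧ ∀ k : ℕ, M (k + 1) ≤ C ^ (k + 1) * M k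

/-- Non-quasianalyticity: `∑_{k≥1} M (k-1) / M k = ∑_{k≥1} 1/μ_k < ∞`. -/
def NonQuasianalytic (M : ℕ → ℝ) : Prop := Summable fun k : ℕ => M k / M (k + 1)

/-- Quasianalyticity: `∑_{k≥1} 1/μ_k = ∞`. -/
def Quasianalytic (M : ℕ → ℝ) : Prop := ¬ NonQuasianalytic M

/-- The associated function `h_m (t) = inf_k m k * t ^ k`. -/
def hFun (m : ℕ → ℝ) (t : ℝ) : ℝ := ⨅ k : ℕ, m k * t ^ k

/-- `Γ̄_m (t) = min {k | h_m t = m k * t ^ k}`. -/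
def GammaBar (m : ℕ → ℝ) (t : ℝ) : ℕ := sInf {k : ℕ | hFun m t = m k * t ^ k}

/-- `Γ̲_m (t) = min {k | m (k+1) / m k ≥ 1 / t}`. -/
def GammaLow (m : ℕ → ℝ) (t : ℝ) : ℕ := sInf {k : ℕ | 1 / t ≤ m (k + 1) / m k}

/-- The set whose supremum is `mg (M, N)`. -/
def mgSet (M N : ℕ → ℝ) : Set ℝ :=
  {x | ∃ j k : ℕ, 1 ≤ j + k ∧ x = (M (j + k) / (N j * N k)) ^ (1 / (j + k : ℝ))}

/-- `mg (M, N) = sup_{j+k ≥ 1} (M (j+k) / (N j * N k)) ^ (1/(j+k))`. -/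
def mg (M N : ℕ → ℝ) : ℝ := sSup (mgSet M N)

/-- `mg (M, N) < ∞`. -/
def MgFinite (M N : ℕ → ℝ) : Prop := BddAbove (mgSet M N)

/-- A weight sequence is regular: `m k ^ (1/k) → ∞`, derivation closed, and
`Γ̄_m (C t) ≤ Γ̲_m t` for some `C ≥ 1`. -/
def RegularWS (M : ℕ → ℝ) : Prop :=
  RootTendsToInfty (mseq M) ∧ DerivClosed M ∧
    ∃ C : ℝ, 1 ≤ C ∧ ∀ t : ℝ, 0 < t → GammaBar (mseq M) (C * t) ≤ GammaLow (mseq M) t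

/-- `f` is of class `E^{M}` (Roumieu) on the open set `U`. -/
def RoumieuOn {E : Type*} [NormedAddCommGroup E] [NormedSpace ℝ E]
    (M : ℕ → ℝ) (f : E → ℂ) (U : Set E) : Prop :=
  ContDiffOn ℝ (⊤ : ℕ∞) f U ∧
    ∀ V : Set E, IsOpen V → IsCompact (closure V) → closure V ⊆ U →
      ∃ C σ : ℝ, 0 < C ∧ 0 < σ ∧
        ∀ x ∈ V, ∀ k : ℕ, ‖iteratedFDerivWithin ℝ k f U x‖ ≤ C * σ ^ k * M k

/-- `f` is of class `E^{(M)}` (Beurling) on the open set `U`. -/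
def BeurlingOn {E : Type*} [NormedAddCommGroup E] [NormedSpace ℝ E]
    (M : ℕ → ℝ) (f : E → ℂ) (U : Set E) : Prop :=
  ContDiffOn ℝ (⊤ : ℕ∞) f U ∧
    ∀ V : Set E, IsOpen V → IsCompact (closure V) → closure V ⊆ U →
      ∀ σ : ℝ, 0 < σ → ∃ C : ℝ, 0 < C ∧
        ∀ x ∈ V, ∀ k : ℕ, ‖iteratedFDerivWithin ℝ k f U x‖ ≤ C * σ ^ k * M k

/-- A weight matrix: a nonempty, pointwise totally ordered family of weight sequences. -/
def IsWeightMatrix (W : Set (ℕ → ℝ)) : Prop :=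
  W.Nonempty ∧ (∀ M ∈ W, IsWeightSeq M) ∧
    ∀ M ∈ W, ∀ N ∈ W, (∀ k, M k ≤ N k) ∨ (∀ k, N k ≤ M k)

/-- R-regularity of a weight matrix. -/
def RRegular (W : Set (ℕ → ℝ)) : Prop :=
  (∀ M ∈ W, RootTendsToInfty (mseq M)) ∧
    (∀ M ∈ W, ∃ N ∈ W, ∃ C : ℝ, 1 ≤ C ∧ ∀ j : ℕ, M (j + 1) ≤ C ^ (j + 1) * N j) ∧
    (∀ M ∈ W, ∃ N ∈ W, ∃ C : ℝ, 1 ≤ C ∧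
      ∀ t : ℝ, 0 < t → GammaBar (mseq N) (C * t) ≤ GammaLow (mseq M) t)

/-- B-regularity of a weight matrix. -/
def BRegular (W : Set (ℕ → ℝ)) : Prop :=
  (∀ M ∈ W, RootTendsToInfty (mseq M)) ∧
    (∀ M ∈ W, ∃ N ∈ W, ∃ C : ℝ, 1 ≤ C ∧ ∀ j : ℕ, N (j + 1) ≤ C ^ j * M j) ∧
    (∀ M ∈ W, ∃ N ∈ W, ∃ C : ℝ, 1 ≤ C ∧
      ∀ t : ℝ, 0 < t → GammaBar (mseq M) (C * t) ≤ GammaLow (mseq N) t)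

/-- R-moderate growth of a weight matrix. -/
def RModerateGrowth (W : Set (ℕ → ℝ)) : Prop := ∀ M ∈ W, ∃ N ∈ W, MgFinite M N

/-- B-moderate growth of a weight matrix. -/
def BModerateGrowth (W : Set (ℕ → ℝ)) : Prop := ∀ M ∈ W, ∃ N ∈ W, MgFinite N M

/-- `f` is of class `E^{W}` (Roumieu, weight matrix) on the open set `U`. -/
def MatrixRoumieuOn {E : Type*} [NormedAddCommGroup E] [NormedSpace ℝ E]
    (W : Set (ℕ → ℝ)) (f : E → ℂ) (U : Set E) : Prop :=
  ContDiffOn ℝ (⊤ : ℕ∞) f U ∧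
    ∀ V : Set E, IsOpen V → IsCompact (closure V) → closure V ⊆ U →
      ∃ M ∈ W, ∃ C σ : ℝ, 0 < C ∧ 0 < σ ∧
        ∀ x ∈ V, ∀ k : ℕ, ‖iteratedFDerivWithin ℝ k f U x‖ ≤ C * σ ^ k * M k

/-- `f` is of class `E^{(W)}` (Beurling, weight matrix) on the open set `U`. -/
def MatrixBeurlingOn {E : Type*} [NormedAddCommGroup E] [NormedSpace ℝ E]
    (W : Set (ℕ → ℝ)) (f : E → ℂ) (U : Set E) : Prop :=
  ContDiffOn ℝ (⊤ : ℕ∞) f U ∧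
    ∀ V : Set E, IsOpen V → IsCompact (closure V) → closure V ⊆ U →
      ∀ M ∈ W, ∀ σ : ℝ, 0 < σ → ∃ C : ℝ, 0 < C ∧
        ∀ x ∈ V, ∀ k : ℕ, ‖iteratedFDerivWithin ℝ k f U x‖ ≤ C * σ ^ k * M k

/-- `ω` is a weight function. -/
def IsWeightFunction (ω : ℝ → ℝ) : Prop :=
  ContinuousOn ω (Ici 0) ∧ MonotoneOn ω (Ici 0) ∧ (∀ t ∈ Ici (0 : ℝ), 0 ≤ ω t) ∧
    ((fun t => ω (2 * t)) =O[atTop] ω) ∧ (ω =o[atTop] fun t : ℝ => t) ∧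
    ((fun t => Real.log t) =o[atTop] ω) ∧ ConvexOn ℝ (Ici 0) fun t => ω (Real.exp t)

/-- The Young conjugate `φ*_ω (s) = sup_{t ≥ 0} (s t - ω (e^t))`. -/
def phiStar (ω : ℝ → ℝ) (s : ℝ) : ℝ := sSup ((fun t => s * t - ω (Real.exp t)) '' Ici 0)

/-- Non-quasianalyticity of a weight function. -/
def NonQuasianalyticW (ω : ℝ → ℝ) : Prop := IntegrableOn (fun t => ω t / t ^ 2) (Ici 1)

/-- `f` is of class `E^{ω}` (Roumieu) on the open set `U`. -/
def OmegaRoumieuOn {E : Type*} [NormedAddCommGroup E] [NormedSpace ℝ E]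
    (ω : ℝ → ℝ) (f : E → ℂ) (U : Set E) : Prop :=
  ContDiffOn ℝ (⊤ : ℕ∞) f U ∧
    ∀ V : Set E, IsOpen V → IsCompact (closure V) → closure V ⊆ U →
      ∃ C ρ : ℝ, 0 < C ∧ 0 < ρ ∧
        ∀ x ∈ V, ∀ k : ℕ,
          ‖iteratedFDerivWithin ℝ k f U x‖ ≤ C * Real.exp (phiStar ω (ρ * k) / ρ)

/-- `f` is of class `E^{(ω)}` (Beurling) on the open set `U`. -/
def OmegaBeurlingOn {E : Type*} [NormedAddCommGroup E] [NormedSpace ℝ E]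
    (ω : ℝ → ℝ) (f : E → ℂ) (U : Set E) : Prop :=
  ContDiffOn ℝ (⊤ : ℕ∞) f U ∧
    ∀ V : Set E, IsOpen V → IsCompact (closure V) → closure V ⊆ U →
      ∀ ρ : ℝ, 0 < ρ → ∃ C : ℝ, 0 < C ∧
        ∀ x ∈ V, ∀ k : ℕ,
          ‖iteratedFDerivWithin ℝ k f U x‖ ≤ C * Real.exp (phiStar ω (ρ * k) / ρ)

/-- The open ellipse `Ω_ε` with vertices `± cosh ε` and co-vertices `± i sinh ε`. -/
def OmegaE (ε : ℝ) : Set ℂ :=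
  {z : ℂ | (z.re / Real.cosh ε) ^ 2 + (z.im / Real.sinh ε) ^ 2 < 1}

/-- The sequence space `Λ^{M}`. -/
def Lambda (M : ℕ → ℝ) : Set (ℕ → ℂ) :=
  {c | ∃ ρ : ℝ, 0 < ρ ∧ ∃ C : ℝ, ∀ k, ‖c k‖ ≤ C * ρ ^ k * M k}

/-- `L(M)`: all non-quasianalytic weight sequences `N ≥ M` with `n = N/k!` log-convex. -/
def LM (M : ℕ → ℝ) : Set (ℕ → ℝ) :=
  {N | IsWeightSeq N ∧ NonQuasianalytic N ∧ (∀ k, M k ≤ N k) ∧ LogConvexSeq (mseq N)}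

/-- A quasianalytic weight sequence `M` is intersectable if `Λ^{M} = ⋂_{N ∈ L(M)} Λ^{N}`. -/
def Intersectable (M : ℕ → ℝ) : Prop := Lambda M = ⋂ N ∈ LM M, Lambda N

/-!
Fix a real point near `0` and a scale `ε`, and let `t` be the point at which a line of slope `ε`
touches the weight from above. The Taylor polynomials of degree about `ε * t` approximate `f ^ j`
and `f ^ (j + 1)` on the disc of radius comparable to `ε` up to an error exponentially small in
`w⋆ ε = w t - ε * t`. If `G` and `H` are these polynomials, then `G ^ (j + 1)` is close to `H ^ j`
on the real axis, hence on the disc by the two-constants theorem, and the regularised quotient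
`H * conj G / (|G|² + r²)` is an approximate root. Its `∂̄`-derivative is at most a small multiple
of a spherical derivative of `G`, whose square is a Laplacian of `log (|G|² + r²)` and therefore
has an integral growing only logarithmically as `r → 0`. Subtracting a Cauchy transform yields a
holomorphic `F` that is bounded on the disc and satisfies `|F - f| ≤ K * exp (-κ * w⋆ ε)` on the
real axis, with `κ` depending only on `j`.

Two such approximants at successive dyadic scales differ by a quantity exponentially small in `w⋆`
on a common disc, again by the two-constants theorem, so by Cauchy's estimates the telescoping
series of their derivatives converges. Its sum is the corresponding derivative of `f`, and the
bounds are those of the class of a multiple of `w`; concavity of the weight absorbs the geometric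
factors.
-/

open Complex Metric ComplexConjugate Topology Convolution

section TwoConstants

variable {P : ℂ → ℂ} {A L : ℝ}

theorem norm_exp_mul_one_add_I_mul_sq (z : ℂ) :
    ‖exp (L * (1 + I * z) ^ 2)‖ = Real.exp (L * ((1 - z.im) ^ 2 - z.re ^ 2)) := by
  rw [norm_exp]
  congr 1
  simp only [sq, mul_re, add_re, one_re, I_re, I_im, add_im, one_im, mul_im, ofReal_re, ofReal_im]
  ring

/- `exp (L * (1 + I * z) ^ 2)` has modulus at most `exp L` on the real axis and at most `1` on the
upper unit half circle, but at least `exp (L / 2)` in the upper half disc of radius `1 / 4`. -/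
theorem norm_mul_exp_le_of_mem_frontier (hL : 0 ≤ L)
    (hA : ∀ z ∈ closedBall (0 : ℂ) 1, ‖P z‖ ≤ A)
    (hreal : ∀ x : ℝ, |x| ≤ 1 → ‖P x‖ ≤ A * Real.exp (-L)) {z : ℂ}
    (hz : z ∈ frontier (ball (0 : ℂ) 1 ∩ {w | 0 < w.im})) :
    ‖P z * exp (L * (1 + I * z) ^ 2)‖ ≤ A := by
  have hA0 : 0 ≤ A := (norm_nonneg _).trans (hA 0 (by simp))
  rw [norm_mul, norm_exp_mul_one_add_I_mul_sq]
  have hnorm : z.re ^ 2 + z.im ^ 2 = ‖z‖ ^ 2 := by rw [← normSq_eq_norm_sq, normSq_apply]; ring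
  rcases frontier_inter_subset _ _ hz with ⟨hcirc, him⟩ | ⟨hball, haxis⟩
  · rw [frontier_ball _ one_ne_zero, mem_sphere_zero_iff_norm] at hcirc
    rw [closure_setOfPred_lt_im] at him
    have him0 : 0 ≤ z.im := him
    have hexp : L * ((1 - z.im) ^ 2 - z.re ^ 2) ≤ 0 := by
      refine mul_nonpos_of_nonneg_of_nonpos hL ?_
      rw [hcirc] at hnorm
      nlinarith [(im_le_norm z).trans hcirc.le]
    exact (mul_le_of_le_one_right (norm_nonneg _) (Real.exp_le_one_iff.2 hexp)).trans
      (hA z (by simp [hcirc]))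
  · rw [frontier_setOfPred_lt_im] at haxis
    rw [closure_ball _ one_ne_zero, mem_closedBall_zero_iff] at hball
    have him0 : z.im = 0 := haxis
    have hbound := hreal z.re ((abs_re_le_norm z).trans hball)
    rw [show (z.re : ℂ) = z from Complex.ext rfl him0.symm] at hbound
    calc ‖P z‖ * Real.exp (L * ((1 - z.im) ^ 2 - z.re ^ 2))
        ≤ A * Real.exp (-L) * Real.exp L := by
          gcongr
          rw [him0]
          nlinarith [mul_nonneg hL (sq_nonneg z.re)]
      _ = A := by rw [mul_assoc, ← Real.exp_add, neg_add_cancel, Real.exp_zero, mul_one]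

theorem norm_le_mul_exp_neg_half_of_im_nonneg (hL : 0 ≤ L)
    (hP : DiffContOnCl ℂ P (ball 0 1)) (hA : ∀ z ∈ closedBall (0 : ℂ) 1, ‖P z‖ ≤ A)
    (hreal : ∀ x : ℝ, |x| ≤ 1 → ‖P x‖ ≤ A * Real.exp (-L)) {z : ℂ} (hz : ‖z‖ ≤ 1 / 4)
    (him : 0 ≤ z.im) : ‖P z‖ ≤ A * Real.exp (-L / 2) := by
  have hA0 : 0 ≤ A := (norm_nonneg _).trans (hA 0 (by simp))
  rcases him.eq_or_lt with him0 | hpos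
  · have hbound := hreal z.re ((abs_re_le_norm z).trans (by linarith))
    rw [show (z.re : ℂ) = z from Complex.ext rfl him0] at hbound
    exact hbound.trans (by gcongr; linarith)
  have hdiff : DiffContOnCl ℂ (fun w => P w * exp (L * (1 + I * w) ^ 2))
      (ball 0 1 ∩ {w | 0 < w.im}) :=
    (hP.mono inter_subset_left).smul (𝕜' := ℂ) (Differentiable.diffContOnCl (by fun_prop))
  have hmax := norm_le_of_forall_mem_frontier_norm_le (isBounded_ball.subset inter_subset_left)
    hdiff (fun w hw => norm_mul_exp_le_of_mem_frontier hL hA hreal hw)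
    (subset_closure ⟨mem_ball_zero_iff.2 (by linarith), hpos⟩)
  rw [norm_mul, norm_exp_mul_one_add_I_mul_sq] at hmax
  have hexp : L * (1 / 2) ≤ L * ((1 - z.im) ^ 2 - z.re ^ 2) := by
    have hnorm : z.re ^ 2 + z.im ^ 2 = ‖z‖ ^ 2 := by
      rw [← normSq_eq_norm_sq, normSq_apply]; ring
    have hsq : ‖z‖ ^ 2 ≤ (1 / 4) ^ 2 := by gcongr
    exact mul_le_mul_of_nonneg_left (by nlinarith [(im_le_norm z).trans hz]) hL
  calc ‖P z‖ = ‖P z‖ * Real.exp (L / 2) * Real.exp (-L / 2) := by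
        rw [mul_assoc, ← Real.exp_add, neg_div, add_neg_cancel, Real.exp_zero, mul_one]
    _ ≤ A * Real.exp (-L / 2) := by
        gcongr
        exact le_trans (by gcongr; linarith) hmax

theorem norm_le_mul_exp_neg_half_of_norm_le_on_real {c R : ℝ} (hR : 0 < R) (hL : 0 ≤ L)
    (hP : DiffContOnCl ℂ P (ball c R)) (hA : ∀ z ∈ closedBall (c : ℂ) R, ‖P z‖ ≤ A)
    (hreal : ∀ x : ℝ, |x - c| ≤ R → ‖P x‖ ≤ A * Real.exp (-L)) {z : ℂ}
    (hz : z ∈ closedBall (c : ℂ) (R / 4)) : ‖P z‖ ≤ A * Real.exp (-L / 2) := by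
  have rescaled : ∀ σ : ℝ, |σ| = R → ∀ w : ℂ, ‖w‖ ≤ 1 / 4 → 0 ≤ w.im →
      ‖P (c + σ * w)‖ ≤ A * Real.exp (-L / 2) := by
    intro σ hσ w hw him
    have hmaps : ∀ v : ℂ, ‖c + σ * v - c‖ = R * ‖v‖ := fun v => by
      rw [add_sub_cancel_left, norm_mul, norm_real, Real.norm_eq_abs, hσ]
    refine norm_le_mul_exp_neg_half_of_im_nonneg (P := fun v => P (c + σ * v)) hL ?_ ?_ ?_ hw him
    · refine hP.comp (Differentiable.diffContOnCl (by fun_prop)) fun v hv => ?_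
      rw [mem_ball_zero_iff] at hv
      rw [mem_ball, dist_eq_norm, hmaps]
      exact mul_lt_of_lt_one_right hR hv
    · intro v hv
      refine hA _ ?_
      rw [mem_closedBall, dist_eq_norm, hmaps]
      exact mul_le_of_le_one_right hR.le (mem_closedBall_zero_iff.1 hv)
    · intro x hx
      have := hreal (c + σ * x) (by
        rw [add_sub_cancel_left, abs_mul, hσ]; exact mul_le_of_le_one_right hR.le hx)
      simpa using this
  have hRC : (R : ℂ) ≠ 0 := ofReal_ne_zero.2 hR.ne'
  have hw : ‖(z - c) / R‖ ≤ 1 / 4 := by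
    rw [norm_div, norm_real, Real.norm_of_nonneg hR.le, div_le_iff₀ hR, ← dist_eq_norm]
    linarith [mem_closedBall.1 hz]
  rcases le_total 0 ((z - c) / R).im with him | him
  · simpa [mul_div_cancel₀ _ hRC] using rescaled R (abs_of_pos hR) _ hw him
  · have := rescaled (-R) (by rw [abs_neg, abs_of_pos hR]) (-((z - c) / R)) (by rwa [norm_neg])
      (by rw [neg_im]; linarith)
    simpa [mul_div_cancel₀ _ hRC] using this

end TwoConstants

section Dbar

/-- The Wirtinger derivative `∂u/∂z̄ = (∂u/∂x + i ∂u/∂y) / 2`. -/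
def dbar (u : ℂ → ℂ) (z : ℂ) : ℂ := (fderiv ℝ u z 1 + I * fderiv ℝ u z I) / 2

variable {u v h : ℂ → ℂ} {z : ℂ}

theorem dbar_eq_zero (hu : DifferentiableAt ℂ u z) : dbar u z = 0 := by
  rw [dbar, (differentiableAt_complex_iff_differentiableAt_real.1 hu).2, smul_eq_mul, ← mul_assoc,
    I_mul_I]
  ring

theorem differentiableAt_of_dbar_eq_zero (hu : DifferentiableAt ℝ u z) (h0 : dbar u z = 0) :
    DifferentiableAt ℂ u z := by
  refine differentiableAt_complex_iff_differentiableAt_real.2 ⟨hu, ?_⟩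
  rw [dbar, div_eq_zero_iff, or_iff_left two_ne_zero] at h0
  rw [smul_eq_mul]
  linear_combination -I * h0 + fderiv ℝ u z I * I_mul_I

theorem dbar_sub (hu : DifferentiableAt ℝ u z) (hv : DifferentiableAt ℝ v z) :
    dbar (fun w => u w - v w) z = dbar u z - dbar v z := by
  simp only [dbar, fderiv_fun_sub hu hv, _root_.sub_apply]
  ring

theorem dbar_mul (hu : DifferentiableAt ℝ u z) (hv : DifferentiableAt ℝ v z) :
    dbar (fun w => u w * v w) z = u z * dbar v z + dbar u z * v z := by
  simp only [dbar, fderiv_fun_mul hu hv, _root_.add_apply,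
    _root_.smul_apply, smul_eq_mul]
  ring

theorem dbar_comp (hh : DifferentiableAt ℂ h (u z)) (hu : DifferentiableAt ℝ u z) :
    dbar (fun w => h (u w)) z = deriv h (u z) * dbar u z := by
  have hfd : HasFDerivAt (fun w => h (u w)) _ z :=
    (hh.hasFDerivAt.restrictScalars ℝ).comp z hu.hasFDerivAt
  simp only [dbar, hfd.fderiv, ContinuousLinearMap.comp_apply,
    ContinuousLinearMap.coe_restrictScalars', fderiv_eq_smul_deriv, smul_eq_mul]
  ring

theorem dbar_conj (hu : DifferentiableAt ℂ u z) :
    dbar (fun w => conj (u w)) z = conj (deriv u z) := by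
  have hfd : HasFDerivAt (fun w => conj (u w)) _ z :=
    conjCLE.toContinuousLinearMap.hasFDerivAt.comp z (hu.hasFDerivAt.restrictScalars ℝ)
  simp only [dbar, hfd.fderiv, ContinuousLinearMap.comp_apply,
    ContinuousLinearMap.coe_restrictScalars', fderiv_eq_smul_deriv, smul_eq_mul, one_mul,
    ContinuousLinearEquiv.coe_coe, conjCLE_apply, map_mul, conj_I]
  linear_combination -(1 / 2) * conj (deriv u z) * I_mul_I

theorem contDiff_dbar {n : WithTop ℕ∞} (hu : ContDiff ℝ (n + 1) u) : ContDiff ℝ n (dbar u) := by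
  have hfd : ContDiff ℝ n (fderiv ℝ u) := hu.fderiv_right le_rfl
  unfold dbar
  fun_prop

theorem continuous_dbar (hu : ContDiff ℝ 1 u) : Continuous (dbar u) :=
  (contDiff_dbar (n := 0) hu).continuous

theorem tsupport_dbar_subset : tsupport (dbar u) ⊆ tsupport u :=
  closure_minimal (fun w hw => by
    by_contra hnot
    refine hw ?_
    rw [dbar, image_eq_zero_of_notMem_tsupport (fun hmem => hnot (tsupport_fderiv_subset ℝ hmem))]
    simp) (isClosed_tsupport u)

theorem hasCompactSupport_dbar (hu : HasCompactSupport u) : HasCompactSupport (dbar u) :=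
  hu.mono' (subset_tsupport (dbar u) |>.trans tsupport_dbar_subset)

theorem integral_mul_dbar (hu : ContDiff ℝ 1 u) (hsupp : HasCompactSupport u)
    (hv : ContDiff ℝ 1 v) : ∫ w, u w * dbar v w = -∫ w, dbar u w * v w := by
  have hu' : Continuous (fderiv ℝ u) := hu.continuous_fderiv one_ne_zero
  have hv' : Continuous (fderiv ℝ v) := hv.continuous_fderiv one_ne_zero
  have huv' : ∀ e, Integrable fun w => u w * fderiv ℝ v w e := fun e =>
    (hu.continuous.mul (hv'.clm_apply continuous_const)).integrable_of_hasCompactSupport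
      hsupp.mul_right
  have hu'v : ∀ e, Integrable fun w => fderiv ℝ u w e * v w := fun e =>
    ((hu'.clm_apply continuous_const).mul hv.continuous).integrable_of_hasCompactSupport
      (hsupp.fderiv_apply ℝ e).mul_right
  have hparts : ∀ e, ∫ w, u w * fderiv ℝ v w e = -∫ w, fderiv ℝ u w e * v w := fun e =>
    integral_mul_fderiv_eq_neg_fderiv_mul_of_integrable (hu'v e) (huv' e)
      ((hu.continuous.mul hv.continuous).integrable_of_hasCompactSupport hsupp.mul_right)
      (fun w _ => hu.differentiable one_ne_zero w) (fun w _ => hv.differentiable one_ne_zero w)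
  calc ∫ w, u w * dbar v w
      = ∫ w, (1 / 2 : ℂ) * (u w * fderiv ℝ v w 1) + I / 2 * (u w * fderiv ℝ v w I) := by
        congr with w; rw [dbar]; ring
    _ = -((1 / 2 : ℂ) * ∫ w, fderiv ℝ u w 1 * v w) - I / 2 * ∫ w, fderiv ℝ u w I * v w := by
        rw [integral_add ((huv' 1).const_mul _) ((huv' I).const_mul _), integral_const_mul,
          integral_const_mul, hparts, hparts]
        ring
    _ = -∫ w, (1 / 2 : ℂ) * (fderiv ℝ u w 1 * v w) + I / 2 * (fderiv ℝ u w I * v w) := by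
        rw [integral_add ((hu'v 1).const_mul _) ((hu'v I).const_mul _), integral_const_mul,
          integral_const_mul]
        ring
    _ = -∫ w, dbar u w * v w := by congr 2 with w; rw [dbar]; ring

end Dbar

section Pompeiu

/-- The fundamental solution `1 / (π z)` of the operator `dbar`. -/
def cauchyKernel (z : ℂ) : ℂ := (Real.pi * z)⁻¹

variable {γ : ℂ → ℂ}

theorem integral_Ioi_fderiv_ray (hγ : ContDiff ℝ 1 γ) (hsupp : HasCompactSupport γ) {e : ℂ}
    (he : e ≠ 0) : ∫ r in Ioi (0 : ℝ), fderiv ℝ γ (r • e) e = -γ 0 := by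
  have hray : ∀ r : ℝ, HasDerivAt (fun r : ℝ => γ (r • e)) (fderiv ℝ γ (r • e) e) r := fun r =>
    (hγ.differentiable one_ne_zero _).hasFDerivAt.comp_hasDerivAt r
      (by simpa using (hasDerivAt_id r).smul_const e)
  have hcompact : HasCompactSupport fun r : ℝ => γ (r • e) :=
    hsupp.comp_isClosedEmbedding (isClosedEmbedding_smul_left he)
  have hsmooth : ContDiff ℝ 1 fun r : ℝ => γ (r • e) := hγ.comp (by fun_prop)
  simpa only [(hray _).deriv, zero_smul] using hcompact.integral_Ioi_deriv_eq hsmooth 0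

theorem hasDerivAt_exp_ofReal_mul_I (θ : ℝ) :
    HasDerivAt (fun θ : ℝ => exp (θ * I)) (I * exp (θ * I)) θ := by
  simpa [mul_comm] using ((ofRealCLM.hasDerivAt (x := θ)).mul_const I).cexp

theorem integral_fderiv_circle (hγ : ContDiff ℝ 1 γ) {r : ℝ} (hr : r ≠ 0) :
    ∫ θ in Ioo (-Real.pi) Real.pi, fderiv ℝ γ (r • exp (θ * I)) (I * exp (θ * I)) = 0 := by
  have hcirc : ∀ θ : ℝ, HasDerivAt (fun θ : ℝ => r⁻¹ • γ (r • exp (θ * I)))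
      (fderiv ℝ γ (r • exp (θ * I)) (I * exp (θ * I))) θ := fun θ => by
    have := ((hγ.differentiable one_ne_zero _).hasFDerivAt.comp_hasDerivAt θ
      ((hasDerivAt_exp_ofReal_mul_I θ).const_smul r)).const_smul r⁻¹
    rwa [map_smul, inv_smul_smul₀ hr] at this
  have hcont : Continuous fun θ : ℝ => fderiv ℝ γ (r • exp (θ * I)) (I * exp (θ * I)) :=
    ((hγ.continuous_fderiv one_ne_zero).comp (by fun_prop)).clm_apply (by fun_prop)
  rw [← integral_Ioc_eq_integral_Ioo, ← intervalIntegral.integral_of_le (by linarith [Real.pi_pos]),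
    intervalIntegral.integral_eq_sub_of_hasDerivAt (fun θ _ => hcirc θ)
      (hcont.intervalIntegrable _ _)]
  simp [exp_neg, exp_pi_mul_I]

theorem integrableOn_polar_fderiv (hγ : ContDiff ℝ 1 γ) (hsupp : HasCompactSupport γ) {c : ℝ → ℂ}
    (hc : Continuous c) :
    IntegrableOn (fun p : ℝ × ℝ => fderiv ℝ γ (p.1 • exp (p.2 * I)) (c p.2))
      (Ioi 0 ×ˢ Ioo (-Real.pi) Real.pi) := by
  obtain ⟨R, hR⟩ := (hsupp.fderiv ℝ).isCompact.isBounded.subset_closedBall 0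
  have hcont : Continuous fun p : ℝ × ℝ => fderiv ℝ γ (p.1 • exp (p.2 * I)) (c p.2) :=
    ((hγ.continuous_fderiv one_ne_zero).comp (by fun_prop)).clm_apply (by fun_prop)
  have hcompact : IntegrableOn (fun p : ℝ × ℝ => fderiv ℝ γ (p.1 • exp (p.2 * I)) (c p.2))
      (Icc 0 R ×ˢ Icc (-Real.pi) Real.pi) :=
    hcont.continuousOn.integrableOn_compact (isCompact_Icc.prod isCompact_Icc)
  refine hcompact.of_forall_sdiff_eq_zero (measurableSet_Ioi.prod measurableSet_Ioo) ?_
  rintro ⟨r, θ⟩ ⟨⟨hr, hθ⟩, hnot⟩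
  have hrR : R < r := by
    by_contra! hle
    exact hnot ⟨⟨le_of_lt hr, hle⟩, Ioo_subset_Icc_self hθ⟩
  have hout : r • exp (θ * I) ∉ tsupport (fderiv ℝ γ) := fun hmem => by
    have := mem_closedBall_zero_iff.1 (hR hmem)
    rw [norm_smul, norm_exp_ofReal_mul_I, mul_one, Real.norm_of_nonneg (le_of_lt hr)] at this
    exact hrR.not_ge this
  simp only [image_eq_zero_of_notMem_tsupport hout, _root_.zero_apply]

theorem exp_neg_mul_dbar (γ : ℂ → ℂ) (z : ℂ) (θ : ℝ) :
    exp (-(θ * I)) * dbar γ z =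
      1 / 2 * fderiv ℝ γ z (exp (θ * I)) + I / 2 * fderiv ℝ γ z (I * exp (θ * I)) := by
  have hlin : ∀ a b : ℝ, fderiv ℝ γ z (a + b * I) = a * fderiv ℝ γ z 1 + b * fderiv ℝ γ z I := by
    intro a b
    rw [show (a + b * I : ℂ) = a • (1 : ℂ) + b • I by simp, map_add, map_smul, map_smul]
    simp
  have hrot : I * exp (θ * I) = (-Real.sin θ : ℝ) + (Real.cos θ : ℝ) * I := by
    rw [exp_mul_I]; push_cast; linear_combination sin θ * I_mul_I
  have hinv : exp (-(θ * I)) = Real.cos θ - Real.sin θ * I := by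
    rw [← neg_mul, exp_mul_I, cos_neg, sin_neg]; push_cast; ring
  rw [hrot, hlin, show exp (θ * I) = (Real.cos θ : ℝ) + (Real.sin θ : ℝ) * I by
    rw [exp_mul_I]; push_cast; rfl, hlin, hinv, dbar]
  push_cast
  linear_combination -(1 / 2) * sin θ * fderiv ℝ γ z I * I_mul_I

theorem smul_cauchyKernel_mul_dbar (γ : ℂ → ℂ) {p : ℝ × ℝ} (hp : 0 < p.1) :
    p.1 • (cauchyKernel (Complex.polarCoord.symm p) * dbar γ (Complex.polarCoord.symm p)) =
      (2 * Real.pi : ℂ)⁻¹ * fderiv ℝ γ (p.1 • exp (p.2 * I)) (exp (p.2 * I)) +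
        I * (2 * Real.pi : ℂ)⁻¹ * fderiv ℝ γ (p.1 • exp (p.2 * I)) (I * exp (p.2 * I)) := by
  have hr : (p.1 : ℂ) ≠ 0 := ofReal_ne_zero.2 hp.ne'
  have hpi : (Real.pi : ℂ) ≠ 0 := ofReal_ne_zero.2 Real.pi_ne_zero
  have hsymm : Complex.polarCoord.symm p = p.1 • exp (p.2 * I) := by
    rw [Complex.polarCoord_symm_apply, exp_mul_I, real_smul]; push_cast; rfl
  have hsplit := exp_neg_mul_dbar γ (p.1 • exp (p.2 * I)) p.2
  rw [exp_neg] at hsplit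
  rw [hsymm]
  calc p.1 • (cauchyKernel (p.1 • exp (p.2 * I)) * dbar γ (p.1 • exp (p.2 * I)))
      = (Real.pi : ℂ)⁻¹ * ((exp (p.2 * I))⁻¹ * dbar γ (p.1 • exp (p.2 * I))) := by
        simp only [cauchyKernel, real_smul]; field_simp
    _ = _ := by rw [hsplit]; field_simp

theorem integral_cauchyKernel_mul_dbar (hγ : ContDiff ℝ 1 γ) (hsupp : HasCompactSupport γ) :
    ∫ w, cauchyKernel w * dbar γ w = -γ 0 := by
  have hN := integrableOn_polar_fderiv hγ hsupp (c := fun θ => exp (θ * I)) (by fun_prop)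
  have hS := integrableOn_polar_fderiv hγ hsupp (c := fun θ => I * exp (θ * I)) (by fun_prop)
  have hNint : ∫ p : ℝ × ℝ in Ioi 0 ×ˢ Ioo (-Real.pi) Real.pi,
      fderiv ℝ γ (p.1 • exp (p.2 * I)) (exp (p.2 * I)) = 2 * Real.pi * -γ 0 := by
    rw [IntegrableOn, Measure.volume_eq_prod, ← Measure.prod_restrict] at hN
    rw [Measure.volume_eq_prod, ← Measure.prod_restrict, integral_prod_symm _ hN]
    simp only [integral_Ioi_fderiv_ray hγ hsupp (exp_ne_zero _)]
    simp [Real.pi_pos.le, two_mul]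
  have hSint : ∫ p : ℝ × ℝ in Ioi 0 ×ˢ Ioo (-Real.pi) Real.pi,
      fderiv ℝ γ (p.1 • exp (p.2 * I)) (I * exp (p.2 * I)) = 0 := by
    rw [Measure.volume_eq_prod, setIntegral_prod _ hS]
    exact setIntegral_eq_zero_of_forall_eq_zero fun r hr =>
      integral_fderiv_circle hγ (ne_of_gt hr)
  rw [← Complex.integral_comp_polarCoord_symm, _root_.polarCoord_target,
    setIntegral_congr_fun (measurableSet_Ioi.prod measurableSet_Ioo)
      fun p hp => smul_cauchyKernel_mul_dbar γ (p := p) hp.1,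
    integral_add (hN.const_mul _) (hS.const_mul _), integral_const_mul, integral_const_mul,
    hNint, hSint]
  have hpi : (Real.pi : ℂ) ≠ 0 := ofReal_ne_zero.2 Real.pi_ne_zero
  field_simp
  simp

end Pompeiu

section CauchyTransform

/-- The Cauchy transform `cauchyKernel ⋆ β`, which solves `dbar v = β`. -/
def cauchyTransform (β : ℂ → ℂ) : ℂ → ℂ := cauchyKernel ⋆[.mul ℝ ℂ] β

variable {β : ℂ → ℂ}

theorem locallyIntegrable_cauchyKernel : LocallyIntegrable cauchyKernel := by
  refine locallyIntegrable_of_norm_le_rpow (C := Real.pi⁻¹) (α := 1) (by simp) (by simp)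
    (ae_of_all _ fun w => ?_) ?_
  · rw [cauchyKernel, norm_inv, norm_mul, norm_real, Real.norm_of_nonneg Real.pi_pos.le, mul_inv,
      Real.rpow_neg_one]
  · unfold cauchyKernel
    fun_prop

theorem contDiff_cauchyTransform (hβ : ContDiff ℝ 1 β) (hsupp : HasCompactSupport β) :
    ContDiff ℝ 1 (cauchyTransform β) :=
  hsupp.contDiff_convolution_right _ locallyIntegrable_cauchyKernel hβ

theorem dbar_cauchyTransform (hβ : ContDiff ℝ 1 β) (hsupp : HasCompactSupport β) (z : ℂ) :
    dbar (cauchyTransform β) z = β z := by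
  have hderiv : ∀ e, fderiv ℝ (cauchyTransform β) z e =
      ∫ w, cauchyKernel w * fderiv ℝ β (z - w) e := fun e => by
    rw [cauchyTransform, (hsupp.hasFDerivAt_convolution_right _ locallyIntegrable_cauchyKernel hβ
      z).fderiv, convolution_precompR_apply _ locallyIntegrable_cauchyKernel (hsupp.fderiv ℝ)
      (hβ.continuous_fderiv one_ne_zero)]
    rfl
  have hint : ∀ e, Integrable fun w => cauchyKernel w * fderiv ℝ β (z - w) e := fun e =>
    (hsupp.fderiv_apply ℝ e).convolutionExists_right (.mul ℝ ℂ) locallyIntegrable_cauchyKernel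
      ((hβ.continuous_fderiv one_ne_zero).clm_apply continuous_const) z
  have hreflect : ∀ w, dbar (fun w => β (z - w)) w = -dbar β (z - w) := fun w => by
    have : HasFDerivAt (fun w => β (z - w)) _ w :=
      (hβ.differentiable one_ne_zero _).hasFDerivAt.comp w ((hasFDerivAt_id (𝕜 := ℝ) w).const_sub z)
    simp only [dbar, this.fderiv, ContinuousLinearMap.comp_apply, _root_.neg_apply,
      ContinuousLinearMap.id_apply, map_neg]
    ring
  calc dbar (cauchyTransform β) z
      = ∫ w, cauchyKernel w * dbar β (z - w) := by
        rw [dbar, hderiv, hderiv, ← integral_const_mul, ← integral_add (hint 1)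
          ((hint I).const_mul I), ← integral_div]
        congr with w
        rw [dbar]
        ring
    _ = -∫ w, cauchyKernel w * dbar (fun w => β (z - w)) w := by
        simp only [hreflect, mul_neg, integral_neg, neg_neg]
    _ = β z := by
        rw [integral_cauchyKernel_mul_dbar (γ := fun w => β (z - w)) (by fun_prop)
          (hsupp.comp_homeomorph (Homeomorph.subLeft z)), neg_neg, sub_zero]

/- Only the integrable part of the kernel in the ball of radius `R + ρ` matters. -/
theorem exists_setIntegral_norm_cauchyTransform_le (R ρ : ℝ) :
    ∃ C, 0 ≤ C ∧ ∀ β : ℂ → ℂ, Continuous β → tsupport β ⊆ closedBall 0 R →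
      ∫ z in ball 0 ρ, ‖cauchyTransform β z‖ ≤ C * ∫ z, ‖β z‖ := by
  let k : ℂ → ℝ := (closedBall 0 (R + ρ)).indicator fun w => ‖cauchyKernel w‖
  have hk : Integrable k := (integrable_indicator_iff measurableSet_closedBall).2
    (locallyIntegrable_cauchyKernel.integrableOn_isCompact (isCompact_closedBall 0 _)).norm
  have hk0 : ∀ w, 0 ≤ k w := indicator_nonneg fun w _ => norm_nonneg _
  refine ⟨∫ w, k w, integral_nonneg hk0, fun β hβ hR => ?_⟩
  have hβi : Integrable fun w => ‖β w‖ := (hβ.integrable_of_hasCompactSupport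
    (HasCompactSupport.of_support_subset_isCompact (isCompact_closedBall 0 R)
      ((subset_tsupport β).trans hR))).norm
  have hconv := hk.integrable_convolution (.mul ℝ ℝ) hβi
  have hpoint : ∀ z ∈ ball (0 : ℂ) ρ, ‖cauchyTransform β z‖ ≤
      (k ⋆[.mul ℝ ℝ, volume] fun w => ‖β w‖) z := fun z hz => by
    refine (norm_integral_le_integral_norm _).trans_eq (integral_congr_ae (ae_of_all _ fun w => ?_))
    by_cases hw : w ∈ closedBall 0 (R + ρ)
    · simp [k, indicator_of_mem hw]
    · have hzw : z - w ∉ tsupport β := fun hmem => hw <| mem_closedBall_zero_iff.2 <| by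
        have := mem_closedBall_zero_iff.1 (hR hmem)
        linarith [norm_sub_norm_le w z, norm_sub_rev w z, mem_ball_zero_iff.1 hz]
      simp [image_eq_zero_of_notMem_tsupport hzw]
  calc ∫ z in ball 0 ρ, ‖cauchyTransform β z‖
      ≤ ∫ z in ball 0 ρ, (k ⋆[.mul ℝ ℝ, volume] fun w => ‖β w‖) z := by
        exact integral_mono_of_nonneg (ae_of_all _ fun z => norm_nonneg _) hconv.integrableOn
          (ae_restrict_of_forall_mem measurableSet_ball hpoint)
    _ ≤ ∫ z, (k ⋆[.mul ℝ ℝ, volume] fun w => ‖β w‖) z :=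
        setIntegral_le_integral hconv (ae_of_all _ fun z => integral_nonneg fun w =>
          mul_nonneg (hk0 w) (norm_nonneg _))
    _ = (∫ w, k w) * ∫ w, ‖β w‖ := integral_convolution _ hk hβi

end CauchyTransform

theorem dbar_ofReal_bump_eq_zero {c : ℂ} (bump : ContDiffBump c) {w : ℂ}
    (hw : w ∈ ball c bump.rIn) : dbar (fun w => (bump w : ℂ)) w = 0 := by
  have hone : (fun w => (bump w : ℂ)) =ᶠ[𝓝 w] fun _ => 1 := by
    filter_upwards [bump.eventuallyEq_one_of_mem_ball hw] with v hv
    rw [hv, Pi.one_apply, ofReal_one]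
  simp [dbar, hone.fderiv_eq]

theorem norm_le_integral_norm_cauchyKernel_mul_dbar {χ F : ℂ → ℂ} {z : ℂ} {R : ℝ}
    (hχ : ContDiff ℝ 1 χ) (hsupp : HasCompactSupport χ) (hball : tsupport χ ⊆ ball 0 R)
    (hχ0 : χ 0 = 1) (hF : DifferentiableOn ℂ F (ball z R)) :
    ‖F z‖ ≤ ∫ w, ‖cauchyKernel w * dbar χ w * (ball z R).indicator F (z + w)‖ := by
  have hmem : ∀ w ∈ tsupport χ, z + w ∈ ball z R := fun w hw => by
    simpa [mem_ball, dist_eq_norm] using hball hw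
  have hF' : ∀ w ∈ tsupport χ, AnalyticAt ℂ (fun w => F (z + w)) w := fun w hw =>
    (hF.analyticAt (isOpen_ball.mem_nhds (hmem w hw))).fun_comp (by fun_prop)
  have hγ : ContDiff ℝ 1 fun w => χ w * F (z + w) :=
    contDiff_iff_contDiffAt.2 fun w => by
      by_cases hw : w ∈ tsupport χ
      · exact hχ.contDiffAt.mul ((hF' w hw).contDiffAt.restrict_scalars ℝ)
      · exact contDiffAt_const.congr_of_eventuallyEq (notMem_tsupport_iff_eventuallyEq.1
          fun h => hw (tsupport_mul_subset_left h))
  have hdbar : ∀ w, dbar (fun w => χ w * F (z + w)) w =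
      dbar χ w * (ball z R).indicator F (z + w) := fun w => by
    by_cases hw : w ∈ tsupport χ
    · have hd := (hF' w hw).differentiableAt
      rw [dbar_mul (hχ.differentiable one_ne_zero w) (hd.restrictScalars ℝ), dbar_eq_zero hd,
        mul_zero, zero_add, indicator_of_mem (hmem w hw)]
    · rw [image_eq_zero_of_notMem_tsupport fun h => hw (tsupport_dbar_subset h), zero_mul]
      exact image_eq_zero_of_notMem_tsupport fun h =>
        hw (tsupport_mul_subset_left (tsupport_dbar_subset h))
  calc ‖F z‖ = ‖∫ w, cauchyKernel w * dbar (fun w => χ w * F (z + w)) w‖ := by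
        rw [integral_cauchyKernel_mul_dbar hγ hsupp.mul_right, norm_neg, hχ0, one_mul, add_zero]
    _ ≤ _ := by
        simp only [hdbar, ← mul_assoc]
        exact norm_integral_le_integral_norm _

theorem exists_norm_le_mul_setIntegral_norm {R : ℝ} (hR : 0 < R) :
    ∃ C, 0 ≤ C ∧ ∀ (F : ℂ → ℂ) (z : ℂ), DifferentiableOn ℂ F (ball z R) →
      IntegrableOn F (ball z R) → ‖F z‖ ≤ C * ∫ w in ball z R, ‖F w‖ := by
  let bump : ContDiffBump (0 : ℂ) := ⟨R / 4, R / 2, by positivity, by linarith⟩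
  let χ : ℂ → ℂ := fun w => (bump w : ℂ)
  have hχ : ContDiff ℝ 1 χ := ofRealCLM.contDiff.comp bump.contDiff
  have hsupp : HasCompactSupport χ := bump.hasCompactSupport.comp_left ofReal_zero
  have hball : tsupport χ ⊆ ball 0 R :=
    (tsupport_comp_subset ofReal_zero _).trans <| by
      rw [bump.tsupport_eq]; exact closedBall_subset_ball (by simp only [bump]; linarith)
  obtain ⟨M, hM⟩ := (hasCompactSupport_dbar hsupp).exists_bound_of_continuous
    (continuous_dbar hχ)
  have hM0 : 0 ≤ M := (norm_nonneg _).trans (hM 0)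
  have hkernel : ∀ w, ‖cauchyKernel w * dbar χ w‖ ≤ (Real.pi * (R / 4))⁻¹ * M := fun w => by
    by_cases hw : w ∈ ball 0 (R / 4)
    · rw [dbar_ofReal_bump_eq_zero bump hw, mul_zero, norm_zero]
      positivity
    · rw [mem_ball_zero_iff, not_lt] at hw
      rw [norm_mul, cauchyKernel, norm_inv, norm_mul, norm_real, Real.norm_of_nonneg Real.pi_pos.le]
      gcongr
      exact hM w
  refine ⟨(Real.pi * (R / 4))⁻¹ * M, (norm_nonneg _).trans (hkernel 0), fun F z hF hint => ?_⟩
  have hind : Integrable fun w => ‖(ball z R).indicator F (z + w)‖ :=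
    (((integrable_indicator_iff measurableSet_ball).2 hint).comp_add_left z).norm
  calc ‖F z‖ ≤ ∫ w, ‖cauchyKernel w * dbar χ w * (ball z R).indicator F (z + w)‖ :=
        norm_le_integral_norm_cauchyKernel_mul_dbar hχ hsupp hball
          (by simp [χ, bump.one_of_mem_closedBall (mem_closedBall_self bump.rIn_pos.le)]) hF
    _ ≤ ∫ w, (Real.pi * (R / 4))⁻¹ * M * ‖(ball z R).indicator F (z + w)‖ := by
        refine integral_mono_of_nonneg (ae_of_all _ fun w => norm_nonneg _) (hind.const_mul _)
          (ae_of_all _ fun w => ?_)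
        simp only [norm_mul _ (indicator _ _ _)]
        exact mul_le_mul_of_nonneg_right (hkernel w) (norm_nonneg _)
    _ = (Real.pi * (R / 4))⁻¹ * M * ∫ w in ball z R, ‖F w‖ := by
        rw [integral_const_mul,
          integral_add_left_eq_self (fun w => ‖(ball z R).indicator F w‖) z,
          ← integral_indicator measurableSet_ball]
        simp only [norm_indicator_eq_indicator_norm]

section Energy

/-- `|G|² + r²`, as a complex-valued function so that `dbar` applies to it. -/
def regNormSq (G : ℂ → ℂ) (r : ℝ) (z : ℂ) : ℂ := G z * conj (G z) + r ^ 2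

/-- The smooth substitute `conj G / (|G|² + r²)` for `1 / G`. -/
def regInv (G : ℂ → ℂ) (r : ℝ) (z : ℂ) : ℂ := conj (G z) * (regNormSq G r z)⁻¹

/-- The square `r² |G'|² / (|G|² + r²)²` of the spherical derivative of `G / r`. -/
def sphericalEnergy (G : ℂ → ℂ) (r : ℝ) (z : ℂ) : ℝ :=
  r ^ 2 * ‖deriv G z‖ ^ 2 / (‖G z‖ ^ 2 + r ^ 2) ^ 2

variable {G A : ℂ → ℂ} {r : ℝ}

theorem regNormSq_eq_ofReal (G : ℂ → ℂ) (r : ℝ) (z : ℂ) :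
    regNormSq G r z = (‖G z‖ ^ 2 + r ^ 2 : ℝ) := by
  rw [regNormSq, mul_conj']; push_cast; rfl

theorem regNormSq_ne_zero (hr : 0 < r) (z : ℂ) : regNormSq G r z ≠ 0 := by
  rw [regNormSq_eq_ofReal, ofReal_ne_zero]; positivity

theorem regNormSq_mem_slitPlane (hr : 0 < r) (z : ℂ) : regNormSq G r z ∈ slitPlane := by
  rw [regNormSq_eq_ofReal, ofReal_mem_slitPlane]; positivity

theorem contDiff_real (hG : Differentiable ℂ G) {n : WithTop ℕ∞} : ContDiff ℝ n G :=
  hG.contDiff.restrict_scalars ℝ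

theorem contDiff_conj_real (hG : Differentiable ℂ G) {n : WithTop ℕ∞} :
    ContDiff ℝ n fun z => conj (G z) :=
  conjCLE.contDiff.comp (contDiff_real hG)

theorem contDiff_regNormSq (hG : Differentiable ℂ G) {n : WithTop ℕ∞} :
    ContDiff ℝ n (regNormSq G r) :=
  ((contDiff_real hG).mul (contDiff_conj_real hG)).add contDiff_const

theorem contDiff_regInv (hG : Differentiable ℂ G) (hr : 0 < r) {n : WithTop ℕ∞} :
    ContDiff ℝ n (regInv G r) :=
  (contDiff_conj_real hG).mul ((contDiff_regNormSq hG).inv (regNormSq_ne_zero hr))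

theorem dbar_regNormSq (hG : Differentiable ℂ G) (r : ℝ) (z : ℂ) :
    dbar (regNormSq G r) z = G z * conj (deriv G z) := by
  have hadd : dbar (regNormSq G r) z = dbar (fun w => G w * conj (G w)) z := by
    unfold dbar regNormSq
    simp only [fderiv_add_const]
  rw [hadd, dbar_mul (hG z |>.restrictScalars ℝ)
    ((contDiff_conj_real (n := 1) hG).differentiable one_ne_zero z), dbar_eq_zero (hG z),
    dbar_conj (hG z), zero_mul, add_zero]

theorem dbar_mul_regInv (hA : Differentiable ℂ A) (hG : Differentiable ℂ G) (hr : 0 < r) (z : ℂ) :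
    dbar (fun w => A w * regInv G r w) z =
      A z * (r ^ 2 * conj (deriv G z) / regNormSq G r z ^ 2) := by
  have hS := regNormSq_ne_zero (G := G) hr z
  have hSd : DifferentiableAt ℝ (regNormSq G r) z :=
    (contDiff_regNormSq (n := 1) hG).differentiable one_ne_zero z
  have hinv : dbar (fun w => (regNormSq G r w)⁻¹) z =
      -(regNormSq G r z ^ 2)⁻¹ * (G z * conj (deriv G z)) := by
    rw [dbar_comp (h := Inv.inv) (differentiableAt_inv hS) hSd, deriv_inv, dbar_regNormSq hG]
  rw [dbar_mul (hA z |>.restrictScalars ℝ)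
    ((contDiff_regInv (n := 1) hG hr).differentiable one_ne_zero z), dbar_eq_zero (hA z), zero_mul,
    add_zero]
  unfold regInv
  rw [dbar_mul ((contDiff_conj_real (n := 1) hG).differentiable one_ne_zero z) (hSd.fun_inv hS),
    hinv, dbar_conj (hG z)]
  field_simp
  rw [regNormSq]
  ring

theorem dbar_log_regNormSq (hG : Differentiable ℂ G) (hr : 0 < r) (z : ℂ) :
    dbar (fun w => log (regNormSq G r w)) z = conj (deriv G z * regInv G r z) := by
  rw [dbar_comp (h := log) (differentiableAt_log (regNormSq_mem_slitPlane hr z))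
    ((contDiff_regNormSq (n := 1) hG).differentiable one_ne_zero z), dbar_regNormSq hG,
    (hasDerivAt_log (regNormSq_mem_slitPlane hr z)).deriv, regInv, regNormSq_eq_ofReal]
  simp only [map_mul, map_inv₀, conj_conj, conj_ofReal]
  ring

theorem dbar_deriv_mul_regInv (hG : Differentiable ℂ G) (hr : 0 < r) (z : ℂ) :
    dbar (fun w => deriv G w * regInv G r w) z = sphericalEnergy G r z := by
  rw [dbar_mul_regInv hG.deriv hG hr, regNormSq_eq_ofReal, sphericalEnergy]
  push_cast
  linear_combination (r : ℂ) ^ 2 / ((‖G z‖ : ℂ) ^ 2 + r ^ 2) ^ 2 * mul_conj' (deriv G z)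

theorem integral_mul_sphericalEnergy (hG : Differentiable ℂ G) (hr : 0 < r) {χ : ℂ → ℝ}
    (hχ : ContDiff ℝ 2 χ) (hsupp : HasCompactSupport χ) :
    ((∫ z, χ z * sphericalEnergy G r z : ℝ) : ℂ) =
      conj (∫ z, dbar (fun w => conj (dbar (fun v => (χ v : ℂ)) w)) z * log (regNormSq G r z)) := by
  let X : ℂ → ℂ := fun v => χ v
  have hX : ContDiff ℝ 2 X := ofRealCLM.contDiff.comp hχ
  have hXsupp : HasCompactSupport X := hsupp.comp_left ofReal_zero
  have hcX : ContDiff ℝ 1 fun w => conj (dbar X w) := conjCLE.contDiff.comp (contDiff_dbar hX)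
  have hcXsupp : HasCompactSupport fun w => conj (dbar X w) :=
    (hasCompactSupport_dbar hXsupp).comp_left (map_zero _)
  have hlog : ContDiff ℝ 1 fun w => log (regNormSq G r w) :=
    contDiff_iff_contDiffAt.2 fun z =>
      ((contDiffAt_log (regNormSq_mem_slitPlane hr z)).restrict_scalars ℝ).comp z
        (contDiff_regNormSq hG).contDiffAt
  calc ((∫ z, χ z * sphericalEnergy G r z : ℝ) : ℂ)
      = ∫ z, X z * dbar (fun w => deriv G w * regInv G r w) z := by
        rw [← integral_complex_ofReal]
        simp only [dbar_deriv_mul_regInv hG hr, X, ofReal_mul]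
    _ = -∫ z, dbar X z * (deriv G z * regInv G r z) :=
        integral_mul_dbar (hX.of_le one_le_two) hXsupp
          ((contDiff_real hG.deriv).mul (contDiff_regInv hG hr))
    _ = conj (-∫ z, conj (dbar X z) * dbar (fun w => log (regNormSq G r w)) z) := by
        rw [map_neg, ← integral_conj]
        simp only [dbar_log_regNormSq hG hr, map_mul, conj_conj]
    _ = _ := by rw [integral_mul_dbar hcX hcXsupp hlog, neg_neg]

theorem exists_integral_mul_sphericalEnergy_le {χ : ℂ → ℝ} (hχ : ContDiff ℝ 2 χ)
    (hsupp : HasCompactSupport χ) :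
    ∃ C, 0 ≤ C ∧ ∀ (G : ℂ → ℂ) (r B : ℝ), Differentiable ℂ G → 0 < r →
      (∀ z ∈ tsupport χ, |Real.log (‖G z‖ ^ 2 + r ^ 2)| ≤ B) →
      ∫ z, χ z * sphericalEnergy G r z ≤ C * B := by
  let Δχ : ℂ → ℂ := dbar fun w => conj (dbar (fun v => (χ v : ℂ)) w)
  have hX : ContDiff ℝ 2 fun v => (χ v : ℂ) := ofRealCLM.contDiff.comp hχ
  have hΔ : Continuous Δχ := continuous_dbar (conjCLE.contDiff.comp (contDiff_dbar hX))
  have hΔsupp : tsupport Δχ ⊆ tsupport χ :=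
    tsupport_dbar_subset.trans <| (tsupport_comp_subset (map_zero conj) _).trans <|
      tsupport_dbar_subset.trans <| tsupport_comp_subset ofReal_zero χ
  have hint : Integrable fun z => ‖Δχ z‖ :=
    (hΔ.integrable_of_hasCompactSupport (hsupp.mono' ((subset_tsupport _).trans hΔsupp))).norm
  refine ⟨∫ z, ‖Δχ z‖, integral_nonneg fun z => norm_nonneg _, fun G r B hG hr hB => ?_⟩
  calc ∫ z, χ z * sphericalEnergy G r z
      ≤ ‖((∫ z, χ z * sphericalEnergy G r z : ℝ) : ℂ)‖ := by
        rw [norm_real]; exact Real.le_norm_self _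
    _ ≤ ∫ z, ‖Δχ z * log (regNormSq G r z)‖ := by
        rw [integral_mul_sphericalEnergy hG hr hχ hsupp, norm_conj]
        exact norm_integral_le_integral_norm _
    _ ≤ ∫ z, ‖Δχ z‖ * B := by
        refine integral_mono_of_nonneg (ae_of_all _ fun z => norm_nonneg _) (hint.mul_const B)
          (ae_of_all _ fun z => ?_)
        by_cases hz : z ∈ tsupport χ
        · dsimp only
          rw [norm_mul, regNormSq_eq_ofReal, ← ofReal_log (by positivity), norm_real]
          exact mul_le_mul_of_nonneg_left (hB z hz) (norm_nonneg _)
        · simp [image_eq_zero_of_notMem_tsupport fun h => hz (hΔsupp h)]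
    _ = (∫ z, ‖Δχ z‖) * B := integral_mul_const _ _

end Energy

section ApproximateRoot

/-- The smooth substitute `H * conj G / (|G|² + r²)` for the quotient `H / G`; it is an approximate
common root when `G` and `H` are close to the `j`-th and `(j + 1)`-st powers of a function. -/
def approxRoot (G H : ℂ → ℂ) (r : ℝ) (z : ℂ) : ℂ := H z * regInv G r z

variable {G H : ℂ → ℂ} {r s : ℝ} {j : ℕ} {z : ℂ}

theorem norm_pow_le_of_norm_pow_sub_le (hr : 0 ≤ r)
    (hGH : ‖G z ^ (j + 1) - H z ^ j‖ ≤ r ^ (j + 1)) :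
    ‖H z‖ ^ j ≤ 2 * √(‖G z‖ ^ 2 + r ^ 2) ^ (j + 1) := by
  have hG : ‖G z‖ ≤ √(‖G z‖ ^ 2 + r ^ 2) := Real.le_sqrt_of_sq_le (by nlinarith)
  have hr' : r ≤ √(‖G z‖ ^ 2 + r ^ 2) := Real.le_sqrt_of_sq_le (by nlinarith [norm_nonneg (G z)])
  calc ‖H z‖ ^ j = ‖G z ^ (j + 1) - (G z ^ (j + 1) - H z ^ j)‖ := by rw [sub_sub_self, norm_pow]
    _ ≤ ‖G z‖ ^ (j + 1) + r ^ (j + 1) := (norm_sub_le _ _).trans (by rw [norm_pow]; gcongr)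
    _ ≤ √(‖G z‖ ^ 2 + r ^ 2) ^ (j + 1) + √(‖G z‖ ^ 2 + r ^ 2) ^ (j + 1) := by gcongr
    _ = _ := by ring

theorem mul_norm_div_le (hj : 1 ≤ j) (hs : 0 < s) (hr : r = s ^ (2 * j))
    (hGH : ‖G z ^ (j + 1) - H z ^ j‖ ≤ r ^ (j + 1)) :
    r * ‖H z‖ / (‖G z‖ ^ 2 + r ^ 2) ≤ 2 * s ^ 2 := by
  have hr0 : 0 < r := hr ▸ pow_pos hs _
  set σ := √(‖G z‖ ^ 2 + r ^ 2)
  have hσ2 : ‖G z‖ ^ 2 + r ^ 2 = σ ^ 2 := (Real.sq_sqrt (by positivity)).symm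
  have hrσ : r ≤ σ := Real.le_sqrt_of_sq_le (by nlinarith [norm_nonneg (G z)])
  have hσ0 : 0 < σ := hr0.trans_le hrσ
  rw [hσ2, div_le_iff₀ (by positivity)]
  refine le_of_pow_le_pow_left₀ (by omega : j ≠ 0) (by positivity) ?_
  obtain ⟨i, rfl⟩ := Nat.exists_eq_add_of_le' hj
  calc (r * ‖H z‖) ^ (i + 1) = r ^ i * r * ‖H z‖ ^ (i + 1) := by ring
    _ ≤ σ ^ i * r * (2 * σ ^ (i + 1 + 1)) := by
        gcongr
        exact norm_pow_le_of_norm_pow_sub_le hr0.le hGH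
    _ = 2 ^ 1 * (r * σ ^ (2 * (i + 1))) := by ring
    _ ≤ 2 ^ (i + 1) * (r * σ ^ (2 * (i + 1))) := by
        gcongr
        · norm_num
    _ = (2 * s ^ 2 * σ ^ 2) ^ (i + 1) := by rw [hr]; ring

theorem norm_approxRoot_mul_sub_le (hj : 1 ≤ j) (hs : 0 < s) (hr : r = s ^ (2 * j))
    (hGH : ‖G z ^ (j + 1) - H z ^ j‖ ≤ r ^ (j + 1)) :
    ‖approxRoot G H r z * G z - H z‖ ≤ 2 * s ^ 2 * r := by
  have hr0 : 0 < r := hr ▸ pow_pos hs _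
  have hS : regNormSq G r z ≠ 0 := regNormSq_ne_zero hr0 z
  have heq : approxRoot G H r z * G z - H z = -(r * (r * H z / regNormSq G r z)) := by
    rw [approxRoot, regInv]
    field_simp
    rw [regNormSq]
    ring
  calc ‖approxRoot G H r z * G z - H z‖ = r * ‖H z‖ / (‖G z‖ ^ 2 + r ^ 2) * r := by
        rw [heq, norm_neg, norm_mul, norm_div, norm_mul, Complex.norm_of_nonneg hr0.le,
          regNormSq_eq_ofReal, Complex.norm_of_nonneg (by positivity), mul_comm]
    _ ≤ 2 * s ^ 2 * r := by gcongr; exact mul_norm_div_le hj hs hr hGH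

theorem norm_pow_sub_pow_le {a b : ℂ} {M : ℝ} (ha : ‖a‖ ≤ M) (hb : ‖b‖ ≤ M) (n : ℕ) :
    ‖a ^ n - b ^ n‖ ≤ n * M ^ (n - 1) * ‖a - b‖ :=
  (convex_closedBall (0 : ℂ) M).norm_image_sub_le_of_norm_deriv_le (f := fun z => z ^ n)
    (fun z _ => differentiableAt_pow n)
    (fun z hz => by
      rw [deriv_pow_field, norm_mul, norm_pow, norm_natCast]
      gcongr
      exact mem_closedBall_zero_iff.1 hz)
    (mem_closedBall_zero_iff.2 hb) (mem_closedBall_zero_iff.2 ha)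

theorem norm_regInv (G : ℂ → ℂ) (r : ℝ) (z : ℂ) :
    ‖regInv G r z‖ = ‖G z‖ / (‖G z‖ ^ 2 + r ^ 2) := by
  rw [regInv, norm_mul, norm_conj, norm_inv, regNormSq_eq_ofReal,
    Complex.norm_of_nonneg (by positivity), div_eq_mul_inv]

theorem norm_mul_norm_mul_regInv_pow_sub_one_le (hr : 0 < r) (n : ℕ) :
    ‖G z‖ * ‖(G z * regInv G r z) ^ n - 1‖ ≤ n * r := by
  have hS : regNormSq G r z ≠ 0 := regNormSq_ne_zero hr z
  have hq : ‖G z * regInv G r z‖ ≤ 1 := by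
    rw [norm_mul, norm_regInv, ← mul_div_assoc, div_le_one (by positivity)]
    nlinarith
  have hsub : G z * regInv G r z - 1 = -(r ^ 2 / regNormSq G r z) := by
    rw [regInv]
    field_simp
    rw [regNormSq]
    ring
  have hq1 : ‖G z‖ * ‖G z * regInv G r z - 1‖ ≤ r := by
    rw [hsub, norm_neg, norm_div, norm_pow, Complex.norm_of_nonneg hr.le, regNormSq_eq_ofReal,
      Complex.norm_of_nonneg (by positivity), ← mul_div_assoc, div_le_iff₀ (by positivity)]
    nlinarith [sq_nonneg (‖G z‖ - r), norm_nonneg (G z), mul_nonneg (norm_nonneg (G z)) hr.le]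
  calc ‖G z‖ * ‖(G z * regInv G r z) ^ n - 1‖
      ≤ ‖G z‖ * (n * ‖G z * regInv G r z - 1‖) := by
        gcongr
        simpa using norm_pow_sub_pow_le hq norm_one.le n
    _ = n * (‖G z‖ * ‖G z * regInv G r z - 1‖) := by ring
    _ ≤ n * r := by gcongr

theorem norm_approxRoot_pow_sub_le (hr : 0 < r)
    (hGH : ‖G z ^ (j + 1) - H z ^ j‖ ≤ r ^ (j + 1)) :
    ‖approxRoot G H r z ^ j - G z‖ ≤ (j + 1) * r := by
  have hinv : r * ‖regInv G r z‖ ≤ 1 := by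
    rw [norm_regInv, ← mul_div_assoc, div_le_one (by positivity)]
    nlinarith [sq_nonneg (‖G z‖ - r), norm_nonneg (G z), mul_nonneg (norm_nonneg (G z)) hr.le]
  calc ‖approxRoot G H r z ^ j - G z‖
      = ‖G z * ((G z * regInv G r z) ^ j - 1)
          - (G z ^ (j + 1) - H z ^ j) * regInv G r z ^ j‖ := by
        rw [approxRoot]
        ring_nf
    _ ≤ ‖G z‖ * ‖(G z * regInv G r z) ^ j - 1‖ + r ^ (j + 1) * ‖regInv G r z‖ ^ j := by
        refine (norm_sub_le _ _).trans ?_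
        rw [norm_mul, norm_mul _ (_ ^ j), norm_pow (regInv G r z)]
        gcongr
    _ = ‖G z‖ * ‖(G z * regInv G r z) ^ j - 1‖ + r * (r * ‖regInv G r z‖) ^ j := by ring
    _ ≤ j * r + r * 1 := by
        exact add_le_add (norm_mul_norm_mul_regInv_pow_sub_one_le hr j)
          (mul_le_mul_of_nonneg_left (pow_le_one₀ (by positivity) hinv) hr.le)
    _ = (j + 1) * r := by ring

theorem norm_dbar_approxRoot_le (hG : Differentiable ℂ G) (hH : Differentiable ℂ H) (hj : 1 ≤ j)
    (hs : 0 < s) (hr : r = s ^ (2 * j)) (hGH : ‖G z ^ (j + 1) - H z ^ j‖ ≤ r ^ (j + 1)) :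
    ‖dbar (approxRoot G H r) z‖ ≤ s ^ 2 * (1 + sphericalEnergy G r z) := by
  have hr0 : 0 < r := hr ▸ pow_pos hs _
  set S := ‖G z‖ ^ 2 + r ^ 2 with hS
  have hS0 : 0 < S := by positivity
  have hamgm : r * ‖deriv G z‖ / S ≤ (1 + sphericalEnergy G r z) / 2 := by
    have hE : sphericalEnergy G r z = (r * ‖deriv G z‖ / S) ^ 2 := by
      rw [sphericalEnergy, ← hS, div_pow, mul_pow]
    rw [hE]
    nlinarith [sq_nonneg (r * ‖deriv G z‖ / S - 1)]
  calc ‖dbar (approxRoot G H r) z‖ = r * ‖H z‖ / S * (r * ‖deriv G z‖ / S) := by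
        unfold approxRoot
        rw [dbar_mul_regInv hH hG hr0, regNormSq_eq_ofReal, ← hS, norm_mul, norm_div, norm_mul,
          norm_conj, norm_pow, norm_pow, Complex.norm_of_nonneg hr0.le,
          Complex.norm_of_nonneg hS0.le]
        field_simp
    _ ≤ 2 * s ^ 2 * ((1 + sphericalEnergy G r z) / 2) := by
        gcongr
        exact mul_norm_div_le hj hs hr hGH
    _ = s ^ 2 * (1 + sphericalEnergy G r z) := by ring

end ApproximateRoot

section HolomorphicRoot

/-- Two entire functions that, on `closedBall 0 2`, are bounded by `K` and satisfy, up to an error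
`r ^ (j + 1)`, the relation `G ^ (j + 1) = H ^ j` between the `j`-th and the `(j + 1)`-st power of
a function. -/
structure IsApproxPowerPair (j : ℕ) (K r : ℝ) (G H : ℂ → ℂ) : Prop where
  differentiable_left : Differentiable ℂ G
  differentiable_right : Differentiable ℂ H
  norm_left_le : ∀ z ∈ closedBall (0 : ℂ) 2, ‖G z‖ ≤ K
  norm_right_le : ∀ z ∈ closedBall (0 : ℂ) 2, ‖H z‖ ≤ K
  norm_pow_sub_pow_le : ∀ z ∈ closedBall (0 : ℂ) 2, ‖G z ^ (j + 1) - H z ^ j‖ ≤ r ^ (j + 1)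

/-- A cutoff function, equal to `1` on the unit disc and supported in the disc of radius `2`. -/
def unitCutoff : ContDiffBump (0 : ℂ) := ⟨1, 2, one_pos, one_lt_two⟩

variable {G H : ℂ → ℂ} {j : ℕ} {K r s : ℝ}

theorem IsApproxPowerPair.mono {K' : ℝ} (h : IsApproxPowerPair j K r G H)
    (hK : K ≤ K') : IsApproxPowerPair j K' r G H where
  __ := h
  norm_left_le z hz := (h.norm_left_le z hz).trans hK
  norm_right_le z hz := (h.norm_right_le z hz).trans hK

theorem abs_log_sq_add_pow_sq_le {a : ℝ} (ha : |a| ≤ K) (hs : 0 < s) (hs1 : s ≤ 1) (n : ℕ) :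
    |Real.log (a ^ 2 + (s ^ n) ^ 2)| ≤ (2 * n + K ^ 2) / s := by
  have hpow : 0 < s ^ n := pow_pos hs n
  have haK : a ^ 2 ≤ K ^ 2 := sq_le_sq' (neg_le_of_abs_le ha) (le_of_abs_le ha)
  have hone : 1 ≤ s⁻¹ := (one_le_inv₀ hs).2 hs1
  rw [abs_le, div_eq_mul_inv]
  constructor
  · calc -((2 * n + K ^ 2) * s⁻¹) ≤ 2 * n * (1 - s⁻¹) := by
          nlinarith [mul_nonneg (sq_nonneg K) (inv_nonneg.2 hs.le), n.cast_nonneg (α := ℝ)]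
      _ ≤ 2 * n * Real.log s := by gcongr; exact Real.one_sub_inv_le_log_of_pos hs
      _ = Real.log ((s ^ n) ^ 2) := by rw [Real.log_pow, Real.log_pow]; push_cast; ring
      _ ≤ Real.log (a ^ 2 + (s ^ n) ^ 2) :=
          Real.log_le_log (by positivity) (le_add_of_nonneg_left (sq_nonneg a))
  · calc Real.log (a ^ 2 + (s ^ n) ^ 2) ≤ a ^ 2 + (s ^ n) ^ 2 - 1 :=
          Real.log_le_sub_one_of_pos (by positivity)
      _ ≤ K ^ 2 := by
          have := pow_le_one₀ (n := 2) hpow.le (pow_le_one₀ (n := n) hs.le hs1)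
          linarith
      _ ≤ (2 * n + K ^ 2) * s⁻¹ := by
          nlinarith [mul_nonneg (Nat.cast_nonneg n : (0 : ℝ) ≤ n) (inv_nonneg.2 hs.le),
            mul_le_mul_of_nonneg_left hone (sq_nonneg K)]

theorem continuous_sphericalEnergy (hG : Differentiable ℂ G) (hr : 0 < r) :
    Continuous (sphericalEnergy G r) := by
  have hG' : Continuous (deriv G) := hG.deriv.continuous
  have hGc : Continuous G := hG.continuous
  exact (continuous_const.mul (hG'.norm.pow 2)).div (by fun_prop) fun z => by positivity

theorem exists_integral_mul_norm_dbar_approxRoot_le (hj : 1 ≤ j) (K : ℝ) :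
    ∃ C, 0 ≤ C ∧ ∀ (G H : ℂ → ℂ) (s : ℝ), 0 < s → s ≤ 1 →
      IsApproxPowerPair j K (s ^ (2 * j)) G H →
      ∫ z, unitCutoff z * ‖dbar (approxRoot G H (s ^ (2 * j))) z‖ ≤ C * s := by
  obtain ⟨C, hC, henergy⟩ := exists_integral_mul_sphericalEnergy_le
    (unitCutoff.contDiff (n := 2)) unitCutoff.hasCompactSupport
  refine ⟨(∫ z, unitCutoff z) + C * (2 * (2 * j : ℕ) + K ^ 2),
    add_nonneg (integral_nonneg fun z => unitCutoff.nonneg) (by positivity),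
    fun G H s hs hs1 hGH => ?_⟩
  set r := s ^ (2 * j) with hr
  have hr0 : 0 < r := pow_pos hs _
  have hsupp : ∀ {z}, z ∈ tsupport unitCutoff → z ∈ closedBall (0 : ℂ) 2 := fun hz => by
    rwa [unitCutoff.tsupport_eq] at hz
  have hint : Integrable fun z => unitCutoff z * sphericalEnergy G r z :=
    (unitCutoff.continuous.mul
      (continuous_sphericalEnergy hGH.differentiable_left hr0)).integrable_of_hasCompactSupport
        unitCutoff.hasCompactSupport.mul_right
  have hpoint : ∀ z, unitCutoff z * ‖dbar (approxRoot G H r) z‖ ≤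
      s ^ 2 * (unitCutoff z + unitCutoff z * sphericalEnergy G r z) := fun z => by
    by_cases hz : z ∈ tsupport unitCutoff
    · have := norm_dbar_approxRoot_le hGH.differentiable_left hGH.differentiable_right hj hs hr
        (hGH.norm_pow_sub_pow_le z (hsupp hz))
      nlinarith [mul_le_mul_of_nonneg_left this (unitCutoff.nonneg (x := z))]
    · simp [image_eq_zero_of_notMem_tsupport hz]
  calc ∫ z, unitCutoff z * ‖dbar (approxRoot G H r) z‖
      ≤ ∫ z, s ^ 2 * (unitCutoff z + unitCutoff z * sphericalEnergy G r z) :=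
        integral_mono_of_nonneg
          (ae_of_all _ fun z => mul_nonneg unitCutoff.nonneg (norm_nonneg _))
          ((unitCutoff.integrable.add hint).const_mul _) (ae_of_all _ hpoint)
    _ = s ^ 2 * ((∫ z, unitCutoff z) + ∫ z, unitCutoff z * sphericalEnergy G r z) := by
        rw [integral_const_mul, integral_add unitCutoff.integrable hint]
    _ ≤ s ^ 2 * ((∫ z, unitCutoff z) / s + C * ((2 * (2 * j : ℕ) + K ^ 2) / s)) := by
        gcongr
        · exact le_div_self (integral_nonneg fun z => unitCutoff.nonneg) hs hs1
        · exact henergy G r _ hGH.differentiable_left hr0 fun z hz =>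
            abs_log_sq_add_pow_sq_le (by simpa using hGH.norm_left_le z (hsupp hz)) hs hs1 _
    _ = _ := by field_simp

theorem exists_dbar_eq_and_setIntegral_norm_le (χ : ContDiffBump (0 : ℂ)) :
    ∃ C, 0 ≤ C ∧ ∀ u : ℂ → ℂ, ContDiff ℝ 2 u → ∃ v : ℂ → ℂ, ContDiff ℝ 1 v ∧
      (∀ z ∈ ball (0 : ℂ) χ.rIn, dbar v z = dbar u z) ∧
      ∫ z in ball 0 χ.rIn, ‖v z‖ ≤ C * ∫ z, χ z * ‖dbar u z‖ := by
  obtain ⟨C, hC, hle⟩ := exists_setIntegral_norm_cauchyTransform_le χ.rOut χ.rIn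
  refine ⟨C, hC, fun u hu => ?_⟩
  let β : ℂ → ℂ := fun z => χ z * dbar u z
  have hβ : ContDiff ℝ 1 β := (ofRealCLM.contDiff.comp χ.contDiff).mul (contDiff_dbar hu)
  have hβsupp : tsupport β ⊆ closedBall 0 χ.rOut := by
    rw [← χ.tsupport_eq]
    exact (tsupport_mul_subset_left).trans (tsupport_comp_subset ofReal_zero _)
  have hβcompact : HasCompactSupport β :=
    HasCompactSupport.of_support_subset_isCompact (isCompact_closedBall 0 χ.rOut)
      ((subset_tsupport β).trans hβsupp)
  refine ⟨cauchyTransform β, contDiff_cauchyTransform hβ hβcompact, fun z hz => ?_,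
    (hle β hβ.continuous hβsupp).trans_eq ?_⟩
  · rw [dbar_cauchyTransform hβ hβcompact]
    simp only [β, χ.one_of_mem_closedBall (ball_subset_closedBall hz), ofReal_one, one_mul]
  · simp only [β, norm_mul, norm_real, Real.norm_of_nonneg χ.nonneg]

theorem exists_norm_le_mul_setIntegral {R : ℝ} (hR : 0 < R) :
    ∃ C, 0 ≤ C ∧ ∀ (P : ℂ → ℂ) (g : ℂ → ℝ), DifferentiableOn ℂ P (ball 0 R) →
      IntegrableOn g (ball 0 R) → (∀ z ∈ ball (0 : ℂ) R, ‖P z‖ ≤ g z) →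
      ∀ z ∈ closedBall (0 : ℂ) (R / 2), ‖P z‖ ≤ C * ∫ w in ball 0 R, g w := by
  obtain ⟨C, hC, hle⟩ := exists_norm_le_mul_setIntegral_norm (half_pos hR)
  refine ⟨C, hC, fun P g hP hg hPg z hz => ?_⟩
  have hsub : ball z (R / 2) ⊆ ball 0 R := ball_subset_ball' (by
    have := mem_closedBall.1 hz
    linarith)
  have hae : ∀ᵐ w ∂volume.restrict (ball (0 : ℂ) R), ‖P w‖ ≤ g w :=
    ae_restrict_of_forall_mem measurableSet_ball hPg
  have hPint : IntegrableOn P (ball 0 R) :=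
    hg.mono' (hP.continuousOn.aestronglyMeasurable measurableSet_ball) hae
  calc ‖P z‖ ≤ C * ∫ w in ball z (R / 2), ‖P w‖ := hle P z (hP.mono hsub) (hPint.mono_set hsub)
    _ ≤ C * ∫ w in ball 0 R, g w := by
        gcongr
        exact (setIntegral_mono_set hPint.norm (ae_of_all _ fun w => norm_nonneg _)
          hsub.eventuallyLE).trans (integral_mono_ae hPint.norm hg hae)

theorem exists_norm_le_mul_add_setIntegral {R : ℝ} (hR : 0 < R) :
    ∃ C, 0 ≤ C ∧ ∀ (P : ℂ → ℂ) (g : ℂ → ℝ) (A s : ℝ), 0 ≤ A → 0 ≤ s → Continuous g →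
      (∀ z, 0 ≤ g z) → DifferentiableOn ℂ P (ball 0 R) →
      (∀ z ∈ ball (0 : ℂ) R, ‖P z‖ ≤ A * (s + g z)) →
      ∀ z ∈ closedBall (0 : ℂ) (R / 2), ‖P z‖ ≤ C * A * (s + ∫ w in ball 0 R, g w) := by
  obtain ⟨C, hC, hle⟩ := exists_norm_le_mul_setIntegral hR
  set V := volume.real (ball (0 : ℂ) R)
  refine ⟨C * (V + 1), by positivity, fun P g A s hA hs hg hg0 hP hPg z hz => ?_⟩
  have hint : IntegrableOn g (ball 0 R) :=
    (hg.continuousOn.integrableOn_compact (isCompact_closedBall 0 R)).mono_set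
      ball_subset_closedBall
  have hconst : IntegrableOn (fun _ : ℂ => s) (ball 0 R) :=
    integrableOn_const measure_ball_lt_top.ne
  have hV : 0 ≤ V := measureReal_nonneg
  have hI : 0 ≤ ∫ w in ball 0 R, g w := integral_nonneg hg0
  calc ‖P z‖ ≤ C * ∫ w in ball 0 R, A * (s + g w) :=
        hle P _ hP ((hconst.add hint).const_mul A) hPg z hz
    _ = C * A * (V * s + ∫ w in ball 0 R, g w) := by
        rw [integral_const_mul, integral_add hconst hint, setIntegral_const, smul_eq_mul, mul_assoc]
    _ ≤ C * A * ((V + 1) * (s + ∫ w in ball 0 R, g w)) := by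
        gcongr
        nlinarith
    _ = _ := by ring

theorem exists_differentiableOn_setIntegral_norm_sub_le :
    ∃ C, 0 ≤ C ∧ ∀ (u : ℂ → ℂ) (M ε : ℝ), ContDiff ℝ 2 u → (∀ z ∈ ball (0 : ℂ) 1, ‖u z‖ ≤ M) →
      ∫ z, unitCutoff z * ‖dbar u z‖ ≤ ε →
      ∃ F : ℂ → ℂ, Continuous F ∧ DifferentiableOn ℂ F (ball 0 1) ∧
        ∫ z in ball 0 1, ‖F z - u z‖ ≤ C * ε ∧
        ∀ z ∈ closedBall (0 : ℂ) (1 / 2), ‖F z‖ ≤ C * (M + ε) := by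
  obtain ⟨C₁, hC₁, hdbar⟩ := exists_dbar_eq_and_setIntegral_norm_le unitCutoff
  obtain ⟨C₂, hC₂, hsup⟩ := exists_norm_le_mul_setIntegral one_pos
  set V := volume.real (ball (0 : ℂ) 1)
  refine ⟨C₁ + C₂ * (V + C₁), by positivity, fun u M ε hu hM hε => ?_⟩
  have hε0 : 0 ≤ ε :=
    (integral_nonneg fun z => mul_nonneg unitCutoff.nonneg (norm_nonneg _)).trans hε
  have hM0 : 0 ≤ M := (norm_nonneg _).trans (hM 0 (mem_ball_self one_pos))
  obtain ⟨v, hv, hvu, hvint⟩ := hdbar u hu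
  have hv1 : ∫ z in ball 0 1, ‖v z‖ ≤ C₁ * ε := hvint.trans (by gcongr)
  have hudiff := hu.differentiable two_ne_zero
  have hvdiff := hv.differentiable one_ne_zero
  have hF : DifferentiableOn ℂ (fun z => u z - v z) (ball 0 1) := fun z hz =>
    (differentiableAt_of_dbar_eq_zero ((hudiff z).fun_sub (hvdiff z)) (by
      rw [dbar_sub (hudiff z) (hvdiff z), hvu z hz, sub_self])).differentiableWithinAt
  have hvi : IntegrableOn (fun z => ‖v z‖) (ball 0 1) :=
    (hv.continuous.norm.continuousOn.integrableOn_compact (isCompact_closedBall 0 1)).mono_set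
      ball_subset_closedBall
  have hconst : IntegrableOn (fun _ : ℂ => M) (ball 0 1) :=
    integrableOn_const measure_ball_lt_top.ne
  refine ⟨fun z => u z - v z, hu.continuous.sub hv.continuous, hF, ?_, fun z hz => ?_⟩
  · simp only [sub_sub_cancel_left, norm_neg]
    exact hv1.trans (mul_le_mul_of_nonneg_right (le_add_of_nonneg_right (by positivity)) hε0)
  · calc ‖u z - v z‖ ≤ C₂ * ∫ z in ball 0 1, (M + ‖v z‖) :=
          hsup _ _ hF (hconst.add hvi)
            (fun w hw => (norm_sub_le _ _).trans (add_le_add (hM w hw) le_rfl)) z hz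
      _ = C₂ * (V * M + ∫ z in ball 0 1, ‖v z‖) := by
          rw [integral_add hconst hvi, setIntegral_const, smul_eq_mul]
      _ ≤ C₂ * (V * M + C₁ * ε) := by gcongr
      _ ≤ (C₁ + C₂ * (V + C₁)) * (M + ε) := by
          have : 0 ≤ V := measureReal_nonneg
          nlinarith [mul_nonneg hC₁ hM0, mul_nonneg hC₁ hε0, mul_nonneg hC₂ (mul_nonneg this hε0),
            mul_nonneg hC₂ (mul_nonneg hC₁ hM0)]

theorem norm_le_of_norm_pow_le {a : ℂ} {M : ℝ} (hj : 1 ≤ j) (hM : 1 ≤ M) (ha : ‖a ^ j‖ ≤ M) :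
    ‖a‖ ≤ M :=
  le_of_pow_le_pow_left₀ (by omega) (by positivity) <|
    (norm_pow a j).symm.trans_le (ha.trans (le_self_pow₀ hM (by omega)))

theorem IsApproxPowerPair.norm_approxRoot_le (hr : 0 < r) (hr1 : r ≤ 1) (hj : 1 ≤ j)
    (h : IsApproxPowerPair j K r G H) {z : ℂ} (hz : z ∈ closedBall (0 : ℂ) 2) :
    ‖approxRoot G H r z‖ ≤ K + j + 1 := by
  have hG := h.norm_left_le z hz
  have hK : 0 ≤ K := (norm_nonneg _).trans hG
  refine norm_le_of_norm_pow_le hj (le_add_of_nonneg_left (by positivity)) ?_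
  calc ‖approxRoot G H r z ^ j‖ = ‖G z + (approxRoot G H r z ^ j - G z)‖ := by rw [add_sub_cancel]
    _ ≤ K + (j + 1) * r := (norm_add_le _ _).trans <| add_le_add hG <|
        norm_approxRoot_pow_sub_le hr (h.norm_pow_sub_pow_le z hz)
    _ ≤ K + j + 1 := by nlinarith [(Nat.cast_nonneg j : (0 : ℝ) ≤ j)]

theorem norm_pow_sub_le_and_norm_mul_sub_le {a h u w : ℂ} {B : ℝ} (ha : ‖a‖ ≤ K) (hu : ‖u‖ ≤ B)
    (hw : ‖w‖ ≤ B) (hs : 0 ≤ s) (hua : ‖u ^ j - a‖ ≤ (j + 1) * s) (huh : ‖u * a - h‖ ≤ 2 * s) :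
    ‖w ^ j - a‖ ≤ (j * B ^ (j - 1) + K + j + 2) * (s + ‖w - u‖) ∧
      ‖w * a - h‖ ≤ (j * B ^ (j - 1) + K + j + 2) * (s + ‖w - u‖) := by
  have hK : 0 ≤ K := (norm_nonneg a).trans ha
  have hB : 0 ≤ j * B ^ (j - 1) :=
    mul_nonneg j.cast_nonneg (pow_nonneg ((norm_nonneg u).trans hu) _)
  have hj : (0 : ℝ) ≤ j := j.cast_nonneg
  have hd := norm_nonneg (w - u)
  constructor
  · calc ‖w ^ j - a‖ ≤ ‖w ^ j - u ^ j‖ + ‖u ^ j - a‖ := norm_sub_le_norm_sub_add_norm_sub _ _ _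
      _ ≤ j * B ^ (j - 1) * ‖w - u‖ + (j + 1) * s := add_le_add (norm_pow_sub_pow_le hw hu j) hua
      _ ≤ _ := by nlinarith [mul_nonneg hB hs, mul_nonneg hK hs, mul_nonneg hK hd, mul_nonneg hj hd]
  · calc ‖w * a - h‖ = ‖a * (w - u) + (u * a - h)‖ := by ring_nf
      _ ≤ K * ‖w - u‖ + 2 * s := (norm_add_le _ _).trans (by rw [norm_mul]; gcongr)
      _ ≤ _ := by nlinarith [mul_nonneg hB hs, mul_nonneg hK hs, mul_nonneg hB hd, mul_nonneg hj hd,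
          mul_nonneg hj hs]

theorem IsApproxPowerPair.norm_sub_le_mul_add_norm_sub_approxRoot (hs : 0 < s) (hs1 : s ≤ 1)
    (hj : 1 ≤ j) (h : IsApproxPowerPair j K (s ^ (2 * j)) G H) {z w : ℂ} {B : ℝ}
    (hz : z ∈ closedBall (0 : ℂ) 2) (hu : ‖approxRoot G H (s ^ (2 * j)) z‖ ≤ B) (hw : ‖w‖ ≤ B) :
    ‖w ^ j - G z‖ ≤
        (j * B ^ (j - 1) + K + j + 2) * (s + ‖w - approxRoot G H (s ^ (2 * j)) z‖) ∧
      ‖w * G z - H z‖ ≤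
        (j * B ^ (j - 1) + K + j + 2) * (s + ‖w - approxRoot G H (s ^ (2 * j)) z‖) := by
  have hGH := h.norm_pow_sub_pow_le z hz
  have hrs : s ^ (2 * j) ≤ s := pow_le_of_le_one hs.le hs1 (by omega)
  refine norm_pow_sub_le_and_norm_mul_sub_le (h.norm_left_le z hz) hu hw hs.le
    ((norm_approxRoot_pow_sub_le (pow_pos hs _) hGH).trans (by gcongr))
    ((norm_approxRoot_mul_sub_le hj hs rfl hGH).trans ?_)
  nlinarith [pow_le_one₀ (n := 2) hs.le hs1]

theorem exists_differentiableOn_norm_pow_sub_le_add_norm_sub (hj : 1 ≤ j) (K : ℝ) :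
    ∃ C, 0 ≤ C ∧ ∀ (G H : ℂ → ℂ) (s : ℝ), 0 < s → s ≤ 1 →
      IsApproxPowerPair j K (s ^ (2 * j)) G H →
      ∃ F u : ℂ → ℂ, Continuous F ∧ Continuous u ∧ DifferentiableOn ℂ F (ball 0 1) ∧
        ∫ z in ball 0 1, ‖F z - u z‖ ≤ C * s ∧
        ∀ z ∈ closedBall (0 : ℂ) (1 / 2), ‖F z‖ ≤ C ∧
          ‖F z ^ j - G z‖ ≤ C * (s + ‖F z - u z‖) ∧
          ‖F z * G z - H z‖ ≤ C * (s + ‖F z - u z‖) := by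
  obtain ⟨C₁, hC₁, hdbar⟩ := exists_integral_mul_norm_dbar_approxRoot_le hj K
  obtain ⟨C₂, hC₂, hcorr⟩ := exists_differentiableOn_setIntegral_norm_sub_le
  let B := |K| + j + 1 + C₂ * (|K| + j + 1 + C₁)
  let D := j * B ^ (j - 1) + |K| + j + 2
  refine ⟨C₂ * C₁ + B + D, by positivity, fun G H s hs hs1 h => ?_⟩
  have hr0 : 0 < s ^ (2 * j) := pow_pos hs _
  set u := approxRoot G H (s ^ (2 * j))
  have hu2 : ContDiff ℝ 2 u :=
    (contDiff_real h.differentiable_right).mul (contDiff_regInv h.differentiable_left hr0)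
  have hu : ∀ z ∈ closedBall (0 : ℂ) 2, ‖u z‖ ≤ |K| + j + 1 := fun z =>
    (h.mono (le_abs_self K)).norm_approxRoot_le hr0 (pow_le_one₀ hs.le hs1) hj
  obtain ⟨F, hFc, hF, hFu, hFB⟩ := hcorr u (|K| + j + 1) (C₁ * s) hu2
    (fun z hz => hu z (ball_subset_closedBall (ball_subset_ball one_le_two hz)))
    (hdbar G H s hs hs1 h)
  refine ⟨F, u, hFc, hu2.continuous, hF, hFu.trans ?_, fun z hz => ?_⟩
  · rw [← mul_assoc]
    gcongr
    rw [add_assoc]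
    exact le_add_of_nonneg_right (by positivity)
  have hz2 : z ∈ closedBall (0 : ℂ) 2 := closedBall_subset_closedBall (by norm_num) hz
  have hFB' : ‖F z‖ ≤ B := (hFB z hz).trans <| le_add_of_nonneg_of_le (by positivity) <| by
    gcongr
    exact mul_le_of_le_one_right hC₁ hs1
  have hD : D * (s + ‖F z - u z‖) ≤ (C₂ * C₁ + B + D) * (s + ‖F z - u z‖) := by
    gcongr
    exact le_add_of_nonneg_left (by positivity)
  obtain ⟨hpow, hmul⟩ := (h.mono (le_abs_self K)).norm_sub_le_mul_add_norm_sub_approxRoot hs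
    hs1 hj hz2 ((hu z hz2).trans (le_add_of_nonneg_right (by positivity))) hFB'
  refine ⟨hFB'.trans ?_, hpow.trans hD, hmul.trans hD⟩
  have : 0 ≤ C₂ * C₁ + D := by positivity
  linarith

theorem exists_differentiableOn_norm_pow_sub_le (hj : 1 ≤ j) (K : ℝ) :
    ∃ C, 0 ≤ C ∧ ∀ (G H : ℂ → ℂ) (s : ℝ), 0 < s → s ≤ 1 →
      IsApproxPowerPair j K (s ^ (2 * j)) G H →
      ∃ F : ℂ → ℂ, DifferentiableOn ℂ F (ball 0 1) ∧ ∀ z ∈ closedBall (0 : ℂ) (1 / 4),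
        ‖F z‖ ≤ C ∧ ‖F z ^ j - G z‖ ≤ C * s ∧ ‖F z * G z - H z‖ ≤ C * s := by
  obtain ⟨C₁, hC₁, hroot⟩ := exists_differentiableOn_norm_pow_sub_le_add_norm_sub hj K
  obtain ⟨C₂, hC₂, hsup⟩ := exists_norm_le_mul_add_setIntegral (R := 1 / 2) (by norm_num)
  refine ⟨C₁ + C₂ * C₁ * (1 + C₁), by positivity, fun G H s hs hs1 h => ?_⟩
  obtain ⟨F, u, hFc, huc, hF, hFu, hbound⟩ := hroot G H s hs hs1 h
  have hsub : ball (0 : ℂ) (1 / 2) ⊆ ball 0 1 := ball_subset_ball (by norm_num)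
  have hint : IntegrableOn (fun z => ‖F z - u z‖) (ball 0 1) :=
    ((hFc.sub huc).norm.continuousOn.integrableOn_compact (isCompact_closedBall 0 1)).mono_set
      ball_subset_closedBall
  have hL1 : ∫ z in ball 0 (1 / 2), ‖F z - u z‖ ≤ C₁ * s :=
    (setIntegral_mono_set hint (ae_of_all _ fun z => norm_nonneg _) hsub.eventuallyLE).trans hFu
  have hle : ∀ P : ℂ → ℂ, DifferentiableOn ℂ P (ball 0 1) →
      (∀ z ∈ ball (0 : ℂ) (1 / 2), ‖P z‖ ≤ C₁ * (s + ‖F z - u z‖)) →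
      ∀ z ∈ closedBall (0 : ℂ) (1 / 4), ‖P z‖ ≤ (C₁ + C₂ * C₁ * (1 + C₁)) * s :=
    fun P hP hPle z hz =>
    calc ‖P z‖ ≤ C₂ * C₁ * (s + ∫ z in ball 0 (1 / 2), ‖F z - u z‖) :=
          hsup P _ C₁ s hC₁ hs.le (hFc.sub huc).norm (fun _ => norm_nonneg _) (hP.mono hsub) hPle z
            (by norm_num at hz ⊢; exact hz)
      _ ≤ C₂ * C₁ * (s + C₁ * s) := by gcongr
      _ ≤ (C₁ + C₂ * C₁ * (1 + C₁)) * s := by linarith [mul_nonneg hC₁ hs.le]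
  refine ⟨F, hF, fun z hz => ⟨?_, ?_, ?_⟩⟩
  · exact (hbound z (closedBall_subset_closedBall (by norm_num) hz)).1.trans
      (le_add_of_nonneg_right (by positivity))
  · exact hle (fun z => F z ^ j - G z) ((hF.pow j).sub h.differentiable_left.differentiableOn)
      (fun z hz => (hbound z (ball_subset_closedBall hz)).2.1) z hz
  · exact hle (fun z => F z * G z - H z) ((hF.mul h.differentiable_left.differentiableOn).sub
      h.differentiable_right.differentiableOn)
      (fun z hz => (hbound z (ball_subset_closedBall hz)).2.2) z hz

end HolomorphicRoot

section SingleScale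

/-- `g` has on the real interval of radius `R` about `c` an approximation within `δ` by an entire
function bounded by `K` on the corresponding disc. -/
def HasEntireApprox (g : ℝ → ℂ) (c R K δ : ℝ) : Prop :=
  ∃ G : ℂ → ℂ, Differentiable ℂ G ∧ (∀ z ∈ closedBall (c : ℂ) R, ‖G z‖ ≤ K) ∧
    ∀ x : ℝ, |x - c| ≤ R → ‖G x - g x‖ ≤ δ

/-- `F` is holomorphic on the disc of radius `R` about `c`, bounded there by `K`, and within `δ` of
`g` on the real diameter of that disc. -/
structure IsHolomorphicApprox (F : ℂ → ℂ) (g : ℝ → ℂ) (c R K δ : ℝ) : Prop where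
  diffContOnCl : DiffContOnCl ℂ F (ball c R)
  norm_le : ∀ z ∈ closedBall (c : ℂ) R, ‖F z‖ ≤ K
  norm_sub_le : ∀ x : ℝ, |x - c| ≤ R → ‖F x - g x‖ ≤ δ

/-- As `HasEntireApprox`, but with an approximant that is only holomorphic on the disc. -/
def HasHolomorphicApprox (g : ℝ → ℂ) (c R K δ : ℝ) : Prop :=
  ∃ F : ℂ → ℂ, IsHolomorphicApprox F g c R K δ

/-- The exponent lost in passing from approximations of `f ^ j` and `f ^ (j + 1)` to one of `f`:
errors `exp (-L)` for the powers become `exp (-(rootRate j * L))`. -/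
def rootRate (j : ℕ) : ℝ := (4 * j * (j + 1) ^ 2)⁻¹

variable {f g : ℝ → ℂ} {c R K δ L ρ : ℝ} {j : ℕ}

theorem rootRate_pos (hj : 1 ≤ j) : 0 < rootRate j := by
  have : 0 < j := hj
  rw [rootRate]
  positivity

theorem ofReal_add_mul_mem_closedBall_iff (hρ : 0 < ρ) {z : ℂ} :
    (c + ρ * z : ℂ) ∈ closedBall (c : ℂ) (ρ * R) ↔ z ∈ closedBall (0 : ℂ) R := by
  rw [mem_closedBall_iff_norm, add_sub_cancel_left, norm_mul, Complex.norm_of_nonneg hρ.le,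
    mul_le_mul_iff_right₀ hρ, mem_closedBall_zero_iff]

theorem HasEntireApprox.norm_le (h : HasEntireApprox g c R K δ) {x : ℝ} (hx : |x - c| ≤ R) :
    ‖g x‖ ≤ K + δ := by
  obtain ⟨G, -, hGK, hGg⟩ := h
  have hGx : ‖G x‖ ≤ K :=
    hGK x (by rwa [mem_closedBall_iff_norm, ← ofReal_sub, norm_real, Real.norm_eq_abs])
  linarith [norm_sub_norm_le (g x) (G x), norm_sub_rev (g x) (G x), hGg x hx]

theorem HasEntireApprox.comp_affine (hρ : 0 < ρ) (h : HasEntireApprox g c (ρ * R) K δ) :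
    HasEntireApprox (fun x => g (c + ρ * x)) 0 R K δ := by
  obtain ⟨G, hG, hGK, hGg⟩ := h
  refine ⟨fun z => G (c + ρ * z), by fun_prop, fun z hz => hGK _ ?_, fun x hx => ?_⟩
  · rw [ofReal_zero] at hz
    exact (ofReal_add_mul_mem_closedBall_iff hρ).2 hz
  · have := hGg (c + ρ * x) (by
      rw [add_sub_cancel_left, abs_mul, abs_of_pos hρ]
      gcongr
      simpa using hx)
    simpa using this

theorem HasHolomorphicApprox.of_comp_affine (hρ : 0 < ρ)
    (h : HasHolomorphicApprox (fun x => g (c + ρ * x)) 0 R K δ) :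
    HasHolomorphicApprox g c (ρ * R) K δ := by
  obtain ⟨F, hF, hFK, hFg⟩ := h
  have hρ' : (ρ : ℂ) ≠ 0 := ofReal_ne_zero.2 hρ.ne'
  have hinv : ∀ z : ℂ, (c + ρ * ((z - c) / ρ) : ℂ) = z := fun z => by field_simp; ring
  rw [ofReal_zero] at hF hFK
  refine ⟨fun z => F ((z - c) / ρ), ?_, fun z hz => hFK _ ?_, fun x hx => ?_⟩
  · refine hF.comp (by fun_prop : Differentiable ℂ fun z : ℂ => (z - c) / ρ).diffContOnCl ?_
    intro z hz
    rw [mem_ball_zero_iff, norm_div, Complex.norm_of_nonneg hρ.le, div_lt_iff₀ hρ, mul_comm]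
    exact mem_ball_iff_norm.1 hz
  · rwa [← ofReal_add_mul_mem_closedBall_iff hρ, hinv]
  · have := hFg ((x - c) / ρ) (by
      rw [sub_zero, abs_div, abs_of_pos hρ, div_le_iff₀ hρ, mul_comm]
      exact hx)
    simpa only [mul_div_cancel₀ _ hρ.ne', add_sub_cancel, ofReal_div, ofReal_sub] using this

theorem norm_sub_pow_succ_le {a b : ℂ} (hj : 1 ≤ j) (hpow : ‖a ^ j - b ^ j‖ ≤ δ)
    (hmul : ‖b‖ ^ j * ‖a - b‖ ≤ δ) : ‖a - b‖ ^ (j + 1) ≤ 3 ^ j * (1 + ‖a - b‖) * δ := by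
  have hδ : 0 ≤ δ := (norm_nonneg _).trans hpow
  set d := ‖a - b‖
  have hd0 : 0 ≤ d := norm_nonneg _
  rcases le_or_gt (d / 3) ‖b‖ with hb | hb
  · calc d ^ (j + 1) = 3 ^ j * ((d / 3) ^ j * d) := by rw [div_pow]; field_simp; ring
      _ ≤ 3 ^ j * (‖b‖ ^ j * d) := by gcongr
      _ ≤ 3 ^ j * (1 + d) * δ := by
        rw [mul_assoc]
        refine mul_le_mul_of_nonneg_left ?_ (by positivity)
        exact hmul.trans (le_mul_of_one_le_left hδ (le_add_of_nonneg_right hd0))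
  · have ha : 2 * (d / 3) ≤ ‖a‖ := by linarith [norm_sub_le a b]
    have hd3 : (d / 3) ^ j ≤ δ := by
      have htwo : (2 : ℝ) ≤ 2 ^ j := le_self_pow₀ one_le_two (by omega)
      have hapow : 2 ^ j * (d / 3) ^ j ≤ ‖a‖ ^ j := by rw [← mul_pow]; gcongr
      have hbpow : ‖b‖ ^ j ≤ (d / 3) ^ j := by gcongr
      have hsub := (norm_sub_norm_le (a ^ j) (b ^ j)).trans hpow
      rw [norm_pow, norm_pow] at hsub
      nlinarith [pow_nonneg (div_nonneg hd0 zero_le_three) j]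
    calc d ^ (j + 1) = 3 ^ j * d * (d / 3) ^ j := by rw [div_pow]; field_simp; ring
      _ ≤ 3 ^ j * (1 + d) * δ := by gcongr; linarith

theorem norm_sub_pow_succ_le_mul {a F G H : ℂ} {C s : ℝ} (hj : 1 ≤ j) (hK : 1 ≤ K) (hs : 0 ≤ s)
    (hF : ‖F‖ ≤ C) (ha : ‖a ^ j‖ ≤ K) (hFG : ‖F ^ j - G‖ ≤ C * s) (hFGH : ‖F * G - H‖ ≤ C * s)
    (hG : ‖G - a ^ j‖ ≤ K * s) (hH : ‖H - a ^ (j + 1)‖ ≤ K * s) :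
    ‖F - a‖ ^ (j + 1) ≤ 3 ^ j * (1 + C + K) * (C * K + C + K) * s := by
  have hC : 0 ≤ C := (norm_nonneg F).trans hF
  have hCK : 0 ≤ C * K := by positivity
  have hpow : ‖F ^ j - a ^ j‖ ≤ (C * K + C + K) * s :=
    calc ‖F ^ j - a ^ j‖ ≤ C * s + K * s :=
          (norm_sub_le_norm_sub_add_norm_sub _ G _).trans (add_le_add hFG hG)
      _ ≤ (C * K + C + K) * s := by nlinarith
  have hmul : ‖a‖ ^ j * ‖F - a‖ ≤ (C * K + C + K) * s :=
    calc ‖a‖ ^ j * ‖F - a‖ = ‖(F * G - H) + (H - a ^ (j + 1)) - F * (G - a ^ j)‖ := by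
          rw [← norm_pow, ← norm_mul]
          ring_nf
      _ ≤ C * s + K * s + C * (K * s) := by
          refine (norm_sub_le _ _).trans (add_le_add ((norm_add_le _ _).trans (by gcongr)) ?_)
          rw [norm_mul]
          gcongr
      _ = (C * K + C + K) * s := by ring
  have hsub : ‖F - a‖ ≤ C + K :=
    (norm_sub_le _ _).trans (add_le_add hF (norm_le_of_norm_pow_le hj hK ha))
  calc ‖F - a‖ ^ (j + 1) ≤ 3 ^ j * (1 + ‖F - a‖) * ((C * K + C + K) * s) :=
        norm_sub_pow_succ_le hj hpow hmul
    _ ≤ 3 ^ j * (1 + (C + K)) * ((C * K + C + K) * s) := by gcongr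
    _ = _ := by ring

theorem norm_pow_succ_sub_pow_le {a G H : ℂ} (hj : 1 ≤ j) (hK : 1 ≤ K) (hδ : δ ≤ 1) (hG : ‖G‖ ≤ K)
    (hH : ‖H‖ ≤ K) (hGa : ‖G - a ^ j‖ ≤ K * δ) (hHa : ‖H - a ^ (j + 1)‖ ≤ K * δ) :
    ‖G ^ (j + 1) - H ^ j‖ ≤ (2 * j + 1) * (2 * K) ^ (j + 1) * δ := by
  have hδ0 : 0 ≤ δ := nonneg_of_mul_nonneg_right ((norm_nonneg _).trans hGa) (by positivity)
  have hle : ∀ {b c : ℂ}, ‖b‖ ≤ K → ‖b - c‖ ≤ K * δ → ‖c‖ ≤ 2 * K := fun {b c} hb hbc => by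
    linarith [norm_sub_norm_le c b, norm_sub_rev b c, mul_le_of_le_one_right (by positivity) hδ]
  calc ‖G ^ (j + 1) - H ^ j‖
      = ‖(G ^ (j + 1) - (a ^ j) ^ (j + 1)) - (H ^ j - (a ^ (j + 1)) ^ j)‖ := by ring_nf
    _ ≤ (j + 1 : ℕ) * (2 * K) ^ (j + 1 - 1) * (K * δ) + j * (2 * K) ^ (j - 1) * (K * δ) := by
        refine (norm_sub_le _ _).trans (add_le_add ?_ ?_)
        · exact (norm_pow_sub_pow_le (by linarith) (hle hG hGa) _).trans (by gcongr)
        · exact (norm_pow_sub_pow_le (by linarith) (hle hH hHa) _).trans (by gcongr)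
    _ ≤ (j + 1 : ℕ) * (2 * K) ^ j * (2 * K * δ) + j * (2 * K) ^ j * (2 * K * δ) := by
        gcongr
        all_goals first | linarith | omega
    _ = _ := by push_cast; ring

theorem pow_succ_add_pow_le (hj : 1 ≤ j) (hK : 1 ≤ K) :
    K ^ (j + 1) + K ^ j ≤ (2 * j + 1) * (2 * K) ^ (j + 1) := by
  have hj' : (1 : ℝ) ≤ j := by exact_mod_cast hj
  calc K ^ (j + 1) + K ^ j ≤ K ^ (j + 1) + K ^ (j + 1) := by gcongr; omega
    _ = 2 * K ^ (j + 1) := (two_mul _).symm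
    _ ≤ (2 * j + 1) * (2 * K) ^ (j + 1) := by gcongr <;> linarith

theorem norm_pow_succ_sub_pow_le_mul_exp_neg_half {G H : ℂ → ℂ} (hj : 1 ≤ j) (hK : 1 ≤ K)
    (hL : 0 ≤ L) (hG : Differentiable ℂ G) (hH : Differentiable ℂ H)
    (hGK : ∀ z ∈ closedBall (0 : ℂ) 8, ‖G z‖ ≤ K) (hHK : ∀ z ∈ closedBall (0 : ℂ) 8, ‖H z‖ ≤ K)
    (hGf : ∀ x : ℝ, |x| ≤ 8 → ‖G x - f x ^ j‖ ≤ K * Real.exp (-L))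
    (hHf : ∀ x : ℝ, |x| ≤ 8 → ‖H x - f x ^ (j + 1)‖ ≤ K * Real.exp (-L)) {z : ℂ}
    (hz : z ∈ closedBall (0 : ℂ) 2) :
    ‖G z ^ (j + 1) - H z ^ j‖ ≤ (2 * j + 1) * (2 * K) ^ (j + 1) * Real.exp (-L / 2) := by
  rw [← ofReal_zero] at hGK hHK hz
  refine norm_le_mul_exp_neg_half_of_norm_le_on_real (P := fun z => G z ^ (j + 1) - H z ^ j)
    (c := 0) (R := 8) (by norm_num) hL ((hG.pow _).sub (hH.pow _)).diffContOnCl (fun w hw => ?_)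
    (fun x hx => ?_) (by norm_num; simpa using hz)
  · refine (norm_sub_le _ _).trans (le_trans ?_ (pow_succ_add_pow_le hj hK))
    rw [norm_pow, norm_pow]
    exact add_le_add (pow_le_pow_left₀ (norm_nonneg _) (hGK w hw) _)
      (pow_le_pow_left₀ (norm_nonneg _) (hHK w hw) _)
  · have hx8 : (x : ℂ) ∈ closedBall ((0 : ℝ) : ℂ) 8 := by simpa using hx
    rw [sub_zero] at hx
    exact norm_pow_succ_sub_pow_le hj hK (Real.exp_le_one_iff.2 (by linarith)) (hGK _ hx8)
      (hHK _ hx8) (hGf x hx) (hHf x hx)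

theorem exp_neg_rootRate_mul_pow (hj : 1 ≤ j) (L : ℝ) :
    (Real.exp (-(rootRate j * L)) ^ (j + 1)) ^ (2 * j * (j + 1)) = Real.exp (-L / 2) := by
  have hj0 : (j : ℝ) ≠ 0 := by exact_mod_cast (by omega : j ≠ 0)
  have hj1 : (j + 1 : ℝ) ≠ 0 := by positivity
  rw [← pow_mul, ← Real.exp_nat_mul, rootRate]
  push_cast
  congr 1
  field_simp
  norm_num

theorem exp_neg_le_exp_neg_rootRate_mul_pow_succ (hj : 1 ≤ j) (hL : 0 ≤ L) :
    Real.exp (-L) ≤ Real.exp (-(rootRate j * L)) ^ (j + 1) := by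
  have hq : Real.exp (-(rootRate j * L)) ≤ 1 :=
    Real.exp_le_one_iff.2 (neg_nonpos.2 (mul_nonneg (rootRate_pos hj).le hL))
  calc Real.exp (-L) ≤ Real.exp (-L / 2) := by gcongr; linarith
    _ = (Real.exp (-(rootRate j * L)) ^ (j + 1)) ^ (2 * j * (j + 1)) :=
        (exp_neg_rootRate_mul_pow hj L).symm
    _ ≤ Real.exp (-(rootRate j * L)) ^ (j + 1) :=
        pow_le_of_le_one (by positivity) (pow_le_one₀ (by positivity) hq) (by positivity)

theorem hasHolomorphicApprox_zero {M : ℝ} (hf : ∀ x : ℝ, |x - c| ≤ R → ‖f x‖ ≤ M) (hM : 0 ≤ M) :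
    HasHolomorphicApprox f c R M M :=
  ⟨0, diffContOnCl_const, fun _ _ => by simpa using hM, fun x hx => by simpa using hf x hx⟩

theorem HasHolomorphicApprox.mono {K' δ' : ℝ} (h : HasHolomorphicApprox f c R K δ) (hK : K ≤ K')
    (hδ : δ ≤ δ') : HasHolomorphicApprox f c R K' δ' := by
  obtain ⟨F, hF, hFK, hFf⟩ := h
  exact ⟨F, hF, fun z hz => (hFK z hz).trans hK, fun x hx => (hFf x hx).trans hδ⟩

theorem isApproxPowerPair_of_approx_on_real {G H : ℂ → ℂ} (hj : 1 ≤ j) (hK : 1 ≤ K)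
    (hL : 0 ≤ L) (hG : Differentiable ℂ G) (hH : Differentiable ℂ H)
    (hGK : ∀ z ∈ closedBall (0 : ℂ) 8, ‖G z‖ ≤ K) (hHK : ∀ z ∈ closedBall (0 : ℂ) 8, ‖H z‖ ≤ K)
    (hGf : ∀ x : ℝ, |x| ≤ 8 → ‖G x - f x ^ j‖ ≤ K * Real.exp (-L))
    (hHf : ∀ x : ℝ, |x| ≤ 8 → ‖H x - f x ^ (j + 1)‖ ≤ K * Real.exp (-L)) {A : ℝ}
    (hA : A = (2 * j + 1) * (2 * K) ^ (j + 1)) (hA1 : 1 ≤ A) :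
    IsApproxPowerPair j K ((A * Real.exp (-(rootRate j * L)) ^ (j + 1)) ^ (2 * j)) G H where
  differentiable_left := hG
  differentiable_right := hH
  norm_left_le z hz := hGK z (closedBall_subset_closedBall (by norm_num) hz)
  norm_right_le z hz := hHK z (closedBall_subset_closedBall (by norm_num) hz)
  norm_pow_sub_pow_le z hz :=
    calc ‖G z ^ (j + 1) - H z ^ j‖
        ≤ A * (Real.exp (-(rootRate j * L)) ^ (j + 1)) ^ (2 * j * (j + 1)) := by
          rw [exp_neg_rootRate_mul_pow hj, hA]
          exact norm_pow_succ_sub_pow_le_mul_exp_neg_half hj hK hL hG hH hGK hHK hGf hHf hz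
      _ ≤ A ^ (2 * j * (j + 1)) * (Real.exp (-(rootRate j * L)) ^ (j + 1)) ^ (2 * j * (j + 1)) := by
          gcongr
          exact le_self_pow₀ hA1 (by positivity)
      _ = ((A * Real.exp (-(rootRate j * L)) ^ (j + 1)) ^ (2 * j)) ^ (j + 1) := by
          rw [← mul_pow, pow_mul]

theorem exists_diffContOnCl_norm_sub_pow_succ_le (hj : 1 ≤ j) (hK : 1 ≤ K) :
    ∃ C, 0 ≤ C ∧ ∀ (f : ℝ → ℂ) (G H : ℂ → ℂ) (s : ℝ), 0 < s → s ≤ 1 →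
      IsApproxPowerPair j K (s ^ (2 * j)) G H →
      (∀ x : ℝ, |x| ≤ 1 / 4 → ‖f x ^ j‖ ≤ K ∧ ‖G x - f x ^ j‖ ≤ K * s ∧
        ‖H x - f x ^ (j + 1)‖ ≤ K * s) →
      ∃ F : ℂ → ℂ, DiffContOnCl ℂ F (ball (0 : ℝ) (1 / 4)) ∧
        (∀ z ∈ closedBall ((0 : ℝ) : ℂ) (1 / 4), ‖F z‖ ≤ C) ∧
        ∀ x : ℝ, |x - 0| ≤ 1 / 4 → ‖F x - f x‖ ^ (j + 1) ≤ C * s := by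
  obtain ⟨C, hC, hroot⟩ := exists_differentiableOn_norm_pow_sub_le hj K
  set D := 3 ^ j * (1 + C + K) * (C * K + C + K)
  have hD0 : 0 ≤ D := by positivity
  refine ⟨C + D, by positivity, fun f G H s hs hs1 hpair hf => ?_⟩
  obtain ⟨F, hF, hFbound⟩ := hroot G H s hs hs1 hpair
  refine ⟨F, (hF.mono ?_).diffContOnCl, fun z hz => ?_, fun x hx => ?_⟩
  · exact closure_ball_subset_closedBall.trans (by
      rw [ofReal_zero]; exact closedBall_subset_ball (by norm_num))
  · linarith [(hFbound z (by simpa using hz)).1]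
  · obtain ⟨hFC, hFG, hFGH⟩ := hFbound x (by simpa using hx)
    obtain ⟨hfK, hGf, hHf⟩ := hf x (by simpa using hx)
    refine (norm_sub_pow_succ_le_mul hj hK hs.le hFC hfK hFG hFGH hGf hHf).trans ?_
    gcongr
    exact le_add_of_nonneg_left hC

theorem le_mul_of_pow_succ_le {d q A : ℝ} (hA : 0 ≤ A) (hq : 0 ≤ q)
    (h : d ^ (j + 1) ≤ A * q ^ (j + 1)) : d ≤ (1 + A) * q := by
  refine le_of_pow_le_pow_left₀ j.succ_ne_zero (by positivity) (h.trans ?_)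
  rw [mul_pow]
  gcongr
  exact (le_add_of_nonneg_left zero_le_one).trans (le_self_pow₀ (by linarith) j.succ_ne_zero)

theorem exists_hasHolomorphicApprox_of_pow_unit (hj : 1 ≤ j) (hK : 1 ≤ K) :
    ∃ K', 1 ≤ K' ∧ ∀ (f : ℝ → ℂ) (L : ℝ), 0 ≤ L →
      HasEntireApprox (fun x => f x ^ j) 0 8 K (K * Real.exp (-L)) →
      HasEntireApprox (fun x => f x ^ (j + 1)) 0 8 K (K * Real.exp (-L)) →
      HasHolomorphicApprox f 0 (1 / 4) K' (K' * Real.exp (-(rootRate j * L))) := by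
  have hK2 : 1 ≤ 2 * K := by linarith
  obtain ⟨C, hC, hroot⟩ := exists_diffContOnCl_norm_sub_pow_succ_le hj hK2
  set A : ℝ := (2 * j + 1) * (2 * K) ^ (j + 1) with hA
  have hA1 : 1 ≤ A := by
    linarith [pow_succ_add_pow_le hj hK, one_le_pow₀ hK (n := j + 1), one_le_pow₀ hK (n := j)]
  have hKA : 0 ≤ 2 * K * A := by positivity
  have hCA : C ≤ C * A := le_mul_of_one_le_right hC hA1
  refine ⟨1 + 2 * K * A + C * A, by linarith, ?_⟩
  intro f L hL hfG ⟨H, hH, hHK, hHf⟩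
  have hKL : K * Real.exp (-L) ≤ K :=
    mul_le_of_le_one_right (by positivity) (Real.exp_le_one_iff.2 (neg_nonpos.2 hL))
  have hf : ∀ x : ℝ, |x| ≤ 8 → ‖f x ^ j‖ ≤ 2 * K := fun x hx => by
    linarith [hfG.norm_le (x := x) (by simpa using hx)]
  obtain ⟨G, hG, hGK, hGf⟩ := hfG
  simp only [sub_zero, ofReal_zero] at hGK hHK hGf hHf
  have hpair := isApproxPowerPair_of_approx_on_real hj hK hL hG hH hGK hHK hGf hHf hA hA1
  set q := Real.exp (-(rootRate j * L))
  have hq1 : q ≤ 1 := Real.exp_le_one_iff.2 (by have := rootRate_pos hj; nlinarith)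
  have hδ : K * Real.exp (-L) ≤ 2 * K * (A * q ^ (j + 1)) := by
    gcongr
    · linarith
    · exact (exp_neg_le_exp_neg_rootRate_mul_pow_succ hj hL).trans
        (le_mul_of_one_le_left (by positivity) hA1)
  rcases le_or_gt (A * q ^ (j + 1)) 1 with hs1 | hs1
  · obtain ⟨F, hF, hFC, hFf⟩ := hroot f G H (A * q ^ (j + 1)) (by positivity) hs1
      (hpair.mono (by linarith)) fun x hx => have h8 : |x| ≤ 8 := by linarith
        ⟨hf x h8, (hGf x h8).trans hδ, (hHf x h8).trans hδ⟩
    refine ⟨F, hF, fun z hz => (hFC z hz).trans (by linarith), fun x hx => ?_⟩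
    exact (le_mul_of_pow_succ_le (by positivity) (by positivity)
      ((hFf x hx).trans_eq (mul_assoc _ _ _).symm)).trans (by gcongr; linarith)
  · refine (hasHolomorphicApprox_zero (M := 2 * K) (fun x hx => norm_le_of_norm_pow_le hj hK2
      (hf x (by rw [sub_zero] at hx; linarith))) (by linarith)).mono ?_ ?_
    · linarith [le_mul_of_one_le_right (by linarith : 0 ≤ 2 * K) hA1]
    · have hAq : 1 ≤ A * q := hs1.le.trans (by
        gcongr
        exact pow_le_of_le_one (by positivity) hq1 j.succ_ne_zero)
      calc 2 * K ≤ 2 * K * A * q := by nlinarith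
        _ ≤ (1 + 2 * K * A + C * A) * q := by gcongr; linarith

theorem exists_hasHolomorphicApprox_of_pow (hj : 1 ≤ j) (hK : 1 ≤ K) :
    ∃ K', 1 ≤ K' ∧ ∀ (f : ℝ → ℂ) (c R L : ℝ), 0 < R → 0 ≤ L →
      HasEntireApprox (fun x => f x ^ j) c R K (K * Real.exp (-L)) →
      HasEntireApprox (fun x => f x ^ (j + 1)) c R K (K * Real.exp (-L)) →
      HasHolomorphicApprox f c (R / 32) K' (K' * Real.exp (-(rootRate j * L))) := by
  obtain ⟨K', hK', hunit⟩ := exists_hasHolomorphicApprox_of_pow_unit hj hK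
  refine ⟨K', hK', fun f c R L hR hL hG hH => ?_⟩
  have hR8 : 0 < R / 8 := by positivity
  have hscale : R = R / 8 * 8 := by ring
  rw [hscale] at hG hH
  rw [show R / 32 = R / 8 * (1 / 4) by ring]
  exact .of_comp_affine hR8 (hunit _ L hL (hG.comp_affine hR8) (hH.comp_affine hR8))

end SingleScale

section MultiScale

variable {f : ℝ → ℂ} {I : Set ℝ} {η K : ℝ} {x y : ℝ} {L : ℕ → ℝ} {F : ℕ → ℝ → ℂ → ℂ} {i k : ℕ}

theorem analyticAt_of_diffContOnCl {G : ℂ → ℂ} {c w : ℂ} {r : ℝ} (hG : DiffContOnCl ℂ G (ball c r))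
    (hw : w ∈ ball c r) : AnalyticAt ℂ G w :=
  hG.differentiableOn.analyticAt (isOpen_ball.mem_nhds hw)

theorem IsHolomorphicApprox.norm_iteratedDeriv_sub_le {G H : ℂ → ℂ} {r L : ℝ} (hr : 0 < r)
    (hL : 0 ≤ L) (hG : IsHolomorphicApprox G f x r K (K * Real.exp (-L)))
    (hH : IsHolomorphicApprox H f y (r / 2) K (K * Real.exp (-L))) (hxy : |y - x| ≤ r / 2) {w : ℂ}
    (hw : w ∈ closedBall (y : ℂ) (r / 16)) (k : ℕ) :
    ‖iteratedDeriv k G w - iteratedDeriv k H w‖ ≤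
      k.factorial * (2 * K * Real.exp (-L / 2)) / (r / 16) ^ k := by
  have hyx : dist (y : ℂ) x ≤ r / 2 := by rwa [dist_eq_norm, ← ofReal_sub, norm_real]
  have hsub : ball (y : ℂ) (r / 2) ⊆ ball x r := ball_subset_ball' (by linarith)
  have hcsub : closedBall (y : ℂ) (r / 2) ⊆ closedBall x r :=
    closedBall_subset_closedBall' (by linarith)
  have hd : DiffContOnCl ℂ (G - H) (ball y (r / 2)) :=
    (hG.diffContOnCl.mono hsub).sub hH.diffContOnCl
  have hw8 : closedBall w (r / 16) ⊆ closedBall (y : ℂ) (r / 2 / 4) :=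
    closedBall_subset_closedBall' (by have := mem_closedBall.1 hw; linarith)
  have hsmall : ∀ v ∈ closedBall (y : ℂ) (r / 2 / 4), ‖(G - H) v‖ ≤ 2 * K * Real.exp (-L / 2) := by
    intro v hv
    refine norm_le_mul_exp_neg_half_of_norm_le_on_real (by linarith) hL hd (fun v hv => ?_)
      (fun t ht => ?_) hv
    · exact (_root_.norm_sub_le _ _).trans (by linarith [hG.norm_le v (hcsub hv), hH.norm_le v hv])
    · have htx : |t - x| ≤ r := by linarith [abs_sub_le t y x]
      calc ‖G t - H t‖ ≤ ‖G t - f t‖ + ‖H t - f t‖ := by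
            rw [norm_sub_rev (H t)]; exact norm_sub_le_norm_sub_add_norm_sub _ _ _
        _ ≤ 2 * K * Real.exp (-L) := by linarith [hG.norm_sub_le t htx, hH.norm_sub_le t ht]
  have hwy : w ∈ ball (y : ℂ) (r / 2) := closedBall_subset_ball (by linarith) hw
  rw [← iteratedDeriv_sub (analyticAt_of_diffContOnCl hG.diffContOnCl (hsub hwy)).contDiffAt
    (analyticAt_of_diffContOnCl hH.diffContOnCl hwy).contDiffAt]
  refine norm_iteratedDeriv_le_of_forall_mem_sphere_norm_le k (by linarith) (hd.mono ?_)
    fun v hv => hsmall v (hw8 (sphere_subset_closedBall hv))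
  exact ball_subset_ball' (by have := mem_closedBall.1 hw; linarith)

theorem norm_sub_sub_mul_le_mul_sq {g g' g'' : ℂ → ℂ} {a b : ℂ} {B : ℝ}
    (hg : ∀ w ∈ closedBall a ‖b - a‖, HasDerivAt g (g' w) w)
    (hg' : ∀ w ∈ closedBall a ‖b - a‖, HasDerivAt g' (g'' w) w)
    (hB : ∀ w ∈ closedBall a ‖b - a‖, ‖g'' w‖ ≤ B) :
    ‖g b - g a - (b - a) * g' a‖ ≤ B * ‖b - a‖ ^ 2 := by
  have ha : a ∈ closedBall a ‖b - a‖ := mem_closedBall_self (norm_nonneg _)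
  have hb : b ∈ closedBall a ‖b - a‖ := by rw [mem_closedBall_iff_norm]
  have hB0 : 0 ≤ B := (norm_nonneg _).trans (hB a ha)
  have hconv := convex_closedBall a ‖b - a‖
  have hlip : ∀ w ∈ closedBall a ‖b - a‖, ‖g' w - g' a‖ ≤ B * ‖b - a‖ := fun w hw =>
    (hconv.norm_image_sub_le_of_norm_hasDerivWithin_le (fun v hv => (hg' v hv).hasDerivWithinAt)
      hB ha hw).trans (by gcongr; exact mem_closedBall_iff_norm.1 hw)
  calc ‖g b - g a - (b - a) * g' a‖ = ‖(g b - b * g' a) - (g a - a * g' a)‖ := by ring_nf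
    _ ≤ B * ‖b - a‖ * ‖b - a‖ :=
      hconv.norm_image_sub_le_of_norm_hasDerivWithin_le (f' := fun w => g' w - g' a)
        (fun w hw => ((hg w hw).sub (hasDerivAt_mul_const (g' a))).hasDerivWithinAt) hlip ha hb
    _ = B * ‖b - a‖ ^ 2 := by ring

theorem contDiffOn_and_iteratedDerivWithin_eq {a : ℕ → ℝ → ℂ} (hI : IsOpen I)
    (hzero : ∀ x ∈ I, a 0 x = f x)
    (hderiv : ∀ k, ∀ x ∈ I, HasDerivAt (a k) (a (k + 1) x) x) :
    ContDiffOn ℝ (⊤ : ℕ∞) f I ∧ ∀ k, ∀ x ∈ I, iteratedDerivWithin k f I x = a k x := by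
  have heq : ∀ k, ∀ x ∈ I, iteratedDerivWithin k f I x = a k x := by
    intro k
    induction k with
    | zero => intro x hx; rw [iteratedDerivWithin_zero, hzero x hx]
    | succ k ih =>
      intro x hx
      rw [iteratedDerivWithin_succ, derivWithin_congr ih (ih x hx)]
      exact (hderiv k x hx).hasDerivWithinAt.derivWithin (hI.uniqueDiffOn x hx)
  refine ⟨contDiffOn_of_differentiableOn_deriv fun m _ => ?_, heq⟩
  exact DifferentiableOn.congr
    (fun x hx => (hderiv m x hx).differentiableAt.differentiableWithinAt) (heq m)

/-- Cauchy's bound for the difference of the `k`-th derivatives of two approximants at the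
neighbouring scales `η / 2 ^ i` and `η / 2 ^ (i + 1)`. -/
def derivError (η K : ℝ) (L : ℕ → ℝ) (k i : ℕ) : ℝ :=
  k.factorial * (2 * K * Real.exp (-L i / 2)) / (η / 2 ^ i / 16) ^ k

/-- Uniformly bounded holomorphic approximants `F i x` of `f` about each point `x` of `I` and at
each scale `η / 2 ^ i`. Summability of `derivError` says that the errors decay faster than every
power of the scale. -/
structure IsMultiscaleApprox (f : ℝ → ℂ) (I : Set ℝ) (η K : ℝ) (L : ℕ → ℝ)
    (F : ℕ → ℝ → ℂ → ℂ) : Prop where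
  scale_pos : 0 < η
  bound_nonneg : 0 ≤ K
  exponent_nonneg : ∀ i, 0 ≤ L i
  exponent_mono : Monotone L
  summable_derivError : ∀ k, Summable (derivError η K L k)
  approx : ∀ i, ∀ x ∈ I, IsHolomorphicApprox (F i x) f x (η / 2 ^ i) K (K * Real.exp (-L i))

/-- The resulting bound for the `k`-th derivative of `f`. -/
def multiscaleBound (η K : ℝ) (L : ℕ → ℝ) (k : ℕ) : ℝ :=
  k.factorial * K / (η / 16) ^ k + ∑' m, derivError η K L k m

theorem derivError_nonneg (hη : 0 < η) (hK : 0 ≤ K) (k i : ℕ) : 0 ≤ derivError η K L k i := by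
  unfold derivError
  positivity

theorem derivError_le_mul_derivError_succ (hη : 0 < η) (hK : 0 ≤ K) (k i : ℕ) :
    derivError η K L k i ≤ η / 2 ^ i * derivError η K L (k + 1) i := by
  have hr : 0 < η / 2 ^ i := by positivity
  have hk : (1 : ℝ) ≤ k + 1 := by linarith [(k.cast_nonneg : (0 : ℝ) ≤ k)]
  calc derivError η K L k i ≤ 16 * (k + 1) * derivError η K L k i :=
        le_mul_of_one_le_left (derivError_nonneg hη hK k i) (by linarith)
    _ = η / 2 ^ i * derivError η K L (k + 1) i := by
        unfold derivError
        generalize η / 2 ^ i = r at hr ⊢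
        rw [Nat.factorial_succ, pow_succ]
        push_cast
        field_simp

/-- The candidate for the `k`-th derivative of `f`. -/
def multiscaleDeriv (F : ℕ → ℝ → ℂ → ℂ) (k : ℕ) (x : ℝ) : ℂ :=
  limUnder atTop fun i => iteratedDeriv k (F i x) x

namespace IsMultiscaleApprox

theorem norm_iteratedDeriv_succ_sub_le (h : IsMultiscaleApprox f I η K L F) (hx : x ∈ I)
    (hy : y ∈ I) (hxy : |y - x| ≤ η / 2 ^ i / 2) {w : ℂ}
    (hw : w ∈ closedBall (y : ℂ) (η / 2 ^ i / 16)) (k : ℕ) :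
    ‖iteratedDeriv k (F i x) w - iteratedDeriv k (F (i + 1) y) w‖ ≤ derivError η K L k i := by
  have hr : 0 < η / 2 ^ i := div_pos h.scale_pos (by positivity)
  obtain ⟨hd, hle, hsub⟩ := h.approx (i + 1) y hy
  rw [show η / 2 ^ (i + 1) = η / 2 ^ i / 2 by rw [pow_succ, div_mul_eq_div_div]] at hd hle hsub
  refine (h.approx i x hx).norm_iteratedDeriv_sub_le hr (h.exponent_nonneg i)
    ⟨hd, hle, fun t ht => (hsub t ht).trans ?_⟩ hxy hw k
  have := h.bound_nonneg
  have := h.exponent_mono i.le_succ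
  gcongr

theorem norm_iteratedDeriv_zero_le (h : IsMultiscaleApprox f I η K L F) (hx : x ∈ I) {w : ℂ}
    (hw : w ∈ closedBall (x : ℂ) (η / 16)) (k : ℕ) :
    ‖iteratedDeriv k (F 0 x) w‖ ≤ k.factorial * K / (η / 16) ^ k := by
  have hη := h.scale_pos
  obtain ⟨hd, hle, -⟩ := h.approx 0 x hx
  rw [pow_zero, div_one] at hd hle
  have hdist := mem_closedBall.1 hw
  refine norm_iteratedDeriv_le_of_forall_mem_sphere_norm_le k (by linarith)
    (hd.mono (ball_subset_ball' (by linarith))) fun v hv => hle v ?_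
  exact closedBall_subset_closedBall' (by linarith) (sphere_subset_closedBall hv)

theorem norm_iteratedDeriv_le (h : IsMultiscaleApprox f I η K L F) (hx : x ∈ I) (i : ℕ) {w : ℂ}
    (hw : w ∈ closedBall (x : ℂ) (η / 2 ^ i / 16)) (k : ℕ) :
    ‖iteratedDeriv k (F i x) w‖ ≤ multiscaleBound η K L k := by
  have hη := h.scale_pos
  have hsum : ∀ n, (∀ m ≤ n, w ∈ closedBall (x : ℂ) (η / 2 ^ m / 16)) →
      ‖iteratedDeriv k (F n x) w‖ ≤
        k.factorial * K / (η / 16) ^ k + ∑ m ∈ Finset.range n, derivError η K L k m := by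
    intro n hn
    induction n with
    | zero => simpa using h.norm_iteratedDeriv_zero_le hx (by simpa using hn 0 le_rfl) k
    | succ n ih =>
      have hstep := h.norm_iteratedDeriv_succ_sub_le hx hx (by simpa using by positivity)
        (hn n n.le_succ) k
      rw [Finset.sum_range_succ]
      linarith [ih fun m hm => hn m (by omega), norm_sub_norm_le (iteratedDeriv k (F (n + 1) x) w)
        (iteratedDeriv k (F n x) w), norm_sub_rev (iteratedDeriv k (F (n + 1) x) w)
        (iteratedDeriv k (F n x) w)]
  refine (hsum i fun m hm => closedBall_subset_closedBall (by gcongr; norm_num) hw).trans ?_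
  rw [multiscaleBound]
  gcongr
  exact (h.summable_derivError k).sum_le_tsum _ fun m _ => derivError_nonneg hη h.bound_nonneg k m

theorem tendsto_iteratedDeriv (h : IsMultiscaleApprox f I η K L F) (hx : x ∈ I) (k : ℕ) :
    Tendsto (fun i => iteratedDeriv k (F i x) x) atTop (𝓝 (multiscaleDeriv F k x)) := by
  have hη := h.scale_pos
  refine CauchySeq.tendsto_limUnder <|
    cauchySeq_of_dist_le_of_summable _ (fun i => ?_) (h.summable_derivError k)
  rw [dist_eq_norm]
  exact h.norm_iteratedDeriv_succ_sub_le hx hx (by simpa using by positivity)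
    (mem_closedBall_self (by positivity)) k

theorem norm_iteratedDeriv_sub_multiscaleDeriv_le (h : IsMultiscaleApprox f I η K L F)
    (hx : x ∈ I) (hy : y ∈ I) (hxy : |y - x| ≤ η / 2 ^ i / 2) (k : ℕ) :
    ‖iteratedDeriv k (F i x) y - multiscaleDeriv F k y‖ ≤ ∑' m, derivError η K L k (i + m) := by
  have hη := h.scale_pos
  have hstep := h.norm_iteratedDeriv_succ_sub_le hx hy hxy (mem_closedBall_self (by positivity)) k
  have hlim := dist_le_tsum_of_dist_le_of_tendsto (derivError η K L k) (fun m => by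
    rw [dist_eq_norm]
    exact h.norm_iteratedDeriv_succ_sub_le hy hy (by simpa using by positivity)
      (mem_closedBall_self (by positivity)) k) (h.summable_derivError k)
    (h.tendsto_iteratedDeriv hy k) (i + 1)
  rw [dist_eq_norm] at hlim
  have hshift : Summable fun m => derivError η K L k (i + m) :=
    (h.summable_derivError k).comp_injective (add_right_injective i)
  rw [hshift.tsum_eq_zero_add]
  simp only [add_zero, add_comm _ 1, ← add_assoc] at hlim hstep ⊢
  exact (norm_sub_le_norm_sub_add_norm_sub _ _ _).trans (add_le_add hstep hlim)

theorem tsum_derivError_le_mul (h : IsMultiscaleApprox f I η K L F) (k i : ℕ) :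
    ∑' m, derivError η K L k (i + m) ≤ η / 2 ^ i * ∑' m, derivError η K L (k + 1) (i + m) := by
  have hη := h.scale_pos
  have hshift : ∀ k, Summable fun m => derivError η K L k (i + m) := fun k =>
    (h.summable_derivError k).comp_injective (add_right_injective i)
  rw [← tsum_mul_left]
  refine (hshift k).tsum_le_tsum (fun m => ?_) ((hshift (k + 1)).mul_left _)
  refine (derivError_le_mul_derivError_succ hη h.bound_nonneg k _).trans ?_
  gcongr
  · exact derivError_nonneg hη h.bound_nonneg _ _
  · norm_num
  · omega

theorem tsum_derivError_add_le (h : IsMultiscaleApprox f I η K L F) (k i : ℕ) :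
    ∑' m, derivError η K L k (i + m) ≤ multiscaleBound η K L k := by
  have hη := h.scale_pos
  have hK := h.bound_nonneg
  exact (tsum_comp_le_tsum_of_inj (h.summable_derivError k)
    (derivError_nonneg hη hK k) (add_right_injective i)).trans
    (le_add_of_nonneg_left (by positivity))

theorem tsum_derivError_succ_le_mul (h : IsMultiscaleApprox f I η K L F) (k i : ℕ) :
    ∑' m, derivError η K L (k + 1) (i + m) ≤ η / 2 ^ i * multiscaleBound η K L (k + 2) :=
  have hη := h.scale_pos
  (h.tsum_derivError_le_mul (k + 1) i).trans
    (mul_le_mul_of_nonneg_left (h.tsum_derivError_add_le (k + 2) i) (by positivity))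

theorem multiscaleDeriv_zero (h : IsMultiscaleApprox f I η K L F) (hx : x ∈ I) :
    multiscaleDeriv F 0 x = f x := by
  have hη := h.scale_pos
  refine tendsto_nhds_unique (h.tendsto_iteratedDeriv hx 0) ?_
  simp only [iteratedDeriv_zero]
  refine tendsto_iff_norm_sub_tendsto_zero.2 (squeeze_zero (fun _ => norm_nonneg _)
    (fun i => ?_) (h.summable_derivError 0).tendsto_atTop_zero)
  refine ((h.approx i x hx).norm_sub_le x (by simpa using by positivity)).trans ?_
  have hK := h.bound_nonneg
  have hL := h.exponent_nonneg i
  simp only [derivError, Nat.factorial_zero, Nat.cast_one, one_mul, pow_zero, div_one]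
  gcongr <;> linarith

theorem norm_multiscaleDeriv_le (h : IsMultiscaleApprox f I η K L F) (hx : x ∈ I) (k : ℕ) :
    ‖multiscaleDeriv F k x‖ ≤ multiscaleBound η K L k := by
  have hη := h.scale_pos
  exact le_of_tendsto (h.tendsto_iteratedDeriv hx k).norm (Eventually.of_forall fun i =>
    h.norm_iteratedDeriv_le hx i (mem_closedBall_self (by positivity)) k)

theorem hasDerivAt_iteratedDeriv (h : IsMultiscaleApprox f I η K L F) (hx : x ∈ I) {w : ℂ}
    (hw : w ∈ closedBall (x : ℂ) (η / 2 ^ i / 16)) (k : ℕ) :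
    HasDerivAt (iteratedDeriv k (F i x)) (iteratedDeriv (k + 1) (F i x) w) w := by
  have hη := h.scale_pos
  have hr : 0 < η / 2 ^ i := by positivity
  have han : AnalyticAt ℂ (F i x) w :=
    analyticAt_of_diffContOnCl (h.approx i x hx).diffContOnCl
      (closedBall_subset_ball (by linarith) hw)
  rw [iteratedDeriv_succ, iteratedDeriv_eq_iterate]
  exact (han.iterated_deriv k).differentiableAt.hasDerivAt

theorem tsum_derivError_le_mul_sq (h : IsMultiscaleApprox f I η K L F) (k i : ℕ) :
    ∑' m, derivError η K L k (i + m) ≤ (η / 2 ^ i) ^ 2 * multiscaleBound η K L (k + 2) := by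
  have hη := h.scale_pos
  have hr : 0 ≤ η / 2 ^ i := by positivity
  calc ∑' m, derivError η K L k (i + m) ≤ η / 2 ^ i * ∑' m, derivError η K L (k + 1) (i + m) :=
        h.tsum_derivError_le_mul k i
    _ ≤ η / 2 ^ i * (η / 2 ^ i * multiscaleBound η K L (k + 2)) :=
        mul_le_mul_of_nonneg_left (h.tsum_derivError_succ_le_mul k i) hr
    _ = _ := by ring

theorem norm_multiscaleDeriv_sub_sub_le (h : IsMultiscaleApprox f I η K L F) (hx : x ∈ I)
    (hy : y ∈ I) (hxy : |y - x| ≤ η / 2 ^ i / 16) (hle : η / 2 ^ i ≤ 32 * |y - x|) (k : ℕ) :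
    ‖multiscaleDeriv F k y - multiscaleDeriv F k x - (y - x) * multiscaleDeriv F (k + 1) x‖ ≤
      3000 * multiscaleBound η K L (k + 2) * |y - x| ^ 2 := by
  have hη := h.scale_pos
  have hr : 0 < η / 2 ^ i := by positivity
  set B := multiscaleBound η K L (k + 2)
  set P := fun n => iteratedDeriv n (F i x)
  have hB : 0 ≤ B := (norm_nonneg _).trans (h.norm_multiscaleDeriv_le hx (k + 2))
  have hnorm : ‖(y - x : ℂ)‖ = |y - x| := by rw [← ofReal_sub, norm_real, Real.norm_eq_abs]
  have hsub : closedBall (x : ℂ) ‖(y - x : ℂ)‖ ⊆ closedBall x (η / 2 ^ i / 16) :=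
    closedBall_subset_closedBall (hnorm.trans_le hxy)
  have htaylor : ‖P k y - P k x - (y - x) * P (k + 1) x‖ ≤ B * |y - x| ^ 2 := by
    rw [← hnorm]
    exact norm_sub_sub_mul_le_mul_sq (fun w hw => h.hasDerivAt_iteratedDeriv hx (hsub hw) k)
      (fun w hw => h.hasDerivAt_iteratedDeriv hx (hsub hw) (k + 1))
      (fun w hw => h.norm_iteratedDeriv_le hx i (hsub hw) (k + 2))
  have hself : |x - x| ≤ η / 2 ^ i / 2 := by simpa using by positivity
  have hk := h.tsum_derivError_le_mul_sq k i
  have hPy := (h.norm_iteratedDeriv_sub_multiscaleDeriv_le hx hy (by linarith) k).trans hk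
  have hPx := (h.norm_iteratedDeriv_sub_multiscaleDeriv_le hx hx hself k).trans hk
  have hPx' := (h.norm_iteratedDeriv_sub_multiscaleDeriv_le hx hx hself (k + 1)).trans
    (h.tsum_derivError_succ_le_mul k i)
  calc _ = ‖(P k y - P k x - (y - x) * P (k + 1) x) - (P k y - multiscaleDeriv F k y)
          + (P k x - multiscaleDeriv F k x)
          + (y - x) * (P (k + 1) x - multiscaleDeriv F (k + 1) x)‖ := by ring_nf
    _ ≤ B * |y - x| ^ 2 + (η / 2 ^ i) ^ 2 * B + (η / 2 ^ i) ^ 2 * B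
          + |y - x| * (η / 2 ^ i * B) := by
        refine norm_add_le_of_le (norm_add_le_of_le (norm_sub_le_of_le htaylor hPy) hPx) ?_
        rw [norm_mul, hnorm]
        gcongr
    _ ≤ B * |y - x| ^ 2 + (32 * |y - x|) ^ 2 * B + (32 * |y - x|) ^ 2 * B
          + |y - x| * (32 * |y - x| * B) := by gcongr
    _ ≤ 3000 * B * |y - x| ^ 2 := by nlinarith [mul_nonneg hB (sq_nonneg |y - x|)]

theorem hasDerivAt_multiscaleDeriv (h : IsMultiscaleApprox f I η K L F) (hI : IsOpen I)
    (hx : x ∈ I) (k : ℕ) :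
    HasDerivAt (multiscaleDeriv F k) (multiscaleDeriv F (k + 1) x) x := by
  have hη := h.scale_pos
  have hbig : (fun y => multiscaleDeriv F k y - multiscaleDeriv F k x
      - (y - x) * multiscaleDeriv F (k + 1) x) =O[𝓝 x] fun y => ‖y - x‖ ^ 2 := by
    refine IsBigO.of_bound (3000 * multiscaleBound η K L (k + 2)) ?_
    filter_upwards [hI.mem_nhds hx, closedBall_mem_nhds x (show 0 < η / 16 by positivity)]
      with y hy hyx
    rcases eq_or_ne y x with rfl | hne
    · simp
    have hd : 0 < |y - x| := abs_pos.2 (sub_ne_zero.2 hne)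
    rw [mem_closedBall, Real.dist_eq] at hyx
    obtain ⟨i, hlt, hle⟩ := exists_nat_pow_near_of_lt_one (x := 16 * |y - x| / η) (y := 1 / 2)
      (by positivity) (by rw [div_le_one hη]; linarith) (by norm_num) (by norm_num)
    rw [one_div, inv_pow, pow_succ, mul_inv, lt_div_iff₀ hη] at hlt
    rw [one_div, inv_pow, div_le_iff₀ hη] at hle
    rw [norm_pow, norm_norm, Real.norm_eq_abs]
    refine h.norm_multiscaleDeriv_sub_sub_le (i := i) hx hy ?_ ?_ k <;> rw [div_eq_mul_inv η]
      <;> linarith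
  have hrem := (hbig.hasFDerivAt one_lt_two).hasDerivAt
  have hlin := ((hasDerivAt_id x).ofReal_comp.sub_const (x : ℂ)).mul_const
    (multiscaleDeriv F (k + 1) x)
  simpa using (hrem.add hlin).add_const (multiscaleDeriv F k x)

end IsMultiscaleApprox

theorem contDiffOn_and_norm_iteratedDerivWithin_le (hI : IsOpen I) (hη : 0 < η) (hK : 0 ≤ K)
    (hL : ∀ i, 0 ≤ L i) (hmono : Monotone L) (hsum : ∀ k, Summable (derivError η K L k))
    (h : ∀ i, ∀ x ∈ I, HasHolomorphicApprox f x (η / 2 ^ i) K (K * Real.exp (-L i))) :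
    ContDiffOn ℝ (⊤ : ℕ∞) f I ∧
      ∀ k, ∀ x ∈ I, ‖iteratedDerivWithin k f I x‖ ≤ multiscaleBound η K L k := by
  choose! F hF using h
  have happrox : IsMultiscaleApprox f I η K L F := ⟨hη, hK, hL, hmono, hsum, hF⟩
  obtain ⟨hsmooth, hderiv⟩ := contDiffOn_and_iteratedDerivWithin_eq hI
    (fun x hx => happrox.multiscaleDeriv_zero hx)
    (fun k x hx => happrox.hasDerivAt_multiscaleDeriv hI hx k)
  exact ⟨hsmooth, fun k x hx => (hderiv k x hx).symm ▸ happrox.norm_multiscaleDeriv_le hx k⟩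

end MultiScale

section Weights

/-- The weight sequence `M k = exp (φ*_w k) = sup_{T ≥ 1} T ^ k * exp (-w T)` of a weight function
`w`. -/
def weightSeq (w : ℝ → ℝ) (k : ℕ) : ℝ := Real.exp (phiStar w k)

/-- The conjugate `w⋆ ε = sup_{t ≥ 0} (w t - ε * t)` of a weight function `w`, which measures the
accuracy of the optimally truncated Taylor polynomials on discs of radius comparable to `ε`. -/
def weightStar (w : ℝ → ℝ) (ε : ℝ) : ℝ := sSup ((fun t => w t - ε * t) '' Ici 0)

/-- The supremum defining `w⋆ ε` is attained at `t`; equivalently, a line of slope `ε` touches the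
graph of `w` from above at `t`. -/
structure IsContactPoint (w : ℝ → ℝ) (ε t : ℝ) : Prop where
  nonneg : 0 ≤ t
  sub_mul_le : ∀ T, 0 ≤ T → w T - ε * T ≤ w t - ε * t

variable {w : ℝ → ℝ} {ε t T κ A : ℝ} {k n : ℕ}

theorem weightSeq_pos (w : ℝ → ℝ) (k : ℕ) : 0 < weightSeq w k := Real.exp_pos _

theorem weightSeq_le {B : ℝ} (h : ∀ T, 1 ≤ T → T ^ k * Real.exp (-w T) ≤ B) :
    weightSeq w k ≤ B := by
  have hB : 0 < B := lt_of_lt_of_le (by positivity) (h 1 le_rfl)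
  rw [weightSeq, ← Real.le_log_iff_exp_le hB]
  refine csSup_le (nonempty_Ici.image _) ?_
  rintro _ ⟨s, hs, rfl⟩
  simp only [Real.le_log_iff_exp_le hB, sub_eq_add_neg, Real.exp_add, Real.exp_nat_mul]
  exact h _ (Real.one_le_exp hs)

namespace IsWeightFunction

theorem continuousOn (hw : IsWeightFunction w) : ContinuousOn w (Ici 0) := hw.1

theorem monotoneOn (hw : IsWeightFunction w) : MonotoneOn w (Ici 0) := hw.2.1

theorem nonneg (hw : IsWeightFunction w) (ht : 0 ≤ t) : 0 ≤ w t := hw.2.2.1 t ht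

theorem convexOn_comp_exp (hw : IsWeightFunction w) :
    ConvexOn ℝ (Ici 0) fun s => w (Real.exp s) := hw.2.2.2.2.2.2

theorem exists_le_mul_add (hw : IsWeightFunction w) {δ : ℝ} (hδ : 0 < δ) :
    ∃ B, ∀ T, 0 ≤ T → w T ≤ δ * T + B := by
  obtain ⟨a, ha⟩ := eventually_atTop.1 (hw.2.2.2.2.1.bound hδ)
  refine ⟨w (max a 0), fun T hT => ?_⟩
  have hδT : 0 ≤ δ * T := by positivity
  rcases le_total T (max a 0) with h | h
  · linarith [hw.monotoneOn hT (le_max_right a 0) h]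
  · have hle := (le_abs_self _).trans (ha T ((le_max_left a 0).trans h))
    rw [Real.norm_of_nonneg hT] at hle
    linarith [hw.nonneg (le_max_right a 0)]

theorem exists_mul_log_le_add (hw : IsWeightFunction w) (hA : 0 < A) :
    ∃ B, ∀ T, 1 ≤ T → A * Real.log T ≤ w T + B := by
  obtain ⟨a, ha⟩ := eventually_atTop.1 (hw.2.2.2.2.2.1.bound (inv_pos.2 hA))
  refine ⟨A * Real.log (max a 1), fun T hT => ?_⟩
  have hw0 : 0 ≤ w T := hw.nonneg (zero_le_one.trans hT)
  rcases le_total T (max a 1) with h | h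
  · have : A * Real.log T ≤ A * Real.log (max a 1) := by gcongr
    linarith
  · have hle := (le_abs_self _).trans (ha T ((le_max_left a 1).trans h))
    rw [Real.norm_of_nonneg hw0, ← div_eq_inv_mul, le_div_iff₀' hA] at hle
    have : 0 ≤ A * Real.log (max a 1) :=
      mul_nonneg hA.le (Real.log_nonneg (le_max_right _ _))
    linarith

theorem const_mul (hw : IsWeightFunction w) {c : ℝ} (hc : 0 < c) :
    IsWeightFunction fun t => c * w t := by
  obtain ⟨hcont, hmono, hnonneg, hdouble, hid, hlog, hconv⟩ := hw
  exact ⟨hcont.const_mul c, fun s hs t ht hst => mul_le_mul_of_nonneg_left (hmono hs ht hst) hc.le,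
    fun t ht => mul_nonneg hc.le (hnonneg t ht),
    (hdouble.const_mul_left c).const_mul_right hc.ne', hid.const_mul_left c,
    hlog.const_mul_right hc.ne', by simpa using hconv.smul hc.le⟩

theorem pow_mul_exp_neg_le_weightSeq (hw : IsWeightFunction w) (k : ℕ) (hT : 1 ≤ T) :
    T ^ k * Real.exp (-w T) ≤ weightSeq w k := by
  have hlogT : 0 ≤ Real.log T := Real.log_nonneg hT
  obtain ⟨B, hB⟩ := hw.exists_mul_log_le_add (A := k + 1) (by positivity)
  have hbdd : BddAbove ((fun s => k * s - w (Real.exp s)) '' Ici 0) := by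
    refine ⟨B, ?_⟩
    rintro _ ⟨s, hs : 0 ≤ s, rfl⟩
    have := hB _ (Real.one_le_exp hs)
    rw [Real.log_exp] at this
    change k * s - w (Real.exp s) ≤ B
    linarith
  have hexp : Real.exp (Real.log T) = T := Real.exp_log (by linarith)
  have := Real.exp_le_exp.2 (le_csSup hbdd (mem_image_of_mem _ hlogT))
  rwa [sub_eq_add_neg, Real.exp_add, Real.exp_nat_mul, hexp] at this

theorem pow_mul_weightSeq_le (hw : IsWeightFunction w) (hconc : ConcaveOn ℝ (Ici 0) w)
    (hA : 1 ≤ A) (k : ℕ) : A ^ k * weightSeq w k ≤ weightSeq (fun t => A⁻¹ * w t) k := by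
  have hA0 : 0 < A := by linarith
  rw [← le_div_iff₀' (by positivity)]
  refine weightSeq_le fun T hT => ?_
  have hsub : A⁻¹ * w (A * T) ≤ w T := by
    have := hconc.2 (show A * T ∈ Ici 0 from (by positivity : 0 ≤ A * T)) self_mem_Ici
      (inv_nonneg.2 hA0.le) (sub_nonneg.2 (inv_le_one_of_one_le₀ hA)) (add_sub_cancel _ _)
    simp only [smul_eq_mul, mul_zero, add_zero, inv_mul_cancel_left₀ hA0.ne'] at this
    have hnn := mul_nonneg (sub_nonneg.2 (inv_le_one_of_one_le₀ hA)) (hw.nonneg le_rfl)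
    linarith
  rw [le_div_iff₀' (by positivity), ← mul_assoc, ← mul_pow]
  calc (A * T) ^ k * Real.exp (-w T) ≤ (A * T) ^ k * Real.exp (-(A⁻¹ * w (A * T))) := by gcongr
    _ ≤ _ := (hw.const_mul (inv_pos.2 hA0)).pow_mul_exp_neg_le_weightSeq k
      (one_le_mul_of_one_le_of_one_le hA hT)

theorem exists_isContactPoint (hw : IsWeightFunction w) (hε : 0 < ε) :
    ∃ t, IsContactPoint w ε t := by
  obtain ⟨B, hB⟩ := hw.exists_le_mul_add (half_pos hε)
  set X := max 0 (2 * (B - w 0) / ε)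
  have hX0 : 0 ≤ X := le_max_left _ _
  obtain ⟨t, ht, hmax⟩ := isCompact_Icc.exists_isMaxOn (nonempty_Icc.2 hX0)
    (f := fun T => w T - ε * T)
    ((hw.continuousOn.mono Icc_subset_Ici_self).sub (by fun_prop))
  have hmax' : ∀ T ∈ Icc 0 X, w T - ε * T ≤ w t - ε * t := fun T hT => hmax hT
  refine ⟨t, ht.1, fun T hT => ?_⟩
  rcases le_total T X with hTX | hXT
  · exact hmax' T ⟨hT, hTX⟩
  · have h0 := hmax' 0 ⟨le_rfl, hX0⟩
    have hT' : 2 * (B - w 0) / ε ≤ T := (le_max_right _ _).trans hXT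
    rw [div_le_iff₀ hε] at hT'
    linarith [hB T hT]

end IsWeightFunction

theorem IsContactPoint.weightStar_eq (h : IsContactPoint w ε t) :
    weightStar w ε = w t - ε * t :=
  IsGreatest.csSup_eq ⟨⟨t, h.nonneg, rfl⟩, by rintro _ ⟨T, hT, rfl⟩; exact h.sub_mul_le T hT⟩

namespace IsWeightFunction

theorem sub_mul_le_weightStar (hw : IsWeightFunction w) (hε : 0 < ε) (hT : 0 ≤ T) :
    w T - ε * T ≤ weightStar w ε := by
  obtain ⟨t, ht⟩ := hw.exists_isContactPoint hε
  exact ht.weightStar_eq ▸ ht.sub_mul_le T hT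

theorem weightStar_nonneg (hw : IsWeightFunction w) (hε : 0 < ε) : 0 ≤ weightStar w ε :=
  (hw.nonneg le_rfl).trans (by simpa using hw.sub_mul_le_weightStar hε le_rfl)

theorem weightStar_antitoneOn (hw : IsWeightFunction w) : AntitoneOn (weightStar w) (Ioi 0) := by
  intro ε (hε : 0 < ε) ε' hε' hle
  obtain ⟨t, ht⟩ := hw.exists_isContactPoint (show 0 < ε' from hε')
  rw [ht.weightStar_eq]
  have := hw.sub_mul_le_weightStar hε ht.nonneg
  linarith [mul_le_mul_of_nonneg_right hle ht.nonneg]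

theorem summable_exp_neg_weightStar (hw : IsWeightFunction w) (hε : 0 < ε) (hκ : 0 < κ) :
    Summable fun i : ℕ => Real.exp (-(κ * weightStar w (ε / 2 ^ i))) := by
  obtain ⟨B, hB⟩ := hw.exists_mul_log_le_add (inv_pos.2 hκ)
  refine Summable.of_nonneg_of_le (fun i => (Real.exp_pos _).le) (fun i => ?_)
    (summable_geometric_two.mul_left (Real.exp (κ * (B + ε))))
  have hlog := hB (2 ^ i) (one_le_pow₀ one_le_two)
  rw [inv_mul_le_iff₀ hκ] at hlog
  have hstar := hw.sub_mul_le_weightStar (ε := ε / 2 ^ i) (T := 2 ^ i) (by positivity)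
    (by positivity)
  rw [div_mul_cancel₀ _ (by positivity)] at hstar
  calc Real.exp (-(κ * weightStar w (ε / 2 ^ i)))
      ≤ Real.exp (κ * (B + ε) + -Real.log (2 ^ i)) := by
        refine Real.exp_le_exp.2 ?_
        have := mul_le_mul_of_nonneg_left hstar hκ.le
        linarith
    _ = Real.exp (κ * (B + ε)) * (1 / 2) ^ i := by
        rw [Real.exp_add, Real.exp_neg, Real.exp_log (by positivity), one_div, inv_pow]

theorem factorial_div_pow_mul_exp_neg_le (hw : IsWeightFunction w) (hε : 0 < ε) (hε1 : ε ≤ 1)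
    (hκ : 0 < κ) (k : ℕ) :
    k.factorial / ε ^ k * Real.exp (-(κ * weightStar w ε)) ≤
      Real.exp (κ * (k + 1)) * weightSeq (fun t => κ * w t) k := by
  set T := (k + 1) / ε with hT
  have hT1 : 1 ≤ T := by
    rw [hT, le_div_iff₀ hε]
    linarith [(Nat.cast_nonneg k : (0 : ℝ) ≤ k)]
  have hstar := hw.sub_mul_le_weightStar hε (zero_le_one.trans hT1)
  rw [hT, mul_div_cancel₀ _ hε.ne', ← hT] at hstar
  have hfac : (k.factorial : ℝ) / ε ^ k ≤ T ^ k := by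
    rw [hT, div_pow]
    gcongr
    exact_mod_cast (Nat.factorial_le_pow k).trans (Nat.pow_le_pow_left k.le_succ k)
  calc k.factorial / ε ^ k * Real.exp (-(κ * weightStar w ε))
      ≤ T ^ k * Real.exp (κ * (k + 1) + -(κ * w T)) := by
        gcongr
        linarith [mul_le_mul_of_nonneg_left hstar hκ.le]
    _ = Real.exp (κ * (k + 1)) * (T ^ k * Real.exp (-(κ * w T))) := by
        rw [Real.exp_add]
        ring
    _ ≤ _ := by
        gcongr
        exact (hw.const_mul hκ).pow_mul_exp_neg_le_weightSeq k hT1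

theorem exists_add_three_le (hw : IsWeightFunction w) :
    ∃ S₀, 1 ≤ S₀ ∧ ∀ S, S₀ ≤ S → w S + 3 ≤ w (Real.exp 1 * S) := by
  obtain ⟨B, hB⟩ := hw.exists_mul_log_le_add (A := 4) (by norm_num)
  refine ⟨Real.exp (max 1 (B + w 1)), Real.one_le_exp (by positivity), fun S hS => ?_⟩
  have hS0 : 0 < S := (Real.exp_pos _).trans_le hS
  obtain ⟨s, rfl⟩ : ∃ s, S = Real.exp s := ⟨Real.log S, (Real.exp_log hS0).symm⟩
  rw [Real.exp_le_exp, max_le_iff] at hS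
  have hs : 0 < s := by linarith
  have hlog := hB _ (Real.one_le_exp hs.le)
  rw [Real.log_exp] at hlog
  have hconv := hw.convexOn_comp_exp.2 self_mem_Ici
    (show s + 1 ∈ Ici (0 : ℝ) from (by linarith : (0 : ℝ) ≤ s + 1))
    (show 0 ≤ 1 / (s + 1) by positivity) (show 0 ≤ s / (s + 1) by positivity)
    (by rw [← add_div, add_comm, div_self (by linarith)])
  simp only [smul_eq_mul, mul_zero, zero_add, div_mul_cancel₀ s (by linarith : s + 1 ≠ 0),
    Real.exp_zero, ← add_div, div_mul_eq_mul_div] at hconv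
  rw [le_div_iff₀ (by linarith)] at hconv
  rw [← Real.exp_add, add_comm 1 s]
  refine le_of_mul_le_mul_left ?_ hs
  linarith

theorem exists_one_le_mul_of_isContactPoint (hw : IsWeightFunction w) :
    ∃ ε₀, 0 < ε₀ ∧ ∀ ε t, 0 < ε → ε ≤ ε₀ → IsContactPoint w ε t → 1 ≤ ε * t := by
  obtain ⟨S₀, hS₀, hgrow⟩ := hw.exists_add_three_le
  refine ⟨S₀⁻¹, by positivity, fun ε t hε hle ht => ?_⟩
  by_contra! hlt
  have hgrow' := hgrow ε⁻¹ ((le_inv_comm₀ hε (by linarith)).1 hle)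
  have htop := ht.sub_mul_le (Real.exp 1 * ε⁻¹) (by positivity)
  rw [show ε * (Real.exp 1 * ε⁻¹) = Real.exp 1 by field_simp] at htop
  have htε : t ≤ ε⁻¹ := by
    rw [← one_div, le_div_iff₀' hε]
    exact hlt.le
  have := hw.monotoneOn ht.nonneg (show ε⁻¹ ∈ Ici 0 from (inv_pos.2 hε).le) htε
  linarith [Real.exp_one_lt_three, mul_nonneg hε.le ht.nonneg]

end IsWeightFunction

end Weights

section ContactPoint

theorem add_mul_sub_le_of_convexOn_of_eventually_le {S : Set ℝ} {φ ψ : ℝ → ℝ} {a b ψ' : ℝ}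
    (hφ : ConvexOn ℝ S φ) (ha : S ∈ 𝓝 a) (hψ : HasDerivAt ψ ψ' a)
    (hle : ∀ᶠ x in 𝓝 a, φ x ≤ ψ x) (heq : φ a = ψ a) (hb : b ∈ S) :
    φ a + ψ' * (b - a) ≤ φ b := by
  set q : ℝ → ℝ := fun l => ψ (a - l * (b - a)) + l * (φ b - φ a) with hq
  have hrefl : HasDerivAt (fun l : ℝ => a - l * (b - a)) (-(b - a)) 0 := by
    simpa using ((hasDerivAt_id (0 : ℝ)).mul_const (b - a)).const_sub a
  have hderiv : HasDerivAt q (ψ' * -(b - a) + (φ b - φ a)) 0 := by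
    refine (HasDerivAt.comp (h₂ := ψ) 0 (by simpa using hψ) hrefl).add ?_
    simpa using (hasDerivAt_id (0 : ℝ)).mul_const (φ b - φ a)
  have htendsto : Tendsto (fun l : ℝ => a - l * (b - a)) (𝓝[>] 0) (𝓝 a) := by
    simpa using hrefl.continuousAt.tendsto.mono_left nhdsWithin_le_nhds
  have hslope : ∀ᶠ l in 𝓝[>] 0, 0 ≤ slope q 0 l := by
    filter_upwards [htendsto.eventually ha, htendsto.eventually hle, self_mem_nhdsWithin]
      with l hlS hlle (hl : 0 < l)
    have hconv := hφ.2 hlS hb (show 0 ≤ 1 / (1 + l) by positivity)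
      (show 0 ≤ l / (1 + l) by positivity) (by field_simp)
    have hmid : (1 / (1 + l)) • (a - l * (b - a)) + (l / (1 + l)) • b = a := by
      simp only [smul_eq_mul]
      field_simp
      ring
    rw [hmid, smul_eq_mul, smul_eq_mul, div_mul_eq_mul_div, div_mul_eq_mul_div, ← add_div,
      le_div_iff₀ (by positivity)] at hconv
    rw [slope_def_field]
    refine div_nonneg ?_ (by linarith)
    simp only [hq, zero_mul, sub_zero, add_zero]
    linarith
  have := ge_of_tendsto
    ((hasDerivAt_iff_tendsto_slope.1 hderiv).mono_left (nhdsGT_le_nhdsNE 0)) hslope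
  linarith

variable {w : ℝ → ℝ} {ε t T : ℝ} {k n : ℕ}

theorem IsWeightFunction.pow_mul_exp_neg_mul_pow_le_of_div_le (hw : IsWeightFunction w) {δ : ℝ}
    (hε : 0 < ε) (ht : 0 < t) (hn : 1 ≤ n) (htn : ε * t ≤ n + 1) (hT : 0 < T) (hδ : δ ≤ 1)
    (hTt : T / t ≤ δ) :
    T ^ n * Real.exp (-w T) * ε ^ n ≤ n.factorial * Real.exp (n + 1) * δ := by
  have hfac := Real.pow_div_factorial_le_exp (ε * t) (by positivity) n
  rw [div_le_iff₀' (by positivity)] at hfac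
  have hwT : Real.exp (-w T) ≤ 1 := Real.exp_le_one_iff.2 (neg_nonpos.2 (hw.nonneg hT.le))
  calc T ^ n * Real.exp (-w T) * ε ^ n ≤ T ^ n * 1 * ε ^ n := by gcongr
    _ = (ε * t) ^ n * (T / t) ^ n := by rw [div_pow, mul_pow]; field_simp
    _ ≤ n.factorial * Real.exp (n + 1) * δ := by
        gcongr
        · exact hfac.trans (by gcongr)
        · exact (pow_le_of_le_one (by positivity) (hTt.trans hδ) (by omega)).trans hTt

namespace IsContactPoint

theorem add_mul_log_le (h : IsContactPoint w ε t) (hw : IsWeightFunction w) (ht : 1 < t)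
    (hT : 1 ≤ T) : w t + ε * t * Real.log (T / t) ≤ w T := by
  have ht0 : 0 < t := by linarith
  have hT0 : 0 < T := by linarith
  have hexp : Real.exp (Real.log t) = t := Real.exp_log ht0
  have hψ : HasDerivAt (fun s => w t - ε * t + ε * Real.exp s) (ε * t) (Real.log t) := by
    simpa [hexp] using ((Real.hasDerivAt_exp (Real.log t)).const_mul ε).const_add (w t - ε * t)
  have := add_mul_sub_le_of_convexOn_of_eventually_le hw.convexOn_comp_exp
    (Ici_mem_nhds (Real.log_pos ht)) hψ
    (Eventually.of_forall fun s => by linarith [h.sub_mul_le _ (Real.exp_pos s).le])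
    (by rw [hexp]; ring) (show Real.log T ∈ Ici 0 from Real.log_nonneg hT)
  simpa only [hexp, Real.exp_log hT0, Real.log_div hT0.ne' ht0.ne'] using this

theorem pow_mul_exp_neg_le_mul_rpow (h : IsContactPoint w ε t) (hw : IsWeightFunction w)
    (ht : 1 < t) (hT : 1 ≤ T) (k : ℕ) :
    T ^ k * Real.exp (-w T) ≤ t ^ k * Real.exp (-w t) * (T / t) ^ (k - ε * t) := by
  have ht0 : 0 < t := by linarith
  have hTt : 0 < T / t := by positivity
  calc T ^ k * Real.exp (-w T)
      ≤ T ^ k * Real.exp (-w t + Real.log (T / t) * -(ε * t)) := by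
        gcongr
        linarith [h.add_mul_log_le hw ht hT]
    _ = _ := by
        rw [Real.exp_add, ← Real.rpow_def_of_pos hTt, sub_eq_add_neg, Real.rpow_add hTt,
          Real.rpow_natCast, div_pow]
        field_simp

theorem pow_mul_exp_neg_le_of_le (h : IsContactPoint w ε t) (hw : IsWeightFunction w)
    (ht : 1 < t) (hT : t ≤ T) (hk : k ≤ ε * t) :
    T ^ k * Real.exp (-w T) ≤ t ^ k * Real.exp (-w t) := by
  have ht0 : 0 < t := by linarith
  refine (h.pow_mul_exp_neg_le_mul_rpow hw ht (ht.le.trans hT) k).trans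
    (mul_le_of_le_one_right (by positivity) ?_)
  exact Real.rpow_le_one_of_one_le_of_nonpos ((one_le_div ht0).2 hT) (by linarith)

theorem pow_mul_exp_neg_mul_pow_le (h : IsContactPoint w ε t) (hε : 0 < ε) (k : ℕ) :
    t ^ k * Real.exp (-w t) * ε ^ k ≤ k.factorial * Real.exp (-weightStar w ε) := by
  have hεt : 0 ≤ ε * t := mul_nonneg hε.le h.nonneg
  have hfac := Real.pow_div_factorial_le_exp (ε * t) hεt k
  rw [div_le_iff₀' (by positivity)] at hfac
  calc t ^ k * Real.exp (-w t) * ε ^ k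
      = (ε * t) ^ k * Real.exp (-w t) := by rw [mul_pow]; ring
    _ ≤ k.factorial * Real.exp (ε * t) * Real.exp (-w t) := by gcongr
    _ = k.factorial * Real.exp (-weightStar w ε) := by
        rw [mul_assoc, ← Real.exp_add, h.weightStar_eq]
        ring_nf

theorem mul_le_of_concaveOn (h : IsContactPoint w ε t) (hw : IsWeightFunction w)
    (hconc : ConcaveOn ℝ (Ici 0) w) (hT : 0 ≤ T) (hTt : T ≤ t) (ht : 0 < t) : ε * T ≤ w T := by
  have hx : T / t ≤ 1 := (div_le_one ht).2 hTt
  have hchord := hconc.2 h.nonneg self_mem_Ici (show 0 ≤ T / t by positivity)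
    (sub_nonneg.2 hx) (add_sub_cancel _ _)
  simp only [smul_eq_mul, mul_zero, add_zero, div_mul_cancel₀ T ht.ne'] at hchord
  have h0 := h.sub_mul_le 0 le_rfl
  have hw0 := hw.nonneg le_rfl
  have hεt : T / t * (ε * t) ≤ T / t * w t := by
    gcongr
    linarith
  rw [mul_left_comm, div_mul_cancel₀ T ht.ne'] at hεt
  linarith [mul_nonneg (sub_nonneg.2 hx) hw0]

theorem weightSeq_mul_pow_le_factorial (h : IsContactPoint w ε t) (hw : IsWeightFunction w)
    (hconc : ConcaveOn ℝ (Ici 0) w) (hε : 0 < ε) (ht : 1 < t) (hk : k ≤ ε * t) :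
    weightSeq w k * ε ^ k ≤ k.factorial := by
  rw [← le_div_iff₀ (by positivity)]
  refine weightSeq_le fun T hT => ?_
  rw [le_div_iff₀ (by positivity)]
  rcases le_total t T with htT | hTt
  · calc T ^ k * Real.exp (-w T) * ε ^ k ≤ t ^ k * Real.exp (-w t) * ε ^ k := by
          gcongr ?_ * _
          exact h.pow_mul_exp_neg_le_of_le hw ht htT hk
      _ ≤ k.factorial * Real.exp (-weightStar w ε) := h.pow_mul_exp_neg_mul_pow_le hε k
      _ ≤ k.factorial := mul_le_of_le_one_right (by positivity)
          (Real.exp_le_one_iff.2 (neg_nonpos.2 (hw.weightStar_nonneg hε)))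
  · have hfac := Real.pow_div_factorial_le_exp (ε * T) (by positivity) k
    rw [div_le_iff₀' (by positivity)] at hfac
    calc T ^ k * Real.exp (-w T) * ε ^ k ≤ (ε * T) ^ k * Real.exp (-(ε * T)) := by
          rw [mul_right_comm, ← mul_pow, mul_comm T]
          gcongr
          exact h.mul_le_of_concaveOn hw hconc (by positivity) hTt (by linarith)
      _ ≤ k.factorial * Real.exp (ε * T) * Real.exp (-(ε * T)) := by gcongr
      _ = k.factorial := by rw [mul_assoc, ← Real.exp_add, add_neg_cancel, Real.exp_zero, mul_one]

/-- Far below the contact point the power `T ^ n` is itself small; otherwise the supporting line of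
`w ∘ exp` loses at most the factor `t / T`. -/
theorem weightSeq_mul_pow_le_factorial_mul_exp (h : IsContactPoint w ε t)
    (hw : IsWeightFunction w) (hε : 0 < ε) (ht : 1 < t) (hn : 1 ≤ n) (hnt : n ≤ ε * t)
    (htn : ε * t ≤ n + 1) :
    weightSeq w n * ε ^ n ≤
      n.factorial * Real.exp (n + 1) * Real.exp (-(weightStar w ε / 2)) := by
  have ht0 : 0 < t := by linarith
  have hstar := hw.weightStar_nonneg hε
  have hexp : 1 ≤ Real.exp (n + 1) := Real.one_le_exp (by positivity)
  have hpeak := h.pow_mul_exp_neg_mul_pow_le hε n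
  set δ := Real.exp (-(weightStar w ε / 2)) with hδ
  have hδ0 : 0 < δ := Real.exp_pos _
  have hδ1 : δ ≤ 1 := Real.exp_le_one_iff.2 (by linarith)
  have hδδ : Real.exp (-weightStar w ε) = δ * δ := by rw [hδ, ← Real.exp_add]; ring_nf
  rw [hδδ] at hpeak
  rw [← le_div_iff₀ (by positivity)]
  refine weightSeq_le fun T hT => ?_
  rw [le_div_iff₀ (by positivity)]
  have hT0 : 0 < T := by linarith
  rcases le_total (T / t) δ with hsmall | hlarge
  · exact hw.pow_mul_exp_neg_mul_pow_le_of_div_le hε ht0 hn htn hT0 hδ1 hsmall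
  · have hrpow : (T / t) ^ (n - ε * t) ≤ δ⁻¹ := by
      rcases le_total t T with htT | hTt
      · exact (Real.rpow_le_one_of_one_le_of_nonpos ((one_le_div ht0).2 htT)
          (by linarith)).trans ((one_le_inv₀ hδ0).2 hδ1)
      · calc (T / t) ^ (n - ε * t) ≤ (T / t) ^ (-1 : ℝ) :=
              Real.rpow_le_rpow_of_exponent_ge (by positivity) ((div_le_one ht0).2 hTt)
                (by linarith)
          _ ≤ δ⁻¹ := by rw [Real.rpow_neg_one]; gcongr
    calc T ^ n * Real.exp (-w T) * ε ^ n
        ≤ t ^ n * Real.exp (-w t) * δ⁻¹ * ε ^ n := by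
          gcongr ?_ * _
          exact (h.pow_mul_exp_neg_le_mul_rpow hw ht hT n).trans (by gcongr)
      _ = t ^ n * Real.exp (-w t) * ε ^ n * δ⁻¹ := by ring
      _ ≤ n.factorial * (δ * δ) * δ⁻¹ := by gcongr
      _ = n.factorial * 1 * δ := by field_simp
      _ ≤ n.factorial * Real.exp (n + 1) * δ := by gcongr

end IsContactPoint

end ContactPoint

section TaylorApproximation

theorem norm_sub_sum_iteratedDeriv_le {f : ℝ → ℂ} {c x B : ℝ} {n : ℕ}
    (hf : ∀ y ∈ uIcc c x, ContDiffAt ℝ (n + 1 : ℕ) f y)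
    (hB : ∀ y ∈ uIcc c x, ‖iteratedDeriv (n + 1) f y‖ ≤ B) :
    ‖f x - ∑ k ∈ Finset.range (n + 1), ((k.factorial : ℝ)⁻¹ * (x - c) ^ k) • iteratedDeriv k f c‖ ≤
      B * |x - c| ^ (n + 1) / n.factorial := by
  rcases eq_or_ne c x with rfl | hcx
  · simp [Finset.sum_range_succ']
  have hderiv : ∀ k ≤ n + 1, ∀ y ∈ uIcc c x,
      iteratedDerivWithin k f (uIcc c x) y = iteratedDeriv k f y := fun k hk y hy =>
    iteratedDerivWithin_eq_iteratedDeriv (uniqueDiffOn_uIcc hcx)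
      ((hf y hy).of_le (by exact_mod_cast hk)) hy
  have htaylor : taylorWithinEval f n (uIcc c x) c x =
      ∑ k ∈ Finset.range (n + 1), ((k.factorial : ℝ)⁻¹ * (x - c) ^ k) • iteratedDeriv k f c := by
    rw [taylor_within_apply]
    refine Finset.sum_congr rfl fun k hk => ?_
    rw [hderiv k (Finset.mem_range.1 hk).le c left_mem_uIcc]
  rw [← htaylor, taylor_integral_remainder fun y hy => (hf y hy).contDiffWithinAt]
  refine (intervalIntegral.norm_integral_le_of_norm_le_const
    (C := |x - c| ^ n / n.factorial * B) fun y hy => ?_).trans_eq (by ring)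
  have hy' := uIoc_subset_uIcc hy
  rw [hderiv _ le_rfl y hy', norm_smul, norm_div, norm_pow, Real.norm_natCast, Real.norm_eq_abs]
  exact mul_le_mul (by gcongr ?_ ^ _ / _; exact abs_sub_right_of_mem_uIcc hy') (hB y hy')
    (norm_nonneg _) (by positivity)

/-- The derivatives of `f` on `I` satisfy `‖f⁽ᵏ⁾‖ ≤ C * M k`, where `M` is the weight sequence
of `w`. -/
structure HasWeightedDerivBound (w : ℝ → ℝ) (f : ℝ → ℂ) (I : Set ℝ) (C : ℝ) : Prop where
  contDiffOn : ContDiffOn ℝ (⊤ : ℕ∞) f I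
  norm_iteratedDeriv_le : ∀ x ∈ I, ∀ k, ‖iteratedDeriv k f x‖ ≤ C * weightSeq w k

variable {w : ℝ → ℝ} {f : ℝ → ℂ} {I : Set ℝ} {ε t C c : ℝ}

namespace HasWeightedDerivBound

theorem norm_iteratedDeriv_mul_pow_le (h : HasWeightedDerivBound w f I C)
    (hw : IsWeightFunction w) (hconc : ConcaveOn ℝ (Ici 0) w) (ht : IsContactPoint w ε t)
    (hε : 0 < ε) (ht1 : 1 < t) (hC : 0 ≤ C) (hc : c ∈ I) {k : ℕ} (hk : k ≤ ε * t) :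
    (k.factorial : ℝ)⁻¹ * (ε / 6) ^ k * ‖iteratedDeriv k f c‖ ≤ C * (1 / 6) ^ k := by
  have hM := ht.weightSeq_mul_pow_le_factorial hw hconc hε ht1 hk
  calc (k.factorial : ℝ)⁻¹ * (ε / 6) ^ k * ‖iteratedDeriv k f c‖
      ≤ (k.factorial : ℝ)⁻¹ * (ε / 6) ^ k * (C * weightSeq w k) := by
        gcongr
        exact h.norm_iteratedDeriv_le c hc k
    _ = (k.factorial : ℝ)⁻¹ * C * (1 / 6) ^ k * (weightSeq w k * ε ^ k) := by
        rw [div_pow, div_pow, one_pow]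
        ring
    _ ≤ (k.factorial : ℝ)⁻¹ * C * (1 / 6) ^ k * k.factorial := by gcongr
    _ = C * (1 / 6) ^ k := by field_simp

theorem norm_sub_sum_le (h : HasWeightedDerivBound w f I C) (hw : IsWeightFunction w)
    (hI : IsOpen I) (ht : IsContactPoint w ε t) (hε : 0 < ε) (ht1 : 1 < t) (hC : 0 ≤ C) {n : ℕ}
    (hnt : (n + 1 : ℕ) ≤ ε * t) (htn : ε * t ≤ (n + 1 : ℕ) + 1)
    (hcI : Icc (c - ε / 6) (c + ε / 6) ⊆ I) {x : ℝ} (hx : |x - c| ≤ ε / 6) :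
    ‖f x - ∑ k ∈ Finset.range (n + 1), ((k.factorial : ℝ)⁻¹ * (x - c) ^ k) • iteratedDeriv k f c‖ ≤
      3 * C * Real.exp (-(weightStar w ε / 2)) := by
  have hyI : ∀ y ∈ uIcc c x, y ∈ I := fun y hy =>
    hcI (mem_Icc_iff_abs_le.1 ((abs_sub_comm c y).trans_le
      ((abs_sub_left_of_mem_uIcc hy).trans hx)))
  have hM := ht.weightSeq_mul_pow_le_factorial_mul_exp hw hε ht1 (Nat.le_add_left 1 n) hnt htn
  set δ := Real.exp (-(weightStar w ε / 2))
  have hpow : (n + 1 : ℝ) * Real.exp ((n + 1 : ℕ) + 1) ≤ 3 * 6 ^ (n + 1) := by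
    have h2 : (n + 1 : ℝ) ≤ 2 ^ (n + 1) := by exact_mod_cast (Nat.lt_two_pow_self (n := n + 1)).le
    calc (n + 1 : ℝ) * Real.exp ((n + 1 : ℕ) + 1) ≤ 2 ^ (n + 1) * (3 ^ (n + 1) * 3) := by
          rw [Real.exp_add, ← Real.exp_one_pow]
          gcongr <;> exact Real.exp_one_lt_three.le
      _ = 3 * 6 ^ (n + 1) := by rw [← mul_assoc, ← mul_pow, mul_comm]; norm_num
  calc _ ≤ C * weightSeq w (n + 1) * |x - c| ^ (n + 1) / n.factorial :=
        norm_sub_sum_iteratedDeriv_le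
          (fun y hy => (h.contDiffOn.contDiffAt (hI.mem_nhds (hyI y hy))).of_le
            (by exact_mod_cast le_top))
          fun y hy => h.norm_iteratedDeriv_le y (hyI y hy) (n + 1)
    _ ≤ C * weightSeq w (n + 1) * (ε / 6) ^ (n + 1) / n.factorial := by
        have := weightSeq_pos w (n + 1)
        gcongr
    _ = C * (weightSeq w (n + 1) * ε ^ (n + 1)) / n.factorial / 6 ^ (n + 1) := by
        rw [div_pow]
        ring
    _ ≤ C * ((n + 1).factorial * Real.exp ((n + 1 : ℕ) + 1) * δ) / n.factorial / 6 ^ (n + 1) := by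
        gcongr
    _ = C * δ * ((n + 1) * Real.exp ((n + 1 : ℕ) + 1)) / 6 ^ (n + 1) := by
        rw [Nat.factorial_succ, Nat.cast_mul, Nat.cast_succ]
        field_simp
    _ ≤ C * δ * (3 * 6 ^ (n + 1)) / 6 ^ (n + 1) := by gcongr
    _ = 3 * C * δ := by field_simp

theorem hasEntireApprox (h : HasWeightedDerivBound w f I C) (hw : IsWeightFunction w)
    (hconc : ConcaveOn ℝ (Ici 0) w) (hI : IsOpen I) (ht : IsContactPoint w ε t) (hε : 0 < ε)
    (ht1 : 1 < t) (hεt : 1 ≤ ε * t) (hC : 0 ≤ C) (hcI : Icc (c - ε / 6) (c + ε / 6) ⊆ I) :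
    HasEntireApprox f c (ε / 6) (3 * C) (3 * C * Real.exp (-(weightStar w ε / 2))) := by
  obtain ⟨n, hn⟩ := Nat.exists_eq_add_of_le' (Nat.one_le_floor_iff (ε * t) |>.2 hεt)
  have hnt : (n + 1 : ℕ) ≤ ε * t := hn ▸ Nat.floor_le (by linarith)
  have htn : ε * t ≤ (n + 1 : ℕ) + 1 := hn ▸ (Nat.lt_floor_add_one (ε * t)).le
  have hc : c ∈ I := hcI ⟨by linarith, by linarith⟩
  refine ⟨fun z => ∑ k ∈ Finset.range (n + 1),
    ((k.factorial : ℂ)⁻¹ * (z - c) ^ k) * iteratedDeriv k f c, by fun_prop, fun z hz => ?_,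
    fun x hx => ?_⟩
  · rw [mem_closedBall_iff_norm] at hz
    calc _ ≤ ∑ k ∈ Finset.range (n + 1), C * (1 / 6) ^ k := by
          refine norm_sum_le_of_le _ fun k hk => ?_
          have hkn : (k : ℝ) ≤ (n + 1 : ℕ) := by exact_mod_cast (Finset.mem_range.1 hk).le
          refine le_trans ?_ (h.norm_iteratedDeriv_mul_pow_le hw hconc ht hε ht1 hC hc
            (hkn.trans hnt))
          rw [norm_mul, norm_mul, norm_inv, norm_natCast, norm_pow]
          gcongr
      _ ≤ C * 3 := by
          rw [← Finset.mul_sum]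
          gcongr
          have hgeom := (summable_geometric_of_lt_one (r := 1 / 6) (by norm_num)
            (by norm_num)).sum_le_tsum (Finset.range (n + 1)) fun k _ => by positivity
          rw [tsum_geometric_of_lt_one (by norm_num) (by norm_num)] at hgeom
          exact hgeom.trans (by norm_num)
      _ = 3 * C := mul_comm _ _
  · rw [norm_sub_rev]
    simpa only [real_smul, ofReal_mul, ofReal_inv, ofReal_natCast, ofReal_pow, ofReal_sub] using
      h.norm_sub_sum_le hw hI ht hε ht1 hC hnt htn hcI hx

end HasWeightedDerivBound

end TaylorApproximation

section MultiscaleWeights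

variable {w : ℝ → ℝ} {ε κ K B : ℝ}

namespace IsWeightFunction

theorem factorial_div_div_pow_mul_exp_neg_le (hw : IsWeightFunction w)
    (hconc : ConcaveOn ℝ (Ici 0) w) (hε : 0 < ε) (hε1 : ε ≤ 1) (hκ : 0 < κ) (hB : 1 ≤ B) (k : ℕ) :
    k.factorial / (ε / B) ^ k * Real.exp (-(κ * weightStar w ε)) ≤
      Real.exp κ * weightSeq (fun t => (B * Real.exp κ)⁻¹ * (κ * w t)) k := by
  have hB0 : 0 < B := by linarith
  calc k.factorial / (ε / B) ^ k * Real.exp (-(κ * weightStar w ε))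
      = B ^ k * (k.factorial / ε ^ k * Real.exp (-(κ * weightStar w ε))) := by
        rw [div_pow]
        field_simp
    _ ≤ B ^ k * (Real.exp (κ * (k + 1)) * weightSeq (fun t => κ * w t) k) := by
        gcongr B ^ k * ?_
        exact hw.factorial_div_pow_mul_exp_neg_le hε hε1 hκ k
    _ = Real.exp κ * ((B * Real.exp κ) ^ k * weightSeq (fun t => κ * w t) k) := by
        rw [mul_add, mul_one, Real.exp_add, mul_comm κ k, Real.exp_nat_mul, mul_pow]
        ring
    _ ≤ _ := by
        gcongr
        exact (hw.const_mul hκ).pow_mul_weightSeq_le (by simpa using hconc.smul hκ.le)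
          (one_le_mul_of_one_le_of_one_le hB (Real.one_le_exp hκ.le)) k

theorem derivError_le (hw : IsWeightFunction w) (hconc : ConcaveOn ℝ (Ici 0) w) (hε : 0 < ε)
    (hε1 : ε ≤ 1) (hκ : 0 < κ) (hK : 0 ≤ K) (k i : ℕ) :
    derivError (ε / 192) K (fun i => 4 * κ * weightStar w (ε / 2 ^ i)) k i ≤
      2 * K * Real.exp κ * weightSeq (fun t => (3072 * Real.exp κ)⁻¹ * (κ * w t)) k *
        Real.exp (-(κ * weightStar w (ε / 2 ^ i))) := by
  have hεi : ε / 2 ^ i ≤ 1 := (div_le_self hε.le (one_le_pow₀ one_le_two)).trans hε1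
  have hscale : ε / 192 / 2 ^ i / 16 = ε / 2 ^ i / 3072 := by ring
  have hexp : Real.exp (-(4 * κ * weightStar w (ε / 2 ^ i)) / 2) =
      Real.exp (-(κ * weightStar w (ε / 2 ^ i))) * Real.exp (-(κ * weightStar w (ε / 2 ^ i))) := by
    rw [← Real.exp_add]
    ring_nf
  rw [derivError, hscale, hexp]
  calc _ = 2 * K * (k.factorial / (ε / 2 ^ i / 3072) ^ k *
          Real.exp (-(κ * weightStar w (ε / 2 ^ i)))) *
          Real.exp (-(κ * weightStar w (ε / 2 ^ i))) := by ring
    _ ≤ 2 * K * (Real.exp κ * weightSeq (fun t => (3072 * Real.exp κ)⁻¹ * (κ * w t)) k) *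
          Real.exp (-(κ * weightStar w (ε / 2 ^ i))) := by
        gcongr 2 * K * ?_ * _
        exact hw.factorial_div_div_pow_mul_exp_neg_le hconc (by positivity) hεi hκ (by norm_num) k
    _ = _ := by ring

theorem summable_derivError (hw : IsWeightFunction w) (hconc : ConcaveOn ℝ (Ici 0) w)
    (hε : 0 < ε) (hε1 : ε ≤ 1) (hκ : 0 < κ) (hK : 0 ≤ K) (k : ℕ) :
    Summable (derivError (ε / 192) K (fun i => 4 * κ * weightStar w (ε / 2 ^ i)) k) :=
  Summable.of_nonneg_of_le (derivError_nonneg (by positivity) hK k)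
    (hw.derivError_le hconc hε hε1 hκ hK k)
    ((hw.summable_exp_neg_weightStar hε hκ).mul_left _)

theorem exists_multiscaleBound_le (hw : IsWeightFunction w) (hconc : ConcaveOn ℝ (Ici 0) w)
    (hε : 0 < ε) (hε1 : ε ≤ 1) (hκ : 0 < κ) (hK : 0 ≤ K) :
    ∃ C, ∀ k, multiscaleBound (ε / 192) K (fun i => 4 * κ * weightStar w (ε / 2 ^ i)) k ≤
      C * weightSeq (fun t => (3072 * Real.exp κ)⁻¹ * (κ * w t)) k := by
  set S := ∑' i : ℕ, Real.exp (-(κ * weightStar w (ε / 2 ^ i)))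
  refine ⟨K * Real.exp (κ * weightStar w ε) * Real.exp κ + 2 * K * Real.exp κ * S, fun k => ?_⟩
  rw [multiscaleBound, add_mul]
  refine add_le_add ?_ ?_
  · calc k.factorial * K / (ε / 192 / 16) ^ k
        = K * Real.exp (κ * weightStar w ε) * (k.factorial / (ε / 3072) ^ k *
            Real.exp (-(κ * weightStar w ε))) := by
          rw [Real.exp_neg, div_div]
          norm_num
          field_simp
      _ ≤ K * Real.exp (κ * weightStar w ε) *
            (Real.exp κ * weightSeq (fun t => (3072 * Real.exp κ)⁻¹ * (κ * w t)) k) := by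
          gcongr _ * ?_
          exact hw.factorial_div_div_pow_mul_exp_neg_le hconc hε hε1 hκ (by norm_num) k
      _ = _ := by ring
  · refine ((hw.summable_derivError hconc hε hε1 hκ hK k).tsum_le_tsum
      (hw.derivError_le hconc hε hε1 hκ hK k)
      ((hw.summable_exp_neg_weightStar hε hκ).mul_left _)).trans_eq ?_
    rw [tsum_mul_left]
    ring

end IsWeightFunction

end MultiscaleWeights

section Roots

variable {w : ℝ → ℝ} {f : ℝ → ℂ} {j : ℕ} {C R : ℝ}

theorem exists_hasHolomorphicApprox_of_hasWeightedDerivBound_pow (hj : 1 ≤ j)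
    (hw : IsWeightFunction w) (hconc : ConcaveOn ℝ (Ici 0) w) (hR : 0 < R) (hC : 1 ≤ C)
    (h : HasWeightedDerivBound w (f ^ j) (ball 0 R) C)
    (h' : HasWeightedDerivBound w (f ^ (j + 1)) (ball 0 R) C) :
    ∃ K ε₀, 0 ≤ K ∧ 0 < ε₀ ∧ ε₀ ≤ 1 ∧ ∀ ε, 0 < ε → ε ≤ ε₀ → ∀ c ∈ ball (0 : ℝ) (R / 2),
      HasHolomorphicApprox f c (ε / 192) K
        (K * Real.exp (-(4 * (rootRate j / 8) * weightStar w ε))) := by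
  obtain ⟨K, hK, happrox⟩ := exists_hasHolomorphicApprox_of_pow hj (K := 3 * C) (by linarith)
  obtain ⟨ε₁, hε₁, hcontact⟩ := hw.exists_one_le_mul_of_isContactPoint
  refine ⟨K, min ε₁ (min (1 / 2) R), by linarith, by positivity,
    (min_le_right _ _).trans ((min_le_left _ _).trans (by norm_num)), fun ε hε hle c hc => ?_⟩
  simp only [le_min_iff] at hle
  obtain ⟨hle₁, hle₂, hleR⟩ := hle
  obtain ⟨t, ht⟩ := hw.exists_isContactPoint hε
  have hεt := hcontact ε t hε hle₁ ht
  have ht1 : 1 < t := by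
    by_contra! hle1
    linarith [mul_le_mul hle₂ hle1 ht.nonneg (by norm_num)]
  have hsub : Icc (c - ε / 6) (c + ε / 6) ⊆ ball 0 R := by
    intro x hx
    rw [mem_ball_zero_iff, Real.norm_eq_abs, abs_lt] at hc ⊢
    constructor <;> linarith [hx.1, hx.2, hc.1, hc.2]
  have hroot := happrox f c (ε / 6) (weightStar w ε / 2) (by positivity)
    (by linarith [hw.weightStar_nonneg hε])
    (h.hasEntireApprox hw hconc isOpen_ball ht hε ht1 hεt (by linarith) hsub)
    (h'.hasEntireApprox hw hconc isOpen_ball ht hε ht1 hεt (by linarith) hsub)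
  convert hroot using 1 <;> ring_nf

theorem exists_hasWeightedDerivBound_of_pow (hj : 1 ≤ j) :
    ∃ c, 0 < c ∧ ∀ (w : ℝ → ℝ) (f : ℝ → ℂ) (R C : ℝ), IsWeightFunction w →
      ConcaveOn ℝ (Ici 0) w → 0 < R → 1 ≤ C →
      HasWeightedDerivBound w (f ^ j) (ball 0 R) C →
      HasWeightedDerivBound w (f ^ (j + 1)) (ball 0 R) C →
      ∃ C', HasWeightedDerivBound (fun t => c * w t) f (ball 0 (R / 2)) C' := by
  set κ := rootRate j / 8
  have hκ : 0 < κ := div_pos (rootRate_pos hj) (by norm_num)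
  refine ⟨(3072 * Real.exp κ)⁻¹ * κ, by positivity, fun w f R C hw hconc hR hC h h' => ?_⟩
  obtain ⟨K, ε, hK, hε, hε1, happrox⟩ :=
    exists_hasHolomorphicApprox_of_hasWeightedDerivBound_pow hj hw hconc hR hC h h'
  obtain ⟨C', hC'⟩ := hw.exists_multiscaleBound_le hconc hε hε1 hκ hK
  have hmono : Monotone fun i : ℕ => 4 * κ * weightStar w (ε / 2 ^ i) := fun i i' hii' => by
    have hle : ε / 2 ^ i' ≤ ε / 2 ^ i := by gcongr; exact one_le_two
    exact mul_le_mul_of_nonneg_left (hw.weightStar_antitoneOn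
      (show 0 < ε / 2 ^ i' by positivity) (show 0 < ε / 2 ^ i by positivity) hle) (by positivity)
  obtain ⟨hsmooth, hbound⟩ := contDiffOn_and_norm_iteratedDerivWithin_le (isOpen_ball (x := 0))
    (η := ε / 192) (by positivity) hK
    (fun i => mul_nonneg (by positivity) (hw.weightStar_nonneg (by positivity))) hmono
    (hw.summable_derivError hconc hε hε1 hκ hK) fun i x hx => by
      have := happrox (ε / 2 ^ i) (by positivity) (div_le_self hε.le (one_le_pow₀ one_le_two)) x hx
      rwa [div_right_comm] at this
  refine ⟨C', hsmooth, fun x hx k => ?_⟩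
  rw [← iteratedDerivWithin_of_isOpen isOpen_ball hx]
  simpa only [mul_assoc] using (hbound k x hx).trans (hC' k)

end Roots

section Germs

variable {ω w : ℝ → ℝ} {f : ℝ → ℂ} {C C' ρ ρ' : ℝ} {U I I' : Set ℝ}

theorem phiStar_mul_div (hρ : 0 < ρ) (s : ℝ) :
    phiStar ω (ρ * s) / ρ = phiStar (fun t => ρ⁻¹ * ω t) s := by
  rw [phiStar, phiStar, div_eq_inv_mul, ← smul_eq_mul, ← Real.sSup_smul_of_nonneg
    (inv_nonneg.2 hρ.le), ← image_smul, image_image]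
  congr 2 with t
  rw [smul_eq_mul, mul_sub, mul_assoc, inv_mul_cancel_left₀ hρ.ne']

theorem norm_iteratedFDerivWithin_eq_norm_iteratedDeriv (hU : IsOpen U) {x : ℝ} (hx : x ∈ U)
    (k : ℕ) : ‖iteratedFDerivWithin ℝ k f U x‖ = ‖iteratedDeriv k f x‖ := by
  rw [norm_iteratedFDerivWithin_eq_norm_iteratedDerivWithin, iteratedDerivWithin_of_isOpen hU hx]

theorem HasWeightedDerivBound.mono (h : HasWeightedDerivBound w f I C) (hI : I' ⊆ I)
    (hC : C ≤ C') : HasWeightedDerivBound w f I' C' :=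
  ⟨h.contDiffOn.mono hI, fun x hx k => (h.norm_iteratedDeriv_le x (hI hx) k).trans
    (mul_le_mul_of_nonneg_right hC (weightSeq_pos w k).le)⟩

theorem HasWeightedDerivBound.mono_weight (h : HasWeightedDerivBound (fun t => ρ⁻¹ * ω t) f I C)
    (hω : IsWeightFunction ω) (hρ : 0 < ρ) (hρρ' : ρ ≤ ρ') :
    HasWeightedDerivBound (fun t => ρ'⁻¹ * ω t) f I C := by
  refine ⟨h.contDiffOn, fun x hx k => (h.norm_iteratedDeriv_le x hx k).trans ?_⟩
  have hC : 0 ≤ C := nonneg_of_mul_nonneg_left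
    ((norm_nonneg _).trans (h.norm_iteratedDeriv_le x hx k)) (weightSeq_pos _ k)
  gcongr
  refine weightSeq_le fun T hT => le_trans ?_ ((hω.const_mul (inv_pos.2
    (hρ.trans_le hρρ'))).pow_mul_exp_neg_le_weightSeq k hT)
  have := hω.nonneg (zero_le_one.trans hT)
  gcongr

theorem exists_omegaRoumieuOn_iff :
    (∃ U, IsOpen U ∧ (0 : ℝ) ∈ U ∧ OmegaRoumieuOn ω f U) ↔
      ∃ R > 0, ∃ ρ > 0, ∃ C, HasWeightedDerivBound (fun t => ρ⁻¹ * ω t) f (ball 0 R) C := by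
  constructor
  · rintro ⟨U, hU, h0, hsmooth, hbound⟩
    obtain ⟨R, hR, hRU⟩ := nhds_basis_closedBall.mem_iff.1 (hU.mem_nhds h0)
    have hclosure : closure (ball (0 : ℝ) R) ⊆ U := closure_ball_subset_closedBall.trans hRU
    obtain ⟨C, ρ, -, hρ, hCρ⟩ := hbound (ball 0 R) isOpen_ball isBounded_ball.isCompact_closure
      hclosure
    have hRU' := subset_closure.trans hclosure
    refine ⟨R, hR, ρ, hρ, C, hsmooth.mono hRU', fun x hx k => ?_⟩
    rw [← norm_iteratedFDerivWithin_eq_norm_iteratedDeriv hU (hRU' hx), weightSeq,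
      ← phiStar_mul_div hρ]
    exact hCρ x hx k
  · rintro ⟨R, hR, ρ, hρ, C, h⟩
    refine ⟨ball 0 R, isOpen_ball, mem_ball_self hR, h.contDiffOn, fun V _ _ hV =>
      ⟨max C 1, ρ, by positivity, hρ, fun x hx k => ?_⟩⟩
    have hxR := hV (subset_closure hx)
    rw [norm_iteratedFDerivWithin_eq_norm_iteratedDeriv isOpen_ball hxR, phiStar_mul_div hρ]
    exact (h.mono subset_rfl (le_max_left C 1)).norm_iteratedDeriv_le x hxR k

theorem exists_omegaBeurlingOn_iff :
    (∃ U, IsOpen U ∧ (0 : ℝ) ∈ U ∧ OmegaBeurlingOn ω f U) ↔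
      ∃ R > 0, ∀ ρ > 0, ∃ C, HasWeightedDerivBound (fun t => ρ⁻¹ * ω t) f (ball 0 R) C := by
  constructor
  · rintro ⟨U, hU, h0, hsmooth, hbound⟩
    obtain ⟨R, hR, hRU⟩ := nhds_basis_closedBall.mem_iff.1 (hU.mem_nhds h0)
    have hclosure : closure (ball (0 : ℝ) R) ⊆ U := closure_ball_subset_closedBall.trans hRU
    have hRU' := subset_closure.trans hclosure
    refine ⟨R, hR, fun ρ hρ => ?_⟩
    obtain ⟨C, -, hC⟩ := hbound (ball 0 R) isOpen_ball isBounded_ball.isCompact_closure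
      hclosure ρ hρ
    refine ⟨C, hsmooth.mono hRU', fun x hx k => ?_⟩
    rw [← norm_iteratedFDerivWithin_eq_norm_iteratedDeriv hU (hRU' hx), weightSeq,
      ← phiStar_mul_div hρ]
    exact hC x hx k
  · rintro ⟨R, hR, h⟩
    obtain ⟨C₁, h₁⟩ := h 1 one_pos
    refine ⟨ball 0 R, isOpen_ball, mem_ball_self hR, h₁.contDiffOn, fun V _ _ hV ρ hρ => ?_⟩
    obtain ⟨C, hC⟩ := h ρ hρ
    refine ⟨max C 1, by positivity, fun x hx k => ?_⟩
    have hxR := hV (subset_closure hx)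
    rw [norm_iteratedFDerivWithin_eq_norm_iteratedDeriv isOpen_ball hxR, phiStar_mul_div hρ]
    exact (hC.mono subset_rfl (le_max_left C 1)).norm_iteratedDeriv_le x hxR k

theorem exists_hasWeightedDerivBound_div_of_pow {j : ℕ} (hj : 1 ≤ j) :
    ∃ c, 0 < c ∧ ∀ (ω : ℝ → ℝ) (f : ℝ → ℂ) (R R' ρ C C' : ℝ), IsWeightFunction ω →
      ConcaveOn ℝ (Ici 0) ω → 0 < R → 0 < R' → 0 < ρ →
      HasWeightedDerivBound (fun t => ρ⁻¹ * ω t) (f ^ j) (ball 0 R) C →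
      HasWeightedDerivBound (fun t => ρ⁻¹ * ω t) (f ^ (j + 1)) (ball 0 R') C' →
      ∃ C'', HasWeightedDerivBound (fun t => (ρ / c)⁻¹ * ω t) f (ball 0 (min R R' / 2)) C'' := by
  obtain ⟨c, hc, hroot⟩ := exists_hasWeightedDerivBound_of_pow hj
  refine ⟨c, hc, fun ω f R R' ρ C C' hω hconc hR hR' hρ h h' => ?_⟩
  obtain ⟨C'', h''⟩ := hroot (fun t => ρ⁻¹ * ω t) f (min R R') (max 1 (max C C'))
    (hω.const_mul (inv_pos.2 hρ)) (by simpa using hconc.smul (inv_pos.2 hρ).le) (lt_min hR hR')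
    (le_max_left _ _)
    (h.mono (ball_subset_ball (min_le_left _ _)) ((le_max_left _ _).trans (le_max_right _ _)))
    (h'.mono (ball_subset_ball (min_le_right _ _)) ((le_max_right _ _).trans (le_max_right _ _)))
  have hscale : (fun t => (ρ / c)⁻¹ * ω t) = fun t => c * (ρ⁻¹ * ω t) := by
    ext t
    rw [inv_div, div_eq_mul_inv, mul_assoc]
  exact ⟨C'', hscale ▸ h''⟩

end Germs

/-- for a concave weight function `ω`, the rings of germs at `0 ∈ ℝ` of
`E^{ω}`- (Roumieu) and `E^{(ω)}`- (Beurling) functions have property (D). -/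
theorem statement7 (ω : ℝ → ℝ) (hω : IsWeightFunction ω)
    (hconc : ConcaveOn ℝ (Ici 0) ω) :
    (∀ f : ℝ → ℂ, ∀ j : ℕ, 1 ≤ j →
        (∃ U : Set ℝ, IsOpen U ∧ (0 : ℝ) ∈ U ∧ OmegaRoumieuOn ω (f ^ j) U) →
        (∃ U : Set ℝ, IsOpen U ∧ (0 : ℝ) ∈ U ∧ OmegaRoumieuOn ω (f ^ (j + 1)) U) →
        ∃ U : Set ℝ, IsOpen U ∧ (0 : ℝ) ∈ U ∧ OmegaRoumieuOn ω f U) ∧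
    (∀ f : ℝ → ℂ, ∀ j : ℕ, 1 ≤ j →
        (∃ U : Set ℝ, IsOpen U ∧ (0 : ℝ) ∈ U ∧ OmegaBeurlingOn ω (f ^ j) U) →
        (∃ U : Set ℝ, IsOpen U ∧ (0 : ℝ) ∈ U ∧ OmegaBeurlingOn ω (f ^ (j + 1)) U) →
        ∃ U : Set ℝ, IsOpen U ∧ (0 : ℝ) ∈ U ∧ OmegaBeurlingOn ω f U) := by
  simp only [exists_omegaRoumieuOn_iff, exists_omegaBeurlingOn_iff]
  constructor
  · rintro f j hj ⟨R, hR, ρ, hρ, C, h⟩ ⟨R', hR', ρ', hρ', C', h'⟩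
    obtain ⟨c, hc, hroot⟩ := exists_hasWeightedDerivBound_div_of_pow hj
    have hmax : 0 < max ρ ρ' := lt_max_of_lt_left hρ
    exact ⟨min R R' / 2, by positivity, max ρ ρ' / c, by positivity,
      hroot ω f R R' (max ρ ρ') _ _ hω hconc hR hR' hmax
        (h.mono_weight hω hρ (le_max_left ρ ρ')) (h'.mono_weight hω hρ' (le_max_right ρ ρ'))⟩
  · rintro f j hj ⟨R, hR, h⟩ ⟨R', hR', h'⟩
    obtain ⟨c, hc, hroot⟩ := exists_hasWeightedDerivBound_div_of_pow hj
    refine ⟨min R R' / 2, by positivity, fun ρ hρ => ?_⟩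
    obtain ⟨C, hC⟩ := h (ρ * c) (by positivity)
    obtain ⟨C', hC'⟩ := h' (ρ * c) (by positivity)
    simpa only [mul_div_cancel_right₀ ρ hc.ne'] using
      hroot ω f R R' (ρ * c) C C' hω hconc hR hR' (by positivity) hC hC'
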